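/- arXiv:2210.01373 — 9 statements merged into one kernel-verified Lean document; each statement's English description precedes it below -/
import Mathlib

section
/- Let N ≥ 3 be an integer and set 2* = 2N/(N−2). Let μ < 0 and λ, λ₁ ∈ ℝ satisfy −((N−2)μ/2) + ((N−2)μ/2)·log(−(N−2)μ/2) + λ − λ₁ ≥ 0. Then for every real s > 0 one has s^(2*−2) + μ·log(s²) + λ − λ₁ ≥ 0 (note 2* − 2 = 4/(N−2)). -/
/-!
The function `t ↦ t - c log t` on `(0, ∞)` is minimal at `t = c`. The substitution `t = s ^ p` turns
this into the minimum of `s ^ p - a log s`, with `c = a / p`; the exponent `p = 4 / (N - 2)` and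
the coefficient `a = -2μ` give `c = -(N - 2)μ / 2`.
-/

theorem sub_mul_log_self_le_sub_mul_log {c t : ℝ} (hc : 0 ≤ c) (ht : 0 < t) :
    c - c * Real.log c ≤ t - c * Real.log t := by
  rcases hc.eq_or_lt with rfl | hc
  · simpa using ht.le
  have tangent_bound : c * Real.log (t / c) ≤ t - c :=
    calc c * Real.log (t / c) ≤ c * (t / c - 1) := by
          gcongr
          exact Real.log_le_sub_one_of_pos (div_pos ht hc)
      _ = t - c := by field_simp
  rw [Real.log_div ht.ne' hc.ne'] at tangent_bound
  linarith

theorem div_sub_div_mul_log_div_le_rpow_sub_mul_log {a p s : ℝ} (hp : p ≠ 0) (hap : 0 ≤ a / p)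
    (hs : 0 < s) : a / p - a / p * Real.log (a / p) ≤ s ^ p - a * Real.log s :=
  calc a / p - a / p * Real.log (a / p)
      ≤ s ^ p - a / p * Real.log (s ^ p) :=
        sub_mul_log_self_le_sub_mul_log hap (Real.rpow_pos_of_pos hs p)
    _ = s ^ p - a * Real.log s := by rw [Real.log_rpow hs, ← mul_assoc, div_mul_cancel₀ a hp]

theorem stmt_0_general {d μ lam lam1 : ℝ} (hd : d ≠ 2) (hμ : (d - 2) * μ ≤ 0)
    (h : 0 ≤ -((d - 2) * μ / 2) + (d - 2) * μ / 2 * Real.log (-((d - 2) * μ / 2)) + lam - lam1)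
    {s : ℝ} (hs : 0 < s) :
    0 ≤ s ^ (4 / (d - 2)) + μ * Real.log (s ^ 2) + lam - lam1 := by
  have hd' : d - 2 ≠ 0 := sub_ne_zero.mpr hd
  have minimizer_eq : -2 * μ / (4 / (d - 2)) = -((d - 2) * μ / 2) := by
    field_simp
    ring
  have lower_bound := div_sub_div_mul_log_div_le_rpow_sub_mul_log (a := -2 * μ)
    (div_ne_zero four_ne_zero hd') (by rw [minimizer_eq]; linarith) hs
  rw [minimizer_eq] at lower_bound
  rw [Real.log_pow, Nat.cast_ofNat]
  linarith

/-- Key inequality in the nonexistence proof (Theorem 1.4): if `μ < 0` and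
`-((N-2)μ/2) + ((N-2)μ/2) log(-(N-2)μ/2) + λ - λ₁ ≥ 0`, then for all `s > 0`,
`s^(2*-2) + μ log(s²) + λ - λ₁ ≥ 0`, where `2* - 2 = 4/(N-2)`. -/
theorem stmt_0 (N : ℕ) (hN : 3 ≤ N) (μ lam lam1 : ℝ) (hμ : μ < 0)
    (h : -(((N : ℝ) - 2) * μ / 2) +
        ((N : ℝ) - 2) * μ / 2 * Real.log (-(((N : ℝ) - 2) * μ / 2)) + lam - lam1 ≥ 0) :
    ∀ s : ℝ, 0 < s →
      s ^ ((4 : ℝ) / ((N : ℝ) - 2)) + μ * Real.log (s ^ 2) + lam - lam1 ≥ 0 := by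
  have two_lt : (2 : ℝ) < N := by exact_mod_cast hN
  exact fun _ hs ↦ stmt_0_general two_lt.ne'
    (mul_nonpos_of_nonneg_of_nonpos (sub_pos.mpr two_lt).le hμ.le) h hs
end

section
/- Let Ω ⊂ ℝ^N be a Lebesgue-measurable set of finite measure and let δ ∈ (0,1). Let (u_n) be a sequence of real-valued measurable functions on Ω and u a measurable function on Ω such that u_n → u almost everywhere in Ω, ∫_Ω |u_n − u|^{2−δ} dx → 0 and ∫_Ω |u_n − u|^{2+δ} dx → 0 as n → ∞, and u ∈ L^{2−δ}(Ω) ∩ L^{2+δ}(Ω). Then ∫_Ω u_n²·log(u_n²) dx → ∫_Ω u²·log(u²) dx as n → ∞ (all these integrals being absolutely convergent, with the convention 0·log 0 = 0). -/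
open MeasureTheory Filter

open scoped ENNReal Topology

/-!
The growth bound `|s² log s²| ≤ (2 / δ) (|s|^(2 - δ) + |s|^(2 + δ)) =: Φ s` and the doubling
inequality `Φ (a + b) ≤ K (Φ a + Φ b)` give
`|uₙ² log uₙ² - v² log v²| ≤ K Φ (uₙ - v) + (K + 1) Φ v`.
The first term on the right tends to `0` in `L¹` and the second is a fixed integrable function, so
dominated convergence applies to the part of the left side exceeding `K Φ (uₙ - v)`. The pointwise
convergence this needs is available along subsequences, because `uₙ → v` in measure.
-/

theorem abs_log_le_rpow_add_rpow_neg_div {x δ : ℝ} (hx : 0 ≤ x) (hδ : 0 < δ) :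
    |Real.log x| ≤ (x ^ δ + x ^ (-δ)) / δ := by
  have log_le : Real.log x ≤ x ^ δ / δ := Real.log_le_rpow_div hx hδ
  have neg_log_le : -Real.log x ≤ x ^ (-δ) / δ := by
    simpa only [Real.log_inv, Real.inv_rpow hx, Real.rpow_neg hx]
      using Real.log_le_rpow_div (inv_nonneg.2 hx) hδ
  have hpos : 0 ≤ x ^ δ / δ := by positivity
  have hneg : 0 ≤ x ^ (-δ) / δ := by positivity
  rw [add_div, abs_le]
  constructor <;> linarith

theorem abs_sq_mul_log_sq_le {δ : ℝ} (hδ : 0 < δ) (s : ℝ) :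
    |s ^ 2 * Real.log (s ^ 2)| ≤ 2 / δ * (|s| ^ (2 - δ) + |s| ^ (2 + δ)) := by
  rcases eq_or_ne s 0 with rfl | hs
  · simp only [ne_eq, OfNat.ofNat_ne_zero, not_false_eq_true, zero_pow, zero_mul, abs_zero]
    positivity
  have hs' : 0 < |s| := abs_pos.2 hs
  calc |s ^ 2 * Real.log (s ^ 2)| = 2 * |s| ^ 2 * |Real.log (|s|)| := by
        rw [abs_mul, Real.log_pow, Real.log_abs, abs_mul, abs_pow, Nat.cast_ofNat, abs_two]
        ring
    _ ≤ 2 * |s| ^ 2 * ((|s| ^ δ + |s| ^ (-δ)) / δ) := by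
        gcongr
        exact abs_log_le_rpow_add_rpow_neg_div hs'.le hδ
    _ = 2 / δ * (|s| ^ (2 - δ) + |s| ^ (2 + δ)) := by
        rw [sub_eq_add_neg, Real.rpow_add hs', Real.rpow_add hs', Real.rpow_two]
        ring

theorem continuous_sq_mul_log_sq : Continuous fun s : ℝ ↦ s ^ 2 * Real.log (s ^ 2) :=
  Real.continuous_mul_log.comp (continuous_pow 2)

section NormRpow

variable {E : Type*} [SeminormedAddGroup E]

theorem norm_add_rpow_le {p : ℝ} (hp : 0 ≤ p) (a b : E) :
    ‖a + b‖ ^ p ≤ 2 ^ p * (‖a‖ ^ p + ‖b‖ ^ p) := by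
  have ha := norm_nonneg a
  have hb := norm_nonneg b
  calc ‖a + b‖ ^ p ≤ (2 * max ‖a‖ ‖b‖) ^ p := by
        gcongr
        rw [two_mul]
        exact (norm_add_le a b).trans (add_le_add (le_max_left _ _) (le_max_right _ _))
    _ = 2 ^ p * max (‖a‖ ^ p) (‖b‖ ^ p) := by
        rw [Real.mul_rpow zero_le_two (le_max_of_le_left ha), Real.rpow_max ha hb hp]
    _ ≤ 2 ^ p * (‖a‖ ^ p + ‖b‖ ^ p) := by
        gcongr
        exact max_le_add_of_nonneg (by positivity) (by positivity)

theorem norm_add_rpow_add_norm_add_rpow_le {p q : ℝ} (hp : 0 ≤ p) (hpq : p ≤ q) (a b : E) :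
    ‖a + b‖ ^ p + ‖a + b‖ ^ q ≤
      2 ^ q * ((‖a‖ ^ p + ‖a‖ ^ q) + (‖b‖ ^ p + ‖b‖ ^ q)) := by
  calc ‖a + b‖ ^ p + ‖a + b‖ ^ q
      ≤ 2 ^ p * (‖a‖ ^ p + ‖b‖ ^ p) + 2 ^ q * (‖a‖ ^ q + ‖b‖ ^ q) :=
        add_le_add (norm_add_rpow_le hp a b) (norm_add_rpow_le (hp.trans hpq) a b)
    _ ≤ 2 ^ q * (‖a‖ ^ p + ‖b‖ ^ p) + 2 ^ q * (‖a‖ ^ q + ‖b‖ ^ q) := by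
        gcongr
        exact one_le_two
    _ = 2 ^ q * ((‖a‖ ^ p + ‖a‖ ^ q) + (‖b‖ ^ p + ‖b‖ ^ q)) := by ring

end NormRpow

section Convergence

variable {α ι E F : Type*} {m : MeasurableSpace α} {μ : Measure α} {l : Filter ι}

theorem tendsto_lintegral_zero_of_le_add [l.IsCountablyGenerated]
    {f h : ι → α → ℝ≥0∞} {k : α → ℝ≥0∞}
    (hf : ∀ n, AEMeasurable (f n) μ) (hh : ∀ n, AEMeasurable (h n) μ)
    (hle : ∀ n, ∀ᵐ x ∂μ, f n x ≤ h n x + k x) (hk : ∫⁻ x, k x ∂μ ≠ ∞)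
    (hh_lim : Tendsto (fun n ↦ ∫⁻ x, h n x ∂μ) l (𝓝 0))
    (hf_lim : ∀ᵐ x ∂μ, Tendsto (fun n ↦ f n x) l (𝓝 0)) :
    Tendsto (fun n ↦ ∫⁻ x, f n x ∂μ) l (𝓝 0) := by
  have excess_lim : Tendsto (fun n ↦ ∫⁻ x, (f n x - h n x) ∂μ) l (𝓝 0) := by
    rw [← lintegral_zero (μ := μ)]
    refine tendsto_lintegral_filter_of_dominated_convergence' k
      (.of_forall fun n ↦ (hf n).sub (hh n))
      (.of_forall fun n ↦ (hle n).mono fun x hx ↦ tsub_le_iff_left.2 hx) hk ?_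
    filter_upwards [hf_lim] with x hx
    exact tendsto_of_tendsto_of_tendsto_of_le_of_le tendsto_const_nhds hx
      (fun _ ↦ zero_le) (fun _ ↦ tsub_le_self)
  refine tendsto_of_tendsto_of_tendsto_of_le_of_le tendsto_const_nhds
    (by simpa only [add_zero] using excess_lim.add hh_lim) (fun _ ↦ zero_le) fun n ↦ ?_
  calc ∫⁻ x, f n x ∂μ ≤ ∫⁻ x, (f n x - h n x) + h n x ∂μ :=
        lintegral_mono fun _ ↦ le_tsub_add
    _ = ∫⁻ x, (f n x - h n x) ∂μ + ∫⁻ x, h n x ∂μ := lintegral_add_right' _ (hh n)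

variable [NormedAddCommGroup E] [NormedAddCommGroup F] {u : ι → α → E} {v : α → E}

theorem tendstoInMeasure_of_tendsto_integral_norm_sub_rpow {p : ℝ} (hp : 0 < p)
    (hu : ∀ n, AEStronglyMeasurable (u n) μ) (hv : AEStronglyMeasurable v μ)
    (huv : ∀ n, Integrable (fun x ↦ ‖u n x - v x‖ ^ p) μ)
    (huv_lim : Tendsto (fun n ↦ ∫ x, ‖u n x - v x‖ ^ p ∂μ) l (𝓝 0)) :
    TendstoInMeasure μ u l v := by
  have hp_zero : ENNReal.ofReal p ≠ 0 := (ENNReal.ofReal_pos.2 hp).ne'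
  have hp_toReal : (ENNReal.ofReal p).toReal = p := ENNReal.toReal_ofReal hp.le
  have memLp_sub (n : ι) : MemLp (u n - v) (ENNReal.ofReal p) μ := by
    rw [← integrable_norm_rpow_iff ((hu n).sub hv) hp_zero ENNReal.ofReal_ne_top, hp_toReal]
    exact huv n
  refine tendstoInMeasure_of_tendsto_eLpNorm hp_zero hu hv ?_
  simp only [fun n ↦ (memLp_sub n).eLpNorm_eq_integral_rpow_norm hp_zero ENNReal.ofReal_ne_top,
    hp_toReal, Pi.sub_apply]
  simpa only [Real.zero_rpow (inv_pos.2 hp).ne', ENNReal.ofReal_zero] using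
    ENNReal.tendsto_ofReal (huv_lim.rpow_const (.inr (inv_nonneg.2 hp.le)))

section Doubling

variable {g : E → F} {Φ : E → ℝ} {K : ℝ}

theorem integrable_comp_of_doubling_bound {w : α → E} (hg : Continuous g)
    (hgΦ : ∀ s, ‖g s‖ ≤ Φ s) (hΦ : ∀ a b, Φ (a + b) ≤ K * (Φ a + Φ b))
    (hw : AEStronglyMeasurable w μ) (hΦv : Integrable (fun x ↦ Φ (v x)) μ)
    (hΦwv : Integrable (fun x ↦ Φ (w x - v x)) μ) :
    Integrable (fun x ↦ g (w x)) μ := by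
  refine ((hΦwv.add hΦv).const_mul K).mono' (hg.comp_aestronglyMeasurable hw)
    (.of_forall fun x ↦ (hgΦ _).trans ?_)
  simpa only [sub_add_cancel, Pi.add_apply] using hΦ (w x - v x) (v x)

theorem enorm_sub_le_of_doubling_bound (hK : 0 ≤ K) (hgΦ : ∀ s, ‖g s‖ ≤ Φ s)
    (hΦ : ∀ a b, Φ (a + b) ≤ K * (Φ a + Φ b)) (a b : E) :
    ‖g a - g b‖ₑ ≤ ENNReal.ofReal (K * Φ (a - b)) + ENNReal.ofReal ((K + 1) * Φ b) := by
  have hΦ_nonneg (s : E) : 0 ≤ Φ s := (norm_nonneg _).trans (hgΦ s)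
  rw [← ofReal_norm, ← ENNReal.ofReal_add (mul_nonneg hK (hΦ_nonneg _))
    (mul_nonneg (by positivity) (hΦ_nonneg _))]
  apply ENNReal.ofReal_le_ofReal
  calc ‖g a - g b‖ ≤ Φ a + Φ b := (norm_sub_le _ _).trans (add_le_add (hgΦ a) (hgΦ b))
    _ ≤ K * (Φ (a - b) + Φ b) + Φ b := by
        gcongr
        simpa only [sub_add_cancel] using hΦ (a - b) b
    _ = K * Φ (a - b) + (K + 1) * Φ b := by ring

theorem tendsto_lintegral_enorm_comp_sub_comp [l.IsCountablyGenerated] (hg : Continuous g)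
    (hK : 0 ≤ K) (hgΦ : ∀ s, ‖g s‖ ≤ Φ s) (hΦ : ∀ a b, Φ (a + b) ≤ K * (Φ a + Φ b))
    (hu : ∀ n, AEStronglyMeasurable (u n) μ) (hv : AEStronglyMeasurable v μ)
    (huv : TendstoInMeasure μ u l v) (hΦv : Integrable (fun x ↦ Φ (v x)) μ)
    (hΦuv : ∀ n, Integrable (fun x ↦ Φ (u n x - v x)) μ)
    (hΦuv_lim : Tendsto (fun n ↦ ∫ x, Φ (u n x - v x) ∂μ) l (𝓝 0)) :
    Tendsto (fun n ↦ ∫⁻ x, ‖g (u n x) - g (v x)‖ₑ ∂μ) l (𝓝 0) := by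
  have hΦ_nonneg (s : E) : 0 ≤ Φ s := (norm_nonneg _).trans (hgΦ s)
  have lintegral_lim : Tendsto (fun n ↦ ∫⁻ x, ENNReal.ofReal (K * Φ (u n x - v x)) ∂μ) l (𝓝 0) := by
    simp only [← fun n ↦ ofReal_integral_eq_lintegral_ofReal ((hΦuv n).const_mul K)
      (.of_forall fun _ ↦ mul_nonneg hK (hΦ_nonneg _)), integral_const_mul]
    simpa only [mul_zero, ENNReal.ofReal_zero] using
      ENNReal.tendsto_ofReal (hΦuv_lim.const_mul K)
  refine tendsto_of_subseq_tendsto fun ns hns ↦ ?_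
  obtain ⟨ms, hms, hae⟩ := (huv.comp hns).exists_seq_tendsto_ae
  refine ⟨ms, tendsto_lintegral_zero_of_le_add
    (fun n ↦ ((hg.comp_aestronglyMeasurable (hu _)).sub (hg.comp_aestronglyMeasurable hv)).enorm)
    (fun n ↦ ((hΦuv _).const_mul K).aemeasurable.ennreal_ofReal)
    (fun n ↦ .of_forall fun x ↦ enorm_sub_le_of_doubling_bound hK hgΦ hΦ _ _)
    (hΦv.const_mul (K + 1)).lintegral_lt_top.ne
    (lintegral_lim.comp (hns.comp hms.tendsto_atTop)) ?_⟩
  filter_upwards [hae] with x hx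
  simpa only [sub_self, enorm_zero, Function.comp_apply] using
    (((hg.tendsto (v x)).comp hx).sub_const (g (v x))).enorm

end Doubling

theorem integrable_and_tendsto_integral_comp_of_norm_le_rpow [NormedSpace ℝ F]
    [l.IsCountablyGenerated] {g : E → F} {C p q : ℝ} (hg : Continuous g) (hC : 0 ≤ C)
    (hp : 0 < p) (hpq : p ≤ q) (hgC : ∀ s, ‖g s‖ ≤ C * (‖s‖ ^ p + ‖s‖ ^ q))
    (hu : ∀ n, AEStronglyMeasurable (u n) μ) (hv : AEStronglyMeasurable v μ)
    (hp_int : ∀ n, Integrable (fun x ↦ ‖u n x - v x‖ ^ p) μ)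
    (hq_int : ∀ n, Integrable (fun x ↦ ‖u n x - v x‖ ^ q) μ)
    (hp_lim : Tendsto (fun n ↦ ∫ x, ‖u n x - v x‖ ^ p ∂μ) l (𝓝 0))
    (hq_lim : Tendsto (fun n ↦ ∫ x, ‖u n x - v x‖ ^ q ∂μ) l (𝓝 0))
    (hvp : Integrable (fun x ↦ ‖v x‖ ^ p) μ) (hvq : Integrable (fun x ↦ ‖v x‖ ^ q) μ) :
    (∀ n, Integrable (fun x ↦ g (u n x)) μ) ∧ Integrable (fun x ↦ g (v x)) μ ∧
      Tendsto (fun n ↦ ∫ x, g (u n x) ∂μ) l (𝓝 (∫ x, g (v x) ∂μ)) := by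
  let Φ (s : E) : ℝ := C * (‖s‖ ^ p + ‖s‖ ^ q)
  have doubling (a b : E) : Φ (a + b) ≤ 2 ^ q * (Φ a + Φ b) := by
    simp only [Φ]
    rw [← mul_add, mul_left_comm]
    gcongr
    exact norm_add_rpow_add_norm_add_rpow_le hp.le hpq a b
  have hΦv : Integrable (fun x ↦ Φ (v x)) μ := (hvp.add hvq).const_mul C
  have hΦuv (n : ι) : Integrable (fun x ↦ Φ (u n x - v x)) μ :=
    ((hp_int n).add (hq_int n)).const_mul C
  have hΦuv_lim : Tendsto (fun n ↦ ∫ x, Φ (u n x - v x) ∂μ) l (𝓝 0) := by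
    simpa only [Φ, integral_const_mul, fun n ↦ integral_add (hp_int n) (hq_int n), add_zero,
      mul_zero] using (hp_lim.add hq_lim).const_mul C
  have huv : TendstoInMeasure μ u l v :=
    tendstoInMeasure_of_tendsto_integral_norm_sub_rpow hp hu hv hp_int hp_lim
  have integrable_u (n : ι) : Integrable (fun x ↦ g (u n x)) μ :=
    integrable_comp_of_doubling_bound hg hgC doubling (hu n) hΦv (hΦuv n)
  have integrable_v : Integrable (fun x ↦ g (v x)) μ :=
    hΦv.mono' (hg.comp_aestronglyMeasurable hv) (.of_forall fun x ↦ hgC (v x))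
  exact ⟨integrable_u, integrable_v, tendsto_integral_of_L1 _ integrable_v.aestronglyMeasurable
    (.of_forall integrable_u) <| tendsto_lintegral_enorm_comp_sub_comp hg (by positivity) hgC
      doubling hu hv huv hΦv hΦuv hΦuv_lim⟩

theorem stmt_5_general [l.IsCountablyGenerated] {δ : ℝ} (hδ : δ ∈ Set.Ioo (0 : ℝ) 2)
    {u : ι → α → ℝ} {v : α → ℝ}
    (hu : ∀ n, AEStronglyMeasurable (u n) μ) (hv : AEStronglyMeasurable v μ)
    (hint1 : ∀ n, Integrable (fun x ↦ |u n x - v x| ^ (2 - δ)) μ)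
    (hint2 : ∀ n, Integrable (fun x ↦ |u n x - v x| ^ (2 + δ)) μ)
    (hconv1 : Tendsto (fun n ↦ ∫ x, |u n x - v x| ^ (2 - δ) ∂μ) l (𝓝 0))
    (hconv2 : Tendsto (fun n ↦ ∫ x, |u n x - v x| ^ (2 + δ) ∂μ) l (𝓝 0))
    (hv1 : Integrable (fun x ↦ |v x| ^ (2 - δ)) μ)
    (hv2 : Integrable (fun x ↦ |v x| ^ (2 + δ)) μ) :
    (∀ n, Integrable (fun x ↦ (u n x) ^ 2 * Real.log ((u n x) ^ 2)) μ) ∧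
      Integrable (fun x ↦ (v x) ^ 2 * Real.log ((v x) ^ 2)) μ ∧
      Tendsto (fun n ↦ ∫ x, (u n x) ^ 2 * Real.log ((u n x) ^ 2) ∂μ) l
        (𝓝 (∫ x, (v x) ^ 2 * Real.log ((v x) ^ 2) ∂μ)) := by
  obtain ⟨hδ_pos, hδ_lt⟩ := hδ
  exact integrable_and_tendsto_integral_comp_of_norm_le_rpow continuous_sq_mul_log_sq
    (by positivity) (sub_pos.2 hδ_lt) (by linarith) (abs_sq_mul_log_sq_le hδ_pos) hu hv hint1 hint2
    hconv1 hconv2 hv1 hv2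

end Convergence

/-- Logarithmic convergence lemma (Lemma 2.3): if `u_n → u` a.e. on a finite-measure
set `Ω`, `∫_Ω |u_n - u|^{2-δ} → 0`, `∫_Ω |u_n - u|^{2+δ} → 0`, and
`u ∈ L^{2-δ}(Ω) ∩ L^{2+δ}(Ω)`, then `∫_Ω u_n² log u_n² → ∫_Ω u² log u²`,
all these integrals being absolutely convergent (with `0 log 0 = 0`, which is
automatic since `Real.log 0 = 0`). -/
theorem stmt_5 (N : ℕ) (Ω : Set (EuclideanSpace ℝ (Fin N)))
    (hΩm : MeasurableSet Ω) (hΩfin : volume Ω < ⊤)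
    (δ : ℝ) (hδ : δ ∈ Set.Ioo (0 : ℝ) 1)
    (u : ℕ → EuclideanSpace ℝ (Fin N) → ℝ) (v : EuclideanSpace ℝ (Fin N) → ℝ)
    (humeas : ∀ n, Measurable (u n)) (hvmeas : Measurable v)
    (hae : ∀ᵐ x ∂(volume.restrict Ω), Tendsto (fun n => u n x) atTop (nhds (v x)))
    (hint1 : ∀ n, IntegrableOn (fun x => |u n x - v x| ^ (2 - δ)) Ω)
    (hint2 : ∀ n, IntegrableOn (fun x => |u n x - v x| ^ (2 + δ)) Ω)
    (hconv1 : Tendsto (fun n => ∫ x in Ω, |u n x - v x| ^ (2 - δ)) atTop (nhds 0))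
    (hconv2 : Tendsto (fun n => ∫ x in Ω, |u n x - v x| ^ (2 + δ)) atTop (nhds 0))
    (hv1 : IntegrableOn (fun x => |v x| ^ (2 - δ)) Ω)
    (hv2 : IntegrableOn (fun x => |v x| ^ (2 + δ)) Ω) :
    (∀ n, IntegrableOn (fun x => (u n x) ^ 2 * Real.log ((u n x) ^ 2)) Ω) ∧
      IntegrableOn (fun x => (v x) ^ 2 * Real.log ((v x) ^ 2)) Ω ∧
      Tendsto (fun n => ∫ x in Ω, (u n x) ^ 2 * Real.log ((u n x) ^ 2)) atTop
        (nhds (∫ x in Ω, (v x) ^ 2 * Real.log ((v x) ^ 2))) := by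
  exact stmt_5_general ⟨hδ.1, by linarith [hδ.2]⟩ (fun n ↦ (humeas n).aestronglyMeasurable)
    hvmeas.aestronglyMeasurable hint1 hint2 hconv1 hconv2 hv1 hv2
end

section
/- Let N ≥ 4 be an integer. With u_ε, Ω, φ, U_ε as in the context, there exist constants C > 0 and ε₀ > 0 such that for all ε ∈ (0, ε₀), |∫_Ω |∇U_ε(x)|² dx − K_N| ≤ C·ε^{N−2}, where K_N = ∫_{ℝ^N} |∇u_1(x)|² dx. -/
open MeasureTheory

/-!
The bubbles are the rescalings `ε ^ (-(n - 2) / 2) u (x / ε)` of one profile `u = u_1`, in dimension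
`n`. This rescaling preserves the Dirichlet energy, so that `K_N` is the energy of `u_ε` for every
`ε`. The profile decays like the fundamental solution of the Laplacian: `u` is `O(|x| ^ (2 - n))`
and `∇u` is `O(|x| ^ (1 - n))`. The rescaling multiplies both constants by `ε ^ ((n - 2) / 2)`, and
the cutoff changes them only by a bounded factor. Since `u_ε` and `φ u_ε` agree near the origin,
their energies differ by at most the square of this constant times
`∫ |x| ^ (-2 (n - 1))` over the complement of a ball, which is finite for `n ≥ 3`.
-/

open Metric Module Topology

section Decay

variable {E F : Type*} [NormedAddCommGroup E] [NormedSpace ℝ E]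
  [NormedAddCommGroup F] [NormedSpace ℝ F] {K L M ε : ℝ} {v w : E → F} {φ : E → ℝ}

/-- Global decay, with constant `K`, at the rate of the fundamental solution `|x| ^ (2 - n)` of the
Laplacian in dimension `n = finrank ℝ E`, for a function and its derivative. The natural-number
subtractions are the intended ones for `2 ≤ n`. -/
structure CriticalDecay (K : ℝ) (v : E → F) : Prop where
  norm_mul_pow_le (x : E) : ‖v x‖ * ‖x‖ ^ (finrank ℝ E - 2) ≤ K
  norm_fderiv_mul_pow_le (x : E) : ‖fderiv ℝ v x‖ * ‖x‖ ^ (finrank ℝ E - 1) ≤ K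

/-- The rescaling `x ↦ ε ^ ((2 - n) / 2) v (x / ε)` in dimension `n = finrank ℝ E`, which leaves the
Dirichlet energy invariant; it is meant for `0 < ε`. -/
noncomputable def criticalRescale (ε : ℝ) (v : E → F) (x : E) : F :=
  ε ^ ((2 - finrank ℝ E : ℝ) / 2) • v (ε⁻¹ • x)

theorem contDiff_criticalRescale {k : WithTop ℕ∞} (hv : ContDiff ℝ k v) (ε : ℝ) :
    ContDiff ℝ k (criticalRescale ε v) :=
  (hv.comp (contDiff_const_smul ε⁻¹)).const_smul _

theorem norm_criticalRescale (hε : 0 < ε) (v : E → F) (x : E) :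
    ‖criticalRescale ε v x‖ = ε ^ ((2 - finrank ℝ E : ℝ) / 2) * ‖v (ε⁻¹ • x)‖ := by
  rw [criticalRescale, norm_smul, Real.norm_of_nonneg (by positivity)]

theorem norm_fderiv_criticalRescale (hε : 0 < ε) (v : E → F) (x : E) :
    ‖fderiv ℝ (criticalRescale ε v) x‖ =
      ε ^ (-(finrank ℝ E : ℝ) / 2) * ‖fderiv ℝ v (ε⁻¹ • x)‖ := by
  have hexp : (2 - finrank ℝ E : ℝ) / 2 - 1 = -(finrank ℝ E : ℝ) / 2 := by ring
  change ‖fderiv ℝ (ε ^ ((2 - finrank ℝ E : ℝ) / 2) • fun y ↦ v (ε⁻¹ • y)) x‖ = _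
  rw [fderiv_const_smul_field, Pi.smul_apply, fderiv_comp_smul, smul_smul, norm_smul,
    Real.norm_of_nonneg (by positivity), ← div_eq_mul_inv, ← Real.rpow_sub_one hε.ne', hexp]

namespace CriticalDecay

theorem nonneg (hv : CriticalDecay K v) : 0 ≤ K :=
  (by positivity : (0 : ℝ) ≤ ‖v 0‖ * ‖(0 : E)‖ ^ (finrank ℝ E - 2)).trans (hv.norm_mul_pow_le 0)

theorem sq_norm_fderiv_le (hv : CriticalDecay K v) {x : E} (hx : x ≠ 0) :
    ‖fderiv ℝ v x‖ ^ 2 ≤ K ^ 2 * (‖x‖ ^ (2 * (finrank ℝ E - 1)))⁻¹ := by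
  have : 0 < ‖x‖ := norm_pos_iff.2 hx
  have hsq := pow_le_pow_left₀ (by positivity) (hv.norm_fderiv_mul_pow_le x) 2
  rwa [← div_eq_mul_inv, le_div_iff₀ (by positivity), mul_comm 2, pow_mul, ← mul_pow]

theorem rescale (hn : 2 ≤ finrank ℝ E) (hε : 0 < ε) (hv : CriticalDecay K v) :
    CriticalDecay (ε ^ ((finrank ℝ E - 2 : ℝ) / 2) * K) (criticalRescale ε v) := by
  have hnorm (x : E) : ‖x‖ = ε * ‖ε⁻¹ • x‖ := by
    rw [norm_smul, Real.norm_of_nonneg (by positivity), mul_inv_cancel_left₀ hε.ne']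
  constructor <;> intro x
  · have hexp : ε ^ ((2 - finrank ℝ E : ℝ) / 2) * ε ^ (finrank ℝ E - 2) =
        ε ^ ((finrank ℝ E - 2 : ℝ) / 2) := by
      rw [← Real.rpow_natCast, ← Real.rpow_add hε, Nat.cast_sub hn]
      ring_nf
    rw [norm_criticalRescale hε, hnorm x, mul_pow, mul_mul_mul_comm, hexp]
    exact mul_le_mul_of_nonneg_left (hv.norm_mul_pow_le _) (by positivity)
  · have hexp : ε ^ (-(finrank ℝ E : ℝ) / 2) * ε ^ (finrank ℝ E - 1) =
        ε ^ ((finrank ℝ E - 2 : ℝ) / 2) := by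
      rw [← Real.rpow_natCast, ← Real.rpow_add hε, Nat.cast_sub (by lia)]
      ring_nf
    rw [norm_fderiv_criticalRescale hε, hnorm x, mul_pow, mul_mul_mul_comm, hexp]
    exact mul_le_mul_of_nonneg_left (hv.norm_fderiv_mul_pow_le _) (by positivity)

theorem smul (hn : 2 ≤ finrank ℝ E) (hφ : Differentiable ℝ φ)
    (hφM : ∀ x, |φ x| + ‖x‖ * ‖fderiv ℝ φ x‖ ≤ M) (hvd : Differentiable ℝ v)
    (hv : CriticalDecay K v) : CriticalDecay (M * K) (fun x ↦ φ x • v x) := by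
  have hK := hv.nonneg
  constructor <;> intro x
  · have hφx : |φ x| ≤ M := (le_add_of_nonneg_right (by positivity)).trans (hφM x)
    rw [norm_smul, Real.norm_eq_abs, mul_assoc]
    exact mul_le_mul hφx (hv.norm_mul_pow_le x) (by positivity) ((abs_nonneg _).trans hφx)
  · have hleibniz :
        ‖fderiv ℝ (fun x ↦ φ x • v x) x‖ ≤ |φ x| * ‖fderiv ℝ v x‖ + ‖fderiv ℝ φ x‖ * ‖v x‖ := by
      rw [fderiv_fun_smul (hφ x) (hvd x), ← ContinuousLinearMap.norm_smulRight_apply,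
        ← Real.norm_eq_abs, ← norm_smul]
      exact norm_add_le _ _
    have hpow : ‖x‖ ^ (finrank ℝ E - 1) = ‖x‖ * ‖x‖ ^ (finrank ℝ E - 2) := by
      rw [← pow_succ']
      congr 1
      lia
    calc ‖fderiv ℝ (fun x ↦ φ x • v x) x‖ * ‖x‖ ^ (finrank ℝ E - 1)
        ≤ (|φ x| * ‖fderiv ℝ v x‖ + ‖fderiv ℝ φ x‖ * ‖v x‖) * ‖x‖ ^ (finrank ℝ E - 1) := by
          gcongr
      _ = |φ x| * (‖fderiv ℝ v x‖ * ‖x‖ ^ (finrank ℝ E - 1)) +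
          ‖x‖ * ‖fderiv ℝ φ x‖ * (‖v x‖ * ‖x‖ ^ (finrank ℝ E - 2)) := by rw [hpow]; ring
      _ ≤ |φ x| * K + ‖x‖ * ‖fderiv ℝ φ x‖ * K := by
          gcongr
          exacts [hv.norm_fderiv_mul_pow_le x, hv.norm_mul_pow_le x]
      _ ≤ M * K := by
          rw [← add_mul]
          gcongr
          exact hφM x

end CriticalDecay

theorem exists_abs_add_norm_mul_norm_fderiv_le (hφ : ContDiff ℝ 1 φ)
    (hφc : HasCompactSupport φ) : ∃ M, ∀ x, |φ x| + ‖x‖ * ‖fderiv ℝ φ x‖ ≤ M := by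
  have hcont : Continuous fun x ↦ |φ x| + ‖x‖ * ‖fderiv ℝ φ x‖ :=
    hφ.continuous.abs.add (continuous_norm.mul (hφ.continuous_fderiv one_ne_zero).norm)
  have hsupp : HasCompactSupport fun x ↦ |φ x| + ‖x‖ * ‖fderiv ℝ φ x‖ :=
    hφc.norm.add (hφc.fderiv (𝕜 := ℝ)).norm.mul_left
  obtain ⟨M, hM⟩ := hsupp.exists_bound_of_continuous hcont
  exact ⟨M, fun x ↦ (le_abs_self _).trans (hM x)⟩

theorem setIntegral_sq_norm_fderiv_eq_integral [MeasurableSpace E] {μ : Measure E} {s : Set E}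
    (hs : tsupport v ⊆ s) :
    ∫ x in s, ‖fderiv ℝ v x‖ ^ 2 ∂μ = ∫ x, ‖fderiv ℝ v x‖ ^ 2 ∂μ := by
  refine setIntegral_eq_integral_of_forall_compl_eq_zero fun x hx ↦ ?_
  rw [fderiv_of_notMem_tsupport ℝ fun h ↦ hx (hs h)]
  simp

end Decay

section Energy

variable {E F : Type*} [NormedAddCommGroup E] [NormedSpace ℝ E] [FiniteDimensional ℝ E]
  [MeasurableSpace E] [BorelSpace E] {μ : Measure E} [μ.IsAddHaarMeasure]
  [NormedAddCommGroup F] [NormedSpace ℝ F] {K L ρ ε : ℝ} {v w : E → F} {φ : E → ℝ}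

theorem integrableOn_inv_norm_pow_compl_ball {k : ℕ} (hk : finrank ℝ E < k) (hρ : 0 < ρ) :
    IntegrableOn (fun x : E ↦ (‖x‖ ^ k)⁻¹) (ball 0 ρ)ᶜ μ := by
  have hint : Integrable (fun x : E ↦ (1 + ‖x‖) ^ (-(k : ℝ))) μ :=
    integrable_one_add_norm (by exact_mod_cast hk)
  refine (hint.const_mul ((1 + ρ⁻¹) ^ k)).integrableOn.mono' (by fun_prop) ?_
  filter_upwards [ae_restrict_mem measurableSet_ball.compl] with x hx
  have hρx : ρ ≤ ‖x‖ := by simpa using hx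
  have hx0 : 0 < ‖x‖ := hρ.trans_le hρx
  have hle : 1 + ‖x‖ ≤ (1 + ρ⁻¹) * ‖x‖ := by
    have : 1 ≤ ρ⁻¹ * ‖x‖ := by rwa [← div_eq_inv_mul, one_le_div hρ]
    linarith
  rw [Real.norm_of_nonneg (by positivity), Real.rpow_neg (by positivity), Real.rpow_natCast,
    ← div_eq_mul_inv, inv_le_comm₀ (by positivity) (by positivity), inv_div,
    div_le_iff₀ (by positivity), mul_comm, ← mul_pow]
  gcongr

theorem integral_sq_norm_fderiv_criticalRescale (hε : 0 < ε) (v : E → F) :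
    ∫ x, ‖fderiv ℝ (criticalRescale ε v) x‖ ^ 2 ∂μ = ∫ x, ‖fderiv ℝ v x‖ ^ 2 ∂μ := by
  have hexp : (ε ^ (-(finrank ℝ E : ℝ) / 2)) ^ 2 * ε ^ finrank ℝ E = 1 := by
    rw [← Real.rpow_mul_natCast hε.le, ← Real.rpow_natCast, ← Real.rpow_add hε]
    simp
  simp_rw [norm_fderiv_criticalRescale hε, mul_pow]
  rw [integral_const_mul,
    Measure.integral_comp_inv_smul_of_nonneg μ (fun x ↦ ‖fderiv ℝ v x‖ ^ 2) hε.le,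
    smul_eq_mul, ← mul_assoc, hexp, one_mul]

namespace CriticalDecay

theorem integrable_sq_norm_fderiv (hn : 3 ≤ finrank ℝ E) (hvd : ContDiff ℝ 1 v)
    (hv : CriticalDecay K v) : Integrable (fun x ↦ ‖fderiv ℝ v x‖ ^ 2) μ := by
  have hcont : Continuous fun x ↦ ‖fderiv ℝ v x‖ ^ 2 :=
    (hvd.continuous_fderiv one_ne_zero).norm.pow 2
  have hball : IntegrableOn (fun x ↦ ‖fderiv ℝ v x‖ ^ 2) (ball 0 1) μ :=
    (hcont.continuousOn.integrableOn_compact (isCompact_closedBall 0 1)).mono_set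
      ball_subset_closedBall
  have hcompl : IntegrableOn (fun x ↦ ‖fderiv ℝ v x‖ ^ 2) (ball 0 1)ᶜ μ := by
    refine ((integrableOn_inv_norm_pow_compl_ball (k := 2 * (finrank ℝ E - 1)) (by lia)
      one_pos).const_mul (K ^ 2)).mono' hcont.aestronglyMeasurable ?_
    filter_upwards [ae_restrict_mem measurableSet_ball.compl] with x hx
    rw [Real.norm_of_nonneg (by positivity)]
    exact hv.sq_norm_fderiv_le (ne_of_mem_of_not_mem hx (by simp))
  simpa using hball.union hcompl

theorem abs_integral_sq_norm_fderiv_sub_le (hn : 3 ≤ finrank ℝ E) (hρ : 0 < ρ)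
    (hvd : ContDiff ℝ 1 v) (hv : CriticalDecay K v) (hwd : ContDiff ℝ 1 w)
    (hw : CriticalDecay L w) (heq : Set.EqOn v w (ball 0 ρ)) :
    |(∫ x, ‖fderiv ℝ v x‖ ^ 2 ∂μ) - ∫ x, ‖fderiv ℝ w x‖ ^ 2 ∂μ| ≤
      (K ^ 2 + L ^ 2) * ∫ x in (ball 0 ρ)ᶜ, (‖x‖ ^ (2 * (finrank ℝ E - 1)))⁻¹ ∂μ := by
  have hzero (x : E) (hx : x ∉ (ball 0 ρ)ᶜ) :
      ‖fderiv ℝ v x‖ ^ 2 - ‖fderiv ℝ w x‖ ^ 2 = 0 := by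
    have hnhds : v =ᶠ[𝓝 x] w := heq.eventuallyEq_of_mem (isOpen_ball.mem_nhds (by simpa using hx))
    rw [hnhds.fderiv_eq, sub_self]
  rw [← integral_sub (hv.integrable_sq_norm_fderiv hn hvd) (hw.integrable_sq_norm_fderiv hn hwd),
    ← setIntegral_eq_integral_of_forall_compl_eq_zero hzero, ← Real.norm_eq_abs,
    ← integral_const_mul]
  refine norm_integral_le_of_norm_le
    ((integrableOn_inv_norm_pow_compl_ball (by lia) hρ).const_mul _) ?_
  filter_upwards [ae_restrict_mem measurableSet_ball.compl] with x hx
  have hx0 : x ≠ 0 := ne_of_mem_of_not_mem hx (by simpa using hρ)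
  have hvx := hv.sq_norm_fderiv_le hx0
  have hwx := hw.sq_norm_fderiv_le hx0
  rw [Real.norm_eq_abs, abs_le, add_mul]
  constructor <;> linarith [sq_nonneg ‖fderiv ℝ v x‖, sq_nonneg ‖fderiv ℝ w x‖]

theorem exists_abs_setIntegral_cutoff_rescale_sub_le (hn : 3 ≤ finrank ℝ E)
    (hvd : ContDiff ℝ 1 v) (hv : CriticalDecay K v) {Ω : Set E} (hφ : ContDiff ℝ 1 φ)
    (hφc : HasCompactSupport φ) (hφΩ : tsupport φ ⊆ Ω) (hφ1 : ∀ᶠ x in 𝓝 0, φ x = 1) :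
    ∃ C : ℝ, 0 < C ∧ ∀ ε : ℝ, 0 < ε →
      |(∫ x in Ω, ‖fderiv ℝ (fun y ↦ φ y • criticalRescale ε v y) x‖ ^ 2 ∂μ) -
        ∫ x, ‖fderiv ℝ v x‖ ^ 2 ∂μ| ≤ C * ε ^ (finrank ℝ E - 2) := by
  obtain ⟨ρ, hρ, hφρ⟩ := eventually_nhds_iff_ball.1 hφ1
  obtain ⟨M, hM⟩ := exists_abs_add_norm_mul_norm_fderiv_le hφ hφc
  let J : ℝ := ∫ x in (ball 0 ρ)ᶜ, (‖x‖ ^ (2 * (finrank ℝ E - 1)))⁻¹ ∂μ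
  have : 0 ≤ J := integral_nonneg fun x ↦ by positivity
  refine ⟨(M ^ 2 + 1) * K ^ 2 * J + 1, by positivity, fun ε hε ↦ ?_⟩
  have hsq : (ε ^ ((finrank ℝ E - 2 : ℝ) / 2)) ^ 2 = ε ^ (finrank ℝ E - 2) := by
    rw [← Real.rpow_mul_natCast hε.le, ← Real.rpow_natCast, Nat.cast_sub (by lia)]
    simp
  have hvε := hv.rescale (by lia) hε
  have hvεd := contDiff_criticalRescale hvd ε
  have hcut := hvε.smul (by lia) (hφ.differentiable one_ne_zero) hM
    (hvεd.differentiable one_ne_zero)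
  rw [setIntegral_sq_norm_fderiv_eq_integral
      ((tsupport_smul_subset_left φ (criticalRescale ε v)).trans hφΩ),
    ← integral_sq_norm_fderiv_criticalRescale hε v]
  calc _ ≤ ((M * (ε ^ ((finrank ℝ E - 2 : ℝ) / 2) * K)) ^ 2 +
          (ε ^ ((finrank ℝ E - 2 : ℝ) / 2) * K) ^ 2) * J :=
        hcut.abs_integral_sq_norm_fderiv_sub_le hn hρ (hφ.smul hvεd) hvεd hvε
          fun x hx ↦ by simp [hφρ x hx]
    _ = (M ^ 2 + 1) * K ^ 2 * J * ε ^ (finrank ℝ E - 2) := by rw [← hsq]; ring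
    _ ≤ ((M ^ 2 + 1) * K ^ 2 * J + 1) * ε ^ (finrank ℝ E - 2) := by
        gcongr
        linarith

end CriticalDecay

end Energy

section Bubble

variable {E : Type*} [NormedAddCommGroup E] [InnerProductSpace ℝ E] {ε : ℝ}

/-- The Aubin–Talenti bubble `u_ε` centred at the origin, in dimension `n = finrank ℝ E`: the
extremal of the Sobolev inequality concentrated at scale `ε`, meant for `3 ≤ n` and `0 < ε`. -/
noncomputable def aubinTalenti (ε : ℝ) (x : E) : ℝ :=
  ((finrank ℝ E : ℝ) * (finrank ℝ E - 2)) ^ ((finrank ℝ E - 2 : ℝ) / 4) *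
    (ε / (ε ^ 2 + ‖x‖ ^ 2)) ^ ((finrank ℝ E - 2 : ℝ) / 2)

theorem criticalRescale_aubinTalenti_one (hε : 0 < ε) :
    criticalRescale ε (aubinTalenti 1 : E → ℝ) = aubinTalenti ε := by
  ext x
  have hexp : (2 - finrank ℝ E : ℝ) / 2 = -((finrank ℝ E - 2 : ℝ) / 2) := by ring
  have hbase : ε⁻¹ * (1 / (1 ^ 2 + ‖ε⁻¹ • x‖ ^ 2)) = ε / (ε ^ 2 + ‖x‖ ^ 2) := by
    rw [norm_smul, Real.norm_of_nonneg (by positivity)]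
    field_simp
  rw [criticalRescale, aubinTalenti, aubinTalenti, smul_eq_mul, mul_left_comm, hexp,
    Real.rpow_neg hε.le, ← Real.inv_rpow hε.le, ← Real.mul_rpow (by positivity) (by positivity),
    hbase]

theorem aubinTalenti_one :
    (aubinTalenti 1 : E → ℝ) = fun x ↦
      ((finrank ℝ E : ℝ) * (finrank ℝ E - 2)) ^ ((finrank ℝ E - 2 : ℝ) / 4) *
        (1 + ‖x‖ ^ 2) ^ (-((finrank ℝ E - 2 : ℝ) / 2)) := by
  ext x
  rw [aubinTalenti, one_pow, one_div, Real.inv_rpow (by positivity),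
    ← Real.rpow_neg (by positivity)]

theorem contDiff_aubinTalenti_one {k : WithTop ℕ∞} : ContDiff ℝ k (aubinTalenti 1 : E → ℝ) := by
  rw [aubinTalenti_one]
  exact contDiff_const.mul <| (contDiff_const.add (contDiff_norm_sq ℝ)).rpow_const_of_ne
    fun x ↦ (by positivity : 1 + ‖x‖ ^ 2 ≠ 0)

theorem norm_fderiv_one_add_norm_sq_rpow (p : ℝ) (x : E) :
    ‖fderiv ℝ (fun y : E ↦ (1 + ‖y‖ ^ 2) ^ p) x‖ = 2 * |p| * (1 + ‖x‖ ^ 2) ^ (p - 1) * ‖x‖ := by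
  have hne : 1 + ‖x‖ ^ 2 ≠ 0 := by positivity
  have hderiv := ((hasStrictFDerivAt_norm_sq x).hasFDerivAt.const_add 1).rpow_const (p := p)
    (Or.inl hne)
  rw [hderiv.fderiv, norm_smul, ← Nat.cast_smul_eq_nsmul ℝ, norm_smul, innerSL_apply_norm, norm_mul,
    Real.norm_eq_abs p, Real.norm_of_nonneg (by positivity : 0 ≤ (1 + ‖x‖ ^ 2) ^ (p - 1))]
  norm_num
  ring

theorem one_add_sq_rpow_neg_half_mul_pow_le_one {t : ℝ} (ht : 0 ≤ t) (k : ℕ) :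
    (1 + t ^ 2) ^ (-((k : ℝ) / 2)) * t ^ k ≤ 1 := by
  have hpow : t ^ k = (t ^ 2) ^ ((k : ℝ) / 2) := by
    rw [← Real.rpow_natCast, ← Real.rpow_natCast, ← Real.rpow_mul ht]
    congr 1
    push_cast
    ring
  rw [Real.rpow_neg (by positivity), inv_mul_le_one₀ (by positivity), hpow]
  gcongr
  linarith

theorem exists_criticalDecay_aubinTalenti_one (hn : 2 ≤ finrank ℝ E) :
    ∃ K, CriticalDecay K (aubinTalenti 1 : E → ℝ) := by
  have hn' : (2 : ℝ) ≤ finrank ℝ E := by exact_mod_cast hn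
  rw [aubinTalenti_one]
  set c : ℝ := ((finrank ℝ E : ℝ) * (finrank ℝ E - 2)) ^ ((finrank ℝ E - 2 : ℝ) / 4)
  have hc : 0 ≤ c := Real.rpow_nonneg (mul_nonneg (by linarith) (by linarith)) _
  refine ⟨c * (finrank ℝ E - 1), fun x ↦ ?_, fun x ↦ ?_⟩
  · have hdecay := one_add_sq_rpow_neg_half_mul_pow_le_one (norm_nonneg x) (finrank ℝ E - 2)
    rw [Nat.cast_sub hn, Nat.cast_two] at hdecay
    rw [Real.norm_of_nonneg (by positivity), mul_assoc]
    gcongr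
    linarith
  · have hdecay := one_add_sq_rpow_neg_half_mul_pow_le_one (norm_nonneg x) (finrank ℝ E)
    have habs : 2 * |-((finrank ℝ E - 2 : ℝ) / 2)| = finrank ℝ E - 2 := by
      rw [abs_neg, abs_of_nonneg (by linarith)]
      ring
    have hexp : -((finrank ℝ E - 2 : ℝ) / 2) - 1 = -((finrank ℝ E : ℝ) / 2) := by ring
    have hpow : ‖x‖ * ‖x‖ ^ (finrank ℝ E - 1) = ‖x‖ ^ finrank ℝ E := mul_pow_sub_one (by lia) _
    change ‖fderiv ℝ (c • fun y : E ↦ (1 + ‖y‖ ^ 2) ^ (-((finrank ℝ E - 2 : ℝ) / 2))) x‖ * _ ≤ _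
    rw [fderiv_const_smul_field, Pi.smul_apply, norm_smul, Real.norm_of_nonneg hc,
      norm_fderiv_one_add_norm_sq_rpow, habs, hexp]
    calc _ = c * ((finrank ℝ E - 2) *
            ((1 + ‖x‖ ^ 2) ^ (-((finrank ℝ E : ℝ) / 2)) * ‖x‖ ^ finrank ℝ E)) := by
          rw [← hpow]
          ring
      _ ≤ c * ((finrank ℝ E - 2) * 1) := by
          gcongr
      _ ≤ c * (finrank ℝ E - 1) := by
          gcongr
          linarith

theorem stmt_6_general [FiniteDimensional ℝ E] [MeasurableSpace E] [BorelSpace E] {μ : Measure E}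
    [μ.IsAddHaarMeasure] (hn : 3 ≤ finrank ℝ E) {Ω : Set E} {φ : E → ℝ} (hφ : ContDiff ℝ 1 φ)
    (hφc : HasCompactSupport φ) (hφΩ : tsupport φ ⊆ Ω) (hφ1 : ∀ᶠ x in 𝓝 0, φ x = 1) :
    ∃ C : ℝ, 0 < C ∧ ∀ ε : ℝ, 0 < ε →
      |(∫ x in Ω, ‖fderiv ℝ (fun y ↦ φ y * aubinTalenti ε y) x‖ ^ 2 ∂μ) -
        ∫ x, ‖fderiv ℝ (aubinTalenti 1 : E → ℝ) x‖ ^ 2 ∂μ| ≤ C * ε ^ (finrank ℝ E - 2) := by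
  obtain ⟨K, hK⟩ := exists_criticalDecay_aubinTalenti_one (E := E) (by lia)
  obtain ⟨C, hC, hbound⟩ := hK.exists_abs_setIntegral_cutoff_rescale_sub_le (μ := μ) hn
    contDiff_aubinTalenti_one hφ hφc hφΩ hφ1
  refine ⟨C, hC, fun ε hε ↦ ?_⟩
  simpa only [criticalRescale_aubinTalenti_one hε, smul_eq_mul] using hbound ε hε

end Bubble

/-- Gradient estimate (Lemma 3.1, first part): for `N ≥ 4`,
`∫_Ω |∇U_ε|² = S^{N/2} + O(ε^{N-2})` as `ε → 0⁺`, where `U_ε = φ u_ε` is the cut-off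
Aubin–Talenti bubble and `K_N = ∫_{ℝ^N} |∇u_1|² = S^{N/2}`. -/
theorem stmt_6 (N : ℕ) (hN : 4 ≤ N)
    (u : ℝ → EuclideanSpace ℝ (Fin N) → ℝ)
    (hu : ∀ ε : ℝ, 0 < ε → ∀ x : EuclideanSpace ℝ (Fin N),
      u ε x = ((N : ℝ) * ((N : ℝ) - 2)) ^ (((N : ℝ) - 2) / 4) *
        (ε / (ε ^ 2 + ‖x‖ ^ 2)) ^ (((N : ℝ) - 2) / 2))
    (Ω : Set (EuclideanSpace ℝ (Fin N))) (hΩo : IsOpen Ω)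
    (hΩb : Bornology.IsBounded Ω) (h0Ω : (0 : EuclideanSpace ℝ (Fin N)) ∈ Ω)
    (φ : EuclideanSpace ℝ (Fin N) → ℝ) (hφs : ContDiff ℝ (⊤ : ℕ∞) φ)
    (hφc : HasCompactSupport φ) (hφΩ : tsupport φ ⊆ Ω)
    (hφ01 : ∀ x, 0 ≤ φ x ∧ φ x ≤ 1)
    (ρ : ℝ) (hρ : 0 < ρ) (hball : Metric.closedBall 0 ρ ⊆ Ω)
    (hφ1 : ∀ x ∈ Metric.closedBall (0 : EuclideanSpace ℝ (Fin N)) ρ, φ x = 1) :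
    ∃ C : ℝ, 0 < C ∧ ∃ ε₀ : ℝ, 0 < ε₀ ∧ ∀ ε ∈ Set.Ioo (0 : ℝ) ε₀,
      |(∫ x in Ω, ‖fderiv ℝ (fun y => φ y * u ε y) x‖ ^ 2) -
        ∫ x : EuclideanSpace ℝ (Fin N), ‖fderiv ℝ (u 1) x‖ ^ 2| ≤ C * ε ^ (N - 2) := by
  have hbubble (ε : ℝ) (hε : 0 < ε) : u ε = aubinTalenti ε := by
    ext x
    rw [hu ε hε, aubinTalenti, finrank_euclideanSpace_fin]
  obtain ⟨C, hC, hbound⟩ := stmt_6_general (μ := volume) (by rw [finrank_euclideanSpace_fin]; lia)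
    (hφs.of_le (by exact_mod_cast le_top)) hφc hφΩ
    (Filter.eventually_of_mem (closedBall_mem_nhds 0 hρ) hφ1)
  refine ⟨C, hC, 1, one_pos, fun ε hε ↦ ?_⟩
  simpa only [hbubble ε hε.1, hbubble 1 one_pos, finrank_euclideanSpace_fin] using hbound ε hε.1
end

section
/- Let N ≥ 4 be an integer and 2* = 2N/(N−2). With u_ε, Ω, φ, U_ε as in the context, there exist constants C > 0 and ε₀ > 0 such that for all ε ∈ (0, ε₀), |∫_Ω |U_ε(x)|^{2*} dx − K′_N| ≤ C·ε^{N}, where K′_N = ∫_{ℝ^N} u_1(x)^{2*} dx. -/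
open MeasureTheory

/-!
At the critical exponent the bubbles have a scale-invariant mass: `u_ε ^ 2*` is a constant multiple
of `(ε / (ε² + |x|²)) ^ N`, so `∫ u_ε ^ 2* = ∫ u_1 ^ 2*`. Cutting off therefore costs at most the
mass of `u_ε ^ 2*` outside the ball of radius `ρ`. There `u_ε ^ 2*` is at most `(2ε/ρ) ^ N` times
`u_ρ ^ 2*`, whose mass is again `∫ u_1 ^ 2*`, and so the error is at most
`(2ε/ρ) ^ N * ∫ u_1 ^ 2*`.
-/

section Cutoff

open Set

variable {α F : Type*} [MeasurableSpace α] {μ : Measure α}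
  [NormedAddCommGroup F] [NormedSpace ℝ F]

theorem norm_integral_smul_sub_integral_le {η : α → ℝ} {f : α → F} {g : α → ℝ} {s : Set α}
    (hη : AEStronglyMeasurable η μ) (hη01 : ∀ x, η x ∈ Icc 0 1) (hη1 : ∀ x ∈ s, η x = 1)
    (hf : Integrable f μ) (hg : Integrable g μ) (hg0 : ∀ x ∈ s, 0 ≤ g x)
    (hfg : ∀ x ∉ s, ‖f x‖ ≤ g x) :
    ‖∫ x, η x • f x ∂μ - ∫ x, f x ∂μ‖ ≤ ∫ x, g x ∂μ := by
  have hηf : Integrable (fun x => η x • f x) μ :=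
    hf.bdd_smul 1 hη <| .of_forall fun x => by
      simpa only [Real.norm_of_nonneg (hη01 x).1] using (hη01 x).2
  rw [← integral_sub hηf hf]
  refine norm_integral_le_of_norm_le hg <| .of_forall fun x => ?_
  by_cases hx : x ∈ s
  · simpa [hη1 x hx] using hg0 x hx
  · calc ‖η x • f x - f x‖ = |η x - 1| * ‖f x‖ := by
          rw [← Real.norm_eq_abs, ← norm_smul, sub_smul, one_smul]
      _ ≤ 1 * ‖f x‖ := by
          gcongr
          exact abs_le.2 ⟨by linarith [(hη01 x).1], by linarith [(hη01 x).2]⟩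
      _ ≤ g x := by simpa only [one_mul] using hfg x hx

end Cutoff

section ConformalFactor

open Module

variable {E : Type*} [NormedAddCommGroup E]

/-- The function `x ↦ ε / (ε² + |x|²)`. On Euclidean space it is, up to a constant, the conformal
factor of the round metric in stereographic coordinates at scale `ε`; bubbles are its powers. -/
noncomputable def conformalFactor (ε : ℝ) (x : E) : ℝ :=
  ε / (ε ^ 2 + ‖x‖ ^ 2)

theorem conformalFactor_nonneg {ε : ℝ} (hε : 0 ≤ ε) (x : E) : 0 ≤ conformalFactor ε x := by
  unfold conformalFactor
  positivity

theorem conformalFactor_le_mul_of_le_norm {ε ρ : ℝ} (hε : 0 ≤ ε) (hρ : 0 < ρ) {x : E}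
    (hx : ρ ≤ ‖x‖) : conformalFactor ε x ≤ 2 * ε / ρ * conformalFactor ρ x := by
  have hx0 : 0 < ‖x‖ := hρ.trans_le hx
  have hρx : ρ ^ 2 ≤ ‖x‖ ^ 2 := by gcongr
  calc ε / (ε ^ 2 + ‖x‖ ^ 2) = 2 * ε / (2 * (ε ^ 2 + ‖x‖ ^ 2)) := by
        rw [mul_div_mul_left _ _ two_ne_zero]
    _ ≤ 2 * ε / (ρ ^ 2 + ‖x‖ ^ 2) := by
        gcongr
        linarith [sq_nonneg ε]
    _ = 2 * ε / ρ * (ρ / (ρ ^ 2 + ‖x‖ ^ 2)) := by rw [div_mul_div_cancel₀ hρ.ne']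

variable [NormedSpace ℝ E]

theorem conformalFactor_eq_inv_mul_conformalFactor_one {ε : ℝ} (hε : 0 < ε) (x : E) :
    conformalFactor ε x = ε⁻¹ * conformalFactor 1 (ε⁻¹ • x) := by
  rw [conformalFactor, conformalFactor, norm_smul, norm_inv, Real.norm_of_nonneg hε.le]
  field_simp

variable [FiniteDimensional ℝ E] [MeasurableSpace E] [BorelSpace E] {μ : Measure E}
  [μ.IsAddHaarMeasure]

theorem integrable_conformalFactor_pow {ε : ℝ} (hε : 0 < ε) {k : ℕ} (hk : finrank ℝ E < 2 * k) :
    Integrable (fun x : E => conformalFactor ε x ^ k) μ := by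
  have hone : Integrable (fun x : E => conformalFactor 1 x ^ k) μ := by
    refine (integrable_rpow_neg_one_add_norm_sq (μ := μ) (r := 2 * (k : ℝ))
      (by exact_mod_cast hk)).congr <| .of_forall fun x => ?_
    have hx : 0 ≤ 1 + ‖x‖ ^ 2 := by positivity
    simp only [conformalFactor, neg_div, mul_div_cancel_left₀ (k : ℝ) two_ne_zero,
      Real.rpow_neg hx, Real.rpow_natCast, one_pow, one_div, inv_pow]
  simp_rw [conformalFactor_eq_inv_mul_conformalFactor_one hε, mul_pow]
  exact (hone.comp_smul (inv_ne_zero hε.ne')).const_mul _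

theorem integral_conformalFactor_pow_finrank {ε : ℝ} (hε : 0 < ε) :
    ∫ x : E, conformalFactor ε x ^ finrank ℝ E ∂μ =
      ∫ x : E, conformalFactor 1 x ^ finrank ℝ E ∂μ := by
  simp_rw [conformalFactor_eq_inv_mul_conformalFactor_one hε, mul_pow]
  rw [integral_const_mul,
    Measure.integral_comp_inv_smul_of_nonneg μ (fun x : E => conformalFactor 1 x ^ finrank ℝ E)
      hε.le,
    smul_eq_mul, ← mul_assoc, ← mul_pow, inv_mul_cancel₀ hε.ne', one_pow, one_mul]

end ConformalFactor

section Bubble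

open Module Metric

variable {E : Type*} [NormedAddCommGroup E] [NormedSpace ℝ E]

variable (E) in
/-- The critical Sobolev exponent `2* = 2N / (N - 2)`, where `N` is the dimension of `E`; it is
meaningful only for `N ≥ 3`. -/
noncomputable def criticalExponent : ℝ :=
  2 * (finrank ℝ E : ℝ) / ((finrank ℝ E : ℝ) - 2)

/-- The Aubin–Talenti bubble of scale `ε`, written for an arbitrary norm on a space of dimension
`N`. On Euclidean space the constant is the one that makes it solve `-Δu = u ^ (2* - 1)`. -/
noncomputable def aubinTalentiBubble (ε : ℝ) (x : E) : ℝ :=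
  ((finrank ℝ E : ℝ) * ((finrank ℝ E : ℝ) - 2)) ^ (((finrank ℝ E : ℝ) - 2) / 4) *
    conformalFactor ε x ^ (((finrank ℝ E : ℝ) - 2) / 2)

theorem criticalExponent_pos (hE : 2 < finrank ℝ E) : 0 < criticalExponent E := by
  have hN : (2 : ℝ) < finrank ℝ E := by exact_mod_cast hE
  exact div_pos (by linarith) (by linarith)

theorem aubinTalentiBubble_nonneg (hE : 2 ≤ finrank ℝ E) {ε : ℝ} (hε : 0 ≤ ε) (x : E) :
    0 ≤ aubinTalentiBubble ε x := by
  have hN : (0 : ℝ) ≤ (finrank ℝ E : ℝ) - 2 := sub_nonneg.2 (by exact_mod_cast hE)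
  have hx := conformalFactor_nonneg hε x
  unfold aubinTalentiBubble
  positivity

theorem aubinTalentiBubble_rpow_criticalExponent (hE : 2 < finrank ℝ E) {ε : ℝ} (hε : 0 ≤ ε)
    (x : E) :
    aubinTalentiBubble ε x ^ criticalExponent E =
      ((finrank ℝ E : ℝ) * ((finrank ℝ E : ℝ) - 2)) ^ ((finrank ℝ E : ℝ) / 2) *
        conformalFactor ε x ^ finrank ℝ E := by
  have hN : (0 : ℝ) < (finrank ℝ E : ℝ) - 2 := sub_pos.2 (by exact_mod_cast hE)
  have hx := conformalFactor_nonneg hε x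
  have hleft : ((finrank ℝ E : ℝ) - 2) / 4 * criticalExponent E = (finrank ℝ E : ℝ) / 2 := by
    rw [criticalExponent]
    field_simp
    norm_num
  have hright : ((finrank ℝ E : ℝ) - 2) / 2 * criticalExponent E = finrank ℝ E := by
    rw [criticalExponent]
    field_simp
  rw [aubinTalentiBubble, Real.mul_rpow (by positivity) (by positivity),
    ← Real.rpow_mul (by positivity), ← Real.rpow_mul hx, hleft, hright, Real.rpow_natCast]

theorem aubinTalentiBubble_rpow_le_mul_of_le_norm (hE : 2 < finrank ℝ E) {ε ρ : ℝ} (hε : 0 ≤ ε)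
    (hρ : 0 < ρ) {x : E} (hx : ρ ≤ ‖x‖) :
    aubinTalentiBubble ε x ^ criticalExponent E ≤
      (2 * ε / ρ) ^ finrank ℝ E * aubinTalentiBubble ρ x ^ criticalExponent E := by
  have hN : (0 : ℝ) < (finrank ℝ E : ℝ) - 2 := sub_pos.2 (by exact_mod_cast hE)
  have hε0 := conformalFactor_nonneg hε x
  rw [aubinTalentiBubble_rpow_criticalExponent hE hε,
    aubinTalentiBubble_rpow_criticalExponent hE hρ.le, mul_left_comm, ← mul_pow]
  gcongr
  exact conformalFactor_le_mul_of_le_norm hε hρ hx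

variable [FiniteDimensional ℝ E] [MeasurableSpace E] [BorelSpace E] {μ : Measure E}
  [μ.IsAddHaarMeasure]

theorem integrable_aubinTalentiBubble_rpow (hE : 2 < finrank ℝ E) {ε : ℝ} (hε : 0 < ε) :
    Integrable (fun x : E => aubinTalentiBubble ε x ^ criticalExponent E) μ := by
  simp_rw [aubinTalentiBubble_rpow_criticalExponent hE hε.le]
  exact (integrable_conformalFactor_pow hε (by omega)).const_mul _

theorem integral_aubinTalentiBubble_rpow (hE : 2 < finrank ℝ E) {ε : ℝ} (hε : 0 < ε) :
    ∫ x : E, aubinTalentiBubble ε x ^ criticalExponent E ∂μ =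
      ∫ x : E, aubinTalentiBubble 1 x ^ criticalExponent E ∂μ := by
  simp_rw [aubinTalentiBubble_rpow_criticalExponent hE hε.le,
    aubinTalentiBubble_rpow_criticalExponent hE zero_le_one, integral_const_mul,
    integral_conformalFactor_pow_finrank hε]

theorem abs_integral_abs_mul_aubinTalentiBubble_rpow_sub_le (hE : 2 < finrank ℝ E) {φ : E → ℝ}
    (hφm : AEStronglyMeasurable φ μ) (hφ : ∀ x, |φ x| ≤ 1) {ρ : ℝ} (hρ : 0 < ρ)
    (hφ1 : ∀ x ∈ closedBall (0 : E) ρ, φ x = 1) {ε : ℝ} (hε : 0 < ε) :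
    |∫ x, |φ x * aubinTalentiBubble ε x| ^ criticalExponent E ∂μ -
        ∫ x : E, aubinTalentiBubble 1 x ^ criticalExponent E ∂μ| ≤
      (2 * ε / ρ) ^ finrank ℝ E * ∫ x : E, aubinTalentiBubble 1 x ^ criticalExponent E ∂μ := by
  have hp := criticalExponent_pos hE
  have hu0 {t : ℝ} (ht : 0 < t) (x : E) : 0 ≤ aubinTalentiBubble t x :=
    aubinTalentiBubble_nonneg hE.le ht.le x
  have hfactor (x : E) : |φ x * aubinTalentiBubble ε x| ^ criticalExponent E =
      |φ x| ^ criticalExponent E • aubinTalentiBubble ε x ^ criticalExponent E := by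
    rw [abs_mul, abs_of_nonneg (hu0 hε x), Real.mul_rpow (abs_nonneg _) (hu0 hε x), smul_eq_mul]
  have hcutoff :
      ‖∫ x, |φ x| ^ criticalExponent E • aubinTalentiBubble ε x ^ criticalExponent E ∂μ -
        ∫ x, aubinTalentiBubble ε x ^ criticalExponent E ∂μ‖ ≤
      ∫ x, (2 * ε / ρ) ^ finrank ℝ E * aubinTalentiBubble ρ x ^ criticalExponent E ∂μ := by
    refine norm_integral_smul_sub_integral_le (s := closedBall 0 ρ)
      ?measurable (fun x => ?range) (fun x hx => ?one)
      (integrable_aubinTalentiBubble_rpow hE hε)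
      ((integrable_aubinTalentiBubble_rpow hE hρ).const_mul _) (fun x _ => ?nonneg)
      (fun x hx => ?tail)
    case measurable =>
      exact (continuous_abs.rpow_const fun _ => .inr hp.le).comp_aestronglyMeasurable hφm
    case range => exact ⟨by positivity, Real.rpow_le_one (abs_nonneg _) (hφ x) hp.le⟩
    case one => rw [hφ1 x hx, abs_one, Real.one_rpow]
    case nonneg =>
      have := hu0 hρ x
      positivity
    case tail =>
      rw [mem_closedBall_zero_iff, not_le] at hx
      rw [Real.norm_of_nonneg (Real.rpow_nonneg (hu0 hε x) _)]
      exact aubinTalentiBubble_rpow_le_mul_of_le_norm hE hε.le hρ hx.le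
  simp_rw [hfactor]
  rwa [integral_const_mul, integral_aubinTalentiBubble_rpow hE hε,
    integral_aubinTalentiBubble_rpow hE hρ] at hcutoff

theorem stmt_7_general {N : ℕ} (hN : 3 ≤ N) (hE : finrank ℝ E = N) {u : ℝ → E → ℝ}
    (hu : ∀ ε : ℝ, 0 < ε → ∀ x : E,
      u ε x = ((N : ℝ) * ((N : ℝ) - 2)) ^ (((N : ℝ) - 2) / 4) *
        (ε / (ε ^ 2 + ‖x‖ ^ 2)) ^ (((N : ℝ) - 2) / 2))
    {Ω : Set E} {φ : E → ℝ} (hφm : AEStronglyMeasurable φ μ) (hφΩ : Function.support φ ⊆ Ω)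
    (hφ : ∀ x, |φ x| ≤ 1) {ρ : ℝ} (hρ : 0 < ρ) (hφ1 : ∀ x ∈ closedBall (0 : E) ρ, φ x = 1) :
    ∃ C : ℝ, 0 < C ∧ ∀ ε : ℝ, 0 < ε →
      |(∫ x in Ω, |φ x * u ε x| ^ (2 * (N : ℝ) / ((N : ℝ) - 2)) ∂μ) -
        ∫ x : E, u 1 x ^ (2 * (N : ℝ) / ((N : ℝ) - 2)) ∂μ| ≤ C * ε ^ N := by
  subst hE
  have hu' {ε : ℝ} (hε : 0 < ε) : u ε = aubinTalentiBubble ε := funext (hu ε hε)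
  change ∃ C : ℝ, 0 < C ∧ ∀ ε : ℝ, 0 < ε →
    |(∫ x in Ω, |φ x * u ε x| ^ criticalExponent E ∂μ) - ∫ x, u 1 x ^ criticalExponent E ∂μ| ≤
      C * ε ^ finrank ℝ E
  set K := ∫ x, u 1 x ^ criticalExponent E ∂μ with hK
  rw [hu' one_pos] at hK
  have hK0 : 0 ≤ K := hK ▸ integral_nonneg fun x =>
    Real.rpow_nonneg (aubinTalentiBubble_nonneg (by omega) zero_le_one x) _
  refine ⟨(2 / ρ) ^ finrank ℝ E * (K + 1), by positivity, fun ε hε => ?_⟩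
  have hΩ : ∀ x ∉ Ω, |φ x * u ε x| ^ criticalExponent E = 0 := fun x hx => by
    rw [Function.notMem_support.1 (mt (@hφΩ x) hx), zero_mul, abs_zero,
      Real.zero_rpow (criticalExponent_pos hN).ne']
  rw [setIntegral_eq_integral_of_forall_compl_eq_zero hΩ, hu' hε]
  calc _ ≤ (2 * ε / ρ) ^ finrank ℝ E * K :=
        hK ▸ abs_integral_abs_mul_aubinTalentiBubble_rpow_sub_le hN hφm hφ hρ hφ1 hε
    _ = (2 / ρ) ^ finrank ℝ E * K * ε ^ finrank ℝ E := by
        rw [mul_div_right_comm, mul_pow]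
        ring
    _ ≤ (2 / ρ) ^ finrank ℝ E * (K + 1) * ε ^ finrank ℝ E := by
        gcongr
        linarith

end Bubble

/-- Critical norm estimate (Lemma 3.1, second part): for `N ≥ 4`,
`∫_Ω |U_ε|^{2*} = S^{N/2} + O(ε^N)` as `ε → 0⁺`, where `2* = 2N/(N-2)`,
`U_ε = φ u_ε`, and `K'_N = ∫_{ℝ^N} u_1^{2*} = S^{N/2}`. -/
theorem stmt_7 (N : ℕ) (hN : 4 ≤ N)
    (u : ℝ → EuclideanSpace ℝ (Fin N) → ℝ)
    (hu : ∀ ε : ℝ, 0 < ε → ∀ x : EuclideanSpace ℝ (Fin N),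
      u ε x = ((N : ℝ) * ((N : ℝ) - 2)) ^ (((N : ℝ) - 2) / 4) *
        (ε / (ε ^ 2 + ‖x‖ ^ 2)) ^ (((N : ℝ) - 2) / 2))
    (Ω : Set (EuclideanSpace ℝ (Fin N))) (hΩo : IsOpen Ω)
    (hΩb : Bornology.IsBounded Ω) (h0Ω : (0 : EuclideanSpace ℝ (Fin N)) ∈ Ω)
    (φ : EuclideanSpace ℝ (Fin N) → ℝ) (hφs : ContDiff ℝ (⊤ : ℕ∞) φ)
    (hφc : HasCompactSupport φ) (hφΩ : tsupport φ ⊆ Ω)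
    (hφ01 : ∀ x, 0 ≤ φ x ∧ φ x ≤ 1)
    (ρ : ℝ) (hρ : 0 < ρ) (hball : Metric.closedBall 0 ρ ⊆ Ω)
    (hφ1 : ∀ x ∈ Metric.closedBall (0 : EuclideanSpace ℝ (Fin N)) ρ, φ x = 1) :
    ∃ C : ℝ, 0 < C ∧ ∃ ε₀ : ℝ, 0 < ε₀ ∧ ∀ ε ∈ Set.Ioo (0 : ℝ) ε₀,
      |(∫ x in Ω, |φ x * u ε x| ^ (2 * (N : ℝ) / ((N : ℝ) - 2))) -
        ∫ x : EuclideanSpace ℝ (Fin N), (u 1 x) ^ (2 * (N : ℝ) / ((N : ℝ) - 2))| ≤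
          C * ε ^ N := by
  obtain ⟨C, hC, hbound⟩ := stmt_7_general (μ := volume) (by omega) finrank_euclideanSpace_fin hu
    hφs.continuous.aestronglyMeasurable ((subset_tsupport φ).trans hφΩ)
    (fun x => abs_le.2 ⟨by linarith [(hφ01 x).1], (hφ01 x).2⟩) hρ hφ1
  exact ⟨C, hC, 1, one_pos, fun ε hε => hbound ε hε.1⟩
end

section
/- Let N = 4. With u_ε, Ω, φ, U_ε as in the context, there exist constants d > 0, C > 0 and ε₀ ∈ (0,1) such that for all ε ∈ (0, ε₀), |∫_Ω U_ε(x)² dx − d·ε²·log(1/ε)| ≤ C·ε². -/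
open MeasureTheory

/-!
Since `U_ε² = 8 ε² φ² / (ε² + |x|²)²`, the claim is that the integral of `φ² / (ε² + |x|²)²` equals
`4 |B₁| log (1 / ε) + O(1)`. On the ball of radius `ρ`, where `φ = 1`, polar coordinates reduce it
to `∫₀^ρ r³ / (ε² + r²)² dr`, which has an elementary primitive whose logarithm at `r = 0` is the
only unbounded contribution. Away from the ball `1 / (ε² + |x|²)²` is at most `1 / ρ⁴`, so there the
integral is bounded as soon as `φ²` is integrable.
-/

section

open Metric Module

lemma integral_pow_three_div_add_sq_sq {a : ℝ} (ha : 0 < a) (ρ : ℝ) :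
    ∫ r in (0 : ℝ)..ρ, r ^ 3 / (a + r ^ 2) ^ 2 =
      (Real.log (a + ρ ^ 2) - Real.log a + a / (a + ρ ^ 2) - 1) / 2 := by
  have hne (r : ℝ) : a + r ^ 2 ≠ 0 := by positivity
  have hderiv (r : ℝ) :
      HasDerivAt (fun r : ℝ ↦ (Real.log (a + r ^ 2) + a / (a + r ^ 2)) / 2)
        (r ^ 3 / (a + r ^ 2) ^ 2) r := by
    have hsq : HasDerivAt (fun r : ℝ ↦ a + r ^ 2) (2 * r) r := by
      simpa using (hasDerivAt_pow 2 r).const_add a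
    refine (((hsq.log (hne r)).add
      ((hasDerivAt_const r a).div hsq (hne r))).div_const 2).congr_deriv ?_
    field [hne r]
  have hcont : Continuous fun r : ℝ ↦ r ^ 3 / (a + r ^ 2) ^ 2 :=
    (continuous_id.pow 3).div (by fun_prop) fun r ↦ pow_ne_zero 2 (hne r)
  rw [intervalIntegral.integral_eq_sub_of_hasDerivAt (fun r _ ↦ hderiv r)
    (hcont.intervalIntegrable 0 ρ)]
  simp only [ne_eq, OfNat.ofNat_ne_zero, not_false_eq_true, zero_pow, add_zero, div_self ha.ne']
  ring

lemma abs_integral_pow_three_div_add_sq_sq_sub_log_le {ε ρ : ℝ} (hε : ε ∈ Set.Ioo (0 : ℝ) 1)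
    (hρ : 0 < ρ) :
    |(∫ r in (0 : ℝ)..ρ, r ^ 3 / (ε ^ 2 + r ^ 2) ^ 2) - Real.log (1 / ε)| ≤
      |Real.log ρ| + Real.log (1 + ρ ^ 2) + 1 := by
  obtain ⟨hε0, hε1⟩ := hε
  have hlog_lower : 2 * Real.log ρ ≤ Real.log (ε ^ 2 + ρ ^ 2) := by
    rw [← Nat.cast_ofNat, ← Real.log_pow]
    exact Real.log_le_log (by positivity) (by nlinarith)
  have hlog_upper : Real.log (ε ^ 2 + ρ ^ 2) ≤ Real.log (1 + ρ ^ 2) :=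
    Real.log_le_log (by positivity) (by nlinarith)
  have hfrac_nonneg : 0 ≤ ε ^ 2 / (ε ^ 2 + ρ ^ 2) := by positivity
  have hfrac_le_one : ε ^ 2 / (ε ^ 2 + ρ ^ 2) ≤ 1 :=
    div_le_one_of_le₀ (by nlinarith) (by positivity)
  have hlog_nonneg : 0 ≤ Real.log (1 + ρ ^ 2) := Real.log_nonneg (by nlinarith)
  rw [integral_pow_three_div_add_sq_sq (by positivity), one_div, Real.log_inv, Real.log_pow,
    Nat.cast_ofNat, abs_le]
  constructor <;> linarith [neg_abs_le (Real.log ρ), abs_nonneg (Real.log ρ)]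

section NormedSpace

variable {E : Type*} [NormedAddCommGroup E] [NormedSpace ℝ E] [MeasurableSpace E] [BorelSpace E]

lemma setIntegral_closedBall_fun_norm_addHaar {F : Type*} [NormedAddCommGroup F] [NormedSpace ℝ F]
    [FiniteDimensional ℝ E] [Nontrivial E] (μ : Measure E) [μ.IsAddHaarMeasure]
    {ρ : ℝ} (hρ : 0 ≤ ρ) (f : ℝ → F) :
    ∫ x in closedBall (0 : E) ρ, f ‖x‖ ∂μ =
      finrank ℝ E • μ.real (ball 0 1) • ∫ r in (0 : ℝ)..ρ, r ^ (finrank ℝ E - 1) • f r := by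
  have hball : (closedBall (0 : E) ρ).indicator (fun x ↦ f ‖x‖) =
      fun x ↦ (Set.Iic ρ).indicator f ‖x‖ := by
    ext x
    simp only [Set.indicator, mem_closedBall_zero_iff, Set.mem_Iic]
  rw [← integral_indicator isClosed_closedBall.measurableSet, hball, integral_fun_norm_addHaar,
    intervalIntegral.integral_of_le hρ, ← Set.Ioi_inter_Iic,
    ← setIntegral_indicator measurableSet_Iic]
  simp only [Set.indicator_smul]

lemma abs_setIntegral_closedBall_div_add_norm_sq_sq_sub_log_le (hE : finrank ℝ E = 4)
    (μ : Measure E) [μ.IsAddHaarMeasure] {ε ρ : ℝ} (hε : ε ∈ Set.Ioo (0 : ℝ) 1) (hρ : 0 < ρ) :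
    |(∫ x in closedBall (0 : E) ρ, 1 / (ε ^ 2 + ‖x‖ ^ 2) ^ 2 ∂μ) -
        4 * μ.real (ball (0 : E) 1) * Real.log (1 / ε)| ≤
      4 * μ.real (ball (0 : E) 1) * (|Real.log ρ| + Real.log (1 + ρ ^ 2) + 1) := by
  have : FiniteDimensional ℝ E := .of_finrank_eq_succ hE
  have : Nontrivial E := nontrivial_of_finrank_eq_succ hE
  rw [setIntegral_closedBall_fun_norm_addHaar μ hρ.le (fun r ↦ 1 / (ε ^ 2 + r ^ 2) ^ 2), hE]
  simp only [Nat.reduceSub, smul_eq_mul, nsmul_eq_mul, Nat.cast_ofNat, mul_one_div]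
  rw [← mul_assoc, ← mul_sub, abs_mul, abs_of_nonneg (by positivity)]
  gcongr
  exact abs_integral_pow_three_div_add_sq_sq_sub_log_le hε hρ

end NormedSpace

section Weight

variable {E : Type*} [NormedAddCommGroup E] [MeasurableSpace E] [BorelSpace E]
  {ν : Measure E} {w : E → ℝ}

lemma integrable_div_add_norm_sq_sq (hw : Integrable w ν) {a : ℝ} (ha : 0 < a) :
    Integrable (fun x ↦ w x / (a + ‖x‖ ^ 2) ^ 2) ν := by
  have hcont : Continuous fun x : E ↦ ((a + ‖x‖ ^ 2) ^ 2)⁻¹ :=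
    Continuous.inv₀ (by fun_prop) fun x ↦ by positivity
  refine hw.mul_bdd (c := (a ^ 2)⁻¹) hcont.aestronglyMeasurable (.of_forall fun x ↦ ?_)
  rw [Real.norm_of_nonneg (by positivity)]
  gcongr
  exact le_add_of_nonneg_right (by positivity)

lemma norm_setIntegral_compl_closedBall_div_add_norm_sq_sq_le (hw : Integrable w ν) {a ρ : ℝ}
    (ha : 0 ≤ a) (hρ : 0 < ρ) :
    ‖∫ x in (closedBall (0 : E) ρ)ᶜ, w x / (a + ‖x‖ ^ 2) ^ 2 ∂ν‖ ≤ (∫ x, ‖w x‖ ∂ν) / ρ ^ 4 := by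
  calc ‖∫ x in (closedBall (0 : E) ρ)ᶜ, w x / (a + ‖x‖ ^ 2) ^ 2 ∂ν‖
      ≤ ∫ x in (closedBall (0 : E) ρ)ᶜ, ‖w x‖ / ρ ^ 4 ∂ν := by
        refine norm_integral_le_of_norm_le (hw.norm.div_const _).integrableOn
          (ae_restrict_of_forall_mem isClosed_closedBall.measurableSet.compl fun x hx ↦ ?_)
        have hx : ρ < ‖x‖ := by simpa using hx
        have hden : ρ ^ 4 ≤ (a + ‖x‖ ^ 2) ^ 2 :=
          calc ρ ^ 4 = (ρ ^ 2) ^ 2 := by ring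
            _ ≤ (a + ‖x‖ ^ 2) ^ 2 := by gcongr; nlinarith
        rw [norm_div, Real.norm_of_nonneg (sq_nonneg (a + ‖x‖ ^ 2))]
        gcongr
    _ ≤ ∫ x, ‖w x‖ / ρ ^ 4 ∂ν :=
        setIntegral_le_integral (hw.norm.div_const _) (.of_forall fun x ↦ by positivity)
    _ = (∫ x, ‖w x‖ ∂ν) / ρ ^ 4 := integral_div _ _

end Weight

section FourDimensional

variable {E : Type*} [NormedAddCommGroup E] [NormedSpace ℝ E] [MeasurableSpace E] [BorelSpace E]
  {μ : Measure E} [μ.IsAddHaarMeasure] {Ω : Set E} {ρ : ℝ}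

theorem abs_setIntegral_div_add_norm_sq_sq_sub_log_le (hE : finrank ℝ E = 4) {w : E → ℝ}
    (hw : IntegrableOn w Ω μ) (hρ : 0 < ρ) (hball : closedBall 0 ρ ⊆ Ω)
    (hw1 : ∀ x ∈ closedBall (0 : E) ρ, w x = 1) {ε : ℝ} (hε : ε ∈ Set.Ioo (0 : ℝ) 1) :
    |(∫ x in Ω, w x / (ε ^ 2 + ‖x‖ ^ 2) ^ 2 ∂μ) -
        4 * μ.real (ball (0 : E) 1) * Real.log (1 / ε)| ≤
      4 * μ.real (ball (0 : E) 1) * (|Real.log ρ| + Real.log (1 + ρ ^ 2) + 1) +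
        (∫ x in Ω, ‖w x‖ ∂μ) / ρ ^ 4 := by
  have hmeas : MeasurableSet (closedBall (0 : E) ρ) := isClosed_closedBall.measurableSet
  have hε2 : 0 < ε ^ 2 := pow_pos hε.1 2
  have hinner : ∫ x in closedBall (0 : E) ρ, w x / (ε ^ 2 + ‖x‖ ^ 2) ^ 2 ∂(μ.restrict Ω) =
      ∫ x in closedBall (0 : E) ρ, 1 / (ε ^ 2 + ‖x‖ ^ 2) ^ 2 ∂μ := by
    rw [Measure.restrict_restrict hmeas, Set.inter_eq_left.mpr hball]
    exact setIntegral_congr_fun hmeas fun x hx ↦ by simp only [hw1 x hx]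
  rw [← integral_add_compl hmeas (integrable_div_add_norm_sq_sq hw hε2), hinner, add_sub_right_comm]
  exact (abs_add_le _ _).trans (add_le_add
    (abs_setIntegral_closedBall_div_add_norm_sq_sq_sub_log_le hE μ hε hρ)
    (norm_setIntegral_compl_closedBall_div_add_norm_sq_sq_le hw hε2.le hρ))

theorem stmt_8_general (hE : finrank ℝ E = 4) {u : ℝ → E → ℝ}
    (hu : ∀ ε : ℝ, 0 < ε → ∀ x : E, u ε x = Real.sqrt 8 * ε / (ε ^ 2 + ‖x‖ ^ 2))
    {φ : E → ℝ} (hφ : MemLp φ 2 (μ.restrict Ω)) (hρ : 0 < ρ) (hball : closedBall 0 ρ ⊆ Ω)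
    (hφ1 : ∀ x ∈ closedBall (0 : E) ρ, φ x = 1) :
    ∃ d : ℝ, 0 < d ∧ ∃ C : ℝ, 0 < C ∧ ∃ ε₀ ∈ Set.Ioo (0 : ℝ) 1,
      ∀ ε ∈ Set.Ioo (0 : ℝ) ε₀,
        |(∫ x in Ω, (φ x * u ε x) ^ 2 ∂μ) - d * ε ^ 2 * Real.log (1 / ε)| ≤ C * ε ^ 2 := by
  have : FiniteDimensional ℝ E := .of_finrank_eq_succ hE
  set V := μ.real (ball (0 : E) 1)
  have hV : 0 < V := ENNReal.toReal_pos (measure_ball_pos μ 0 one_pos).ne' measure_ball_lt_top.ne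
  set K := 4 * V * (|Real.log ρ| + Real.log (1 + ρ ^ 2) + 1) + (∫ x in Ω, ‖φ x ^ 2‖ ∂μ) / ρ ^ 4
  have hK : 0 < K := by
    have : 0 ≤ Real.log (1 + ρ ^ 2) := Real.log_nonneg (by nlinarith)
    positivity
  refine ⟨32 * V, by positivity, 8 * K, by positivity, 1 / 2, by norm_num, fun ε ⟨hε0, hε⟩ ↦ ?_⟩
  have hsq (x : E) : (φ x * u ε x) ^ 2 = 8 * ε ^ 2 * (φ x ^ 2 / (ε ^ 2 + ‖x‖ ^ 2) ^ 2) := by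
    rw [hu ε hε0, mul_pow, div_pow, mul_pow, Real.sq_sqrt (by norm_num)]
    ring
  simp only [hsq, integral_const_mul]
  calc |8 * ε ^ 2 * (∫ x in Ω, φ x ^ 2 / (ε ^ 2 + ‖x‖ ^ 2) ^ 2 ∂μ) -
        32 * V * ε ^ 2 * Real.log (1 / ε)|
      = |8 * ε ^ 2 * ((∫ x in Ω, φ x ^ 2 / (ε ^ 2 + ‖x‖ ^ 2) ^ 2 ∂μ) -
          4 * V * Real.log (1 / ε))| := by ring_nf
    _ = 8 * ε ^ 2 * |(∫ x in Ω, φ x ^ 2 / (ε ^ 2 + ‖x‖ ^ 2) ^ 2 ∂μ) -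
          4 * V * Real.log (1 / ε)| := by rw [abs_mul, abs_of_nonneg (by positivity)]
    _ ≤ 8 * ε ^ 2 * K := by
        gcongr
        exact abs_setIntegral_div_add_norm_sq_sq_sub_log_le hE hφ.integrable_sq hρ hball
          (fun x hx ↦ by rw [hφ1 x hx, one_pow]) ⟨hε0, by linarith⟩
    _ = 8 * K * ε ^ 2 := by ring

end FourDimensional

end

/-- `L²` estimate for `N = 4` (Lemma 3.1, third part): `∫_Ω U_ε² = d ε² log(1/ε) + O(ε²)`
as `ε → 0⁺`, where `U_ε = φ u_ε` with `u_ε(x) = √8 ε/(ε² + |x|²)`. -/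
theorem stmt_8
    (u : ℝ → EuclideanSpace ℝ (Fin 4) → ℝ)
    (hu : ∀ ε : ℝ, 0 < ε → ∀ x : EuclideanSpace ℝ (Fin 4),
      u ε x = Real.sqrt 8 * ε / (ε ^ 2 + ‖x‖ ^ 2))
    (Ω : Set (EuclideanSpace ℝ (Fin 4))) (hΩo : IsOpen Ω)
    (hΩb : Bornology.IsBounded Ω) (h0Ω : (0 : EuclideanSpace ℝ (Fin 4)) ∈ Ω)
    (φ : EuclideanSpace ℝ (Fin 4) → ℝ) (hφs : ContDiff ℝ (⊤ : ℕ∞) φ)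
    (hφc : HasCompactSupport φ) (hφΩ : tsupport φ ⊆ Ω)
    (hφ01 : ∀ x, 0 ≤ φ x ∧ φ x ≤ 1)
    (ρ : ℝ) (hρ : 0 < ρ) (hball : Metric.closedBall 0 ρ ⊆ Ω)
    (hφ1 : ∀ x ∈ Metric.closedBall (0 : EuclideanSpace ℝ (Fin 4)) ρ, φ x = 1) :
    ∃ d : ℝ, 0 < d ∧ ∃ C : ℝ, 0 < C ∧ ∃ ε₀ ∈ Set.Ioo (0 : ℝ) 1,
      ∀ ε ∈ Set.Ioo (0 : ℝ) ε₀,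
        |(∫ x in Ω, (φ x * u ε x) ^ 2) - d * ε ^ 2 * Real.log (1 / ε)| ≤ C * ε ^ 2 := by
  exact stmt_8_general finrank_euclideanSpace_fin hu
    ((hφs.continuous.memLp_of_hasCompactSupport hφc).restrict Ω) hρ hball hφ1
end

section
/- Let N ≥ 5 be an integer. With u_ε, Ω, φ, U_ε as in the context, there exist constants d > 0, C > 0 and ε₀ > 0 such that for all ε ∈ (0, ε₀), |∫_Ω U_ε(x)² dx − d·ε²| ≤ C·ε^{N−2}. -/
open MeasureTheory

/-! With `K_ε(x) = ε / (ε² + ‖x‖²)`, the squared bubble is a constant times `K_ε ^ (N - 2)`.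
Scaling `x = ε y` turns its integral over the whole space into `ε²` times the integral at `ε = 1`,
which is finite because `N < 2 (N - 2)`. The cutoff only alters the integrand where
`‖x‖ > ρ`, and there `K_ε ≤ (1 + ρ⁻²) ε K_1`, so the error is at most a constant times
`ε ^ (N - 2)`. -/

section Cutoff

variable {α : Type*} [MeasurableSpace α] {μ : Measure α} {f g η : α → ℝ}

lemma integrable_mul_of_mem_Icc_zero_one (hf : Integrable f μ) (hη : AEStronglyMeasurable η μ)
    (hη01 : ∀ x, η x ∈ Set.Icc 0 1) : Integrable (fun x => η x * f x) μ :=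
  hf.bdd_mul hη <| .of_forall fun x => by
    rw [Real.norm_of_nonneg (hη01 x).1]
    exact (hη01 x).2

lemma abs_integral_mul_sub_integral_le (hf : Integrable f μ) (hg : Integrable g μ)
    (hg0 : ∀ x, 0 ≤ g x) (hη : AEStronglyMeasurable η μ) (hη01 : ∀ x, η x ∈ Set.Icc 0 1)
    (hfg : ∀ x, η x ≠ 1 → |f x| ≤ g x) :
    |∫ x, η x * f x ∂μ - ∫ x, f x ∂μ| ≤ ∫ x, g x ∂μ := by
  rw [← integral_sub (integrable_mul_of_mem_Icc_zero_one hf hη hη01) hf, ← Real.norm_eq_abs]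
  refine norm_integral_le_of_norm_le hg (.of_forall fun x => ?_)
  by_cases hx : η x = 1
  · simpa [hx] using hg0 x
  · calc ‖η x * f x - f x‖ = |η x - 1| * |f x| := by rw [← sub_one_mul, Real.norm_eq_abs, abs_mul]
      _ ≤ 1 * |f x| := by
        gcongr
        exact abs_le.2 ⟨by linarith [(hη01 x).1], by linarith [(hη01 x).2]⟩
      _ ≤ g x := by simpa using hfg x hx

end Cutoff

section Kernel

variable {E : Type*} [NormedAddCommGroup E] {ε ρ s : ℝ}

/-- The radial profile `ε / (ε² + ‖x‖²)`. The Aubin–Talenti bubble in dimension `N` is a constant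
times its power of exponent `(N - 2) / 2`. -/
noncomputable def bubbleKernel (ε : ℝ) (x : E) : ℝ := ε / (ε ^ 2 + ‖x‖ ^ 2)

lemma bubbleKernel_pos (hε : 0 < ε) (x : E) : 0 < bubbleKernel ε x := by
  unfold bubbleKernel
  positivity

lemma bubbleKernel_le_mul_bubbleKernel_one (hε : 0 ≤ ε) (hρ : 0 < ρ) {x : E} (hx : ρ ≤ ‖x‖) :
    bubbleKernel ε x ≤ (1 + (ρ ^ 2)⁻¹) * ε * bubbleKernel 1 x := by
  have hx0 : 0 < ‖x‖ := hρ.trans_le hx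
  have one_add_sq_le : 1 + ‖x‖ ^ 2 ≤ (1 + (ρ ^ 2)⁻¹) * ‖x‖ ^ 2 := by
    have : 1 ≤ (ρ ^ 2)⁻¹ * ‖x‖ ^ 2 := by
      rw [inv_mul_eq_div, one_le_div (by positivity)]
      gcongr
    linarith
  calc bubbleKernel ε x ≤ ε / ‖x‖ ^ 2 := by
        unfold bubbleKernel
        gcongr
        exact le_add_of_nonneg_left (sq_nonneg ε)
    _ ≤ ε * ((1 + (ρ ^ 2)⁻¹) / (1 + ‖x‖ ^ 2)) := by
        rw [div_eq_mul_one_div]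
        gcongr ε * ?_
        rw [div_le_div_iff₀ (by positivity) (by positivity)]
        linarith
    _ = (1 + (ρ ^ 2)⁻¹) * ε * bubbleKernel 1 x := by
        rw [bubbleKernel]
        ring

lemma sq_mul_mul_bubbleKernel_rpow (hε : 0 < ε) (a c : ℝ) (x : E) :
    (c * (a * bubbleKernel ε x ^ (s / 2))) ^ 2 = a ^ 2 * (c ^ 2 * bubbleKernel ε x ^ s) := by
  have half_rpow_sq : (bubbleKernel ε x ^ (s / 2)) ^ 2 = bubbleKernel ε x ^ s := by
    rw [← Real.rpow_mul_natCast (bubbleKernel_pos hε x).le, Nat.cast_two,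
      div_mul_cancel₀ s two_ne_zero]
  rw [mul_pow, mul_pow, half_rpow_sq, mul_left_comm]

variable [NormedSpace ℝ E]

lemma bubbleKernel_eq_inv_mul_bubbleKernel_one (hε : 0 < ε) (x : E) :
    bubbleKernel ε x = ε⁻¹ * bubbleKernel 1 (ε⁻¹ • x) := by
  rw [bubbleKernel, bubbleKernel, norm_smul, Real.norm_of_nonneg (by positivity)]
  field_simp

lemma bubbleKernel_rpow_eq_inv_mul (hε : 0 < ε) (x : E) :
    bubbleKernel ε x ^ s = (ε ^ s)⁻¹ * bubbleKernel 1 (ε⁻¹ • x) ^ s := by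
  rw [bubbleKernel_eq_inv_mul_bubbleKernel_one hε, Real.mul_rpow (inv_nonneg.2 hε.le)
    (bubbleKernel_pos one_pos _).le, Real.inv_rpow hε.le]

variable [FiniteDimensional ℝ E] [MeasurableSpace E] [BorelSpace E]
  (μ : Measure E) [μ.IsAddHaarMeasure]

lemma integrable_bubbleKernel_one_rpow (hs : Module.finrank ℝ E < 2 * s) :
    Integrable (fun x : E => bubbleKernel 1 x ^ s) μ := by
  refine (integrable_rpow_neg_one_add_norm_sq hs).congr (.of_forall fun x => ?_)
  have : (0 : ℝ) ≤ 1 + ‖x‖ ^ 2 := by positivity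
  simp only [bubbleKernel, one_pow, one_div, neg_div, Real.rpow_neg this, Real.inv_rpow this,
    mul_div_cancel_left₀ s two_ne_zero]

lemma integrable_bubbleKernel_rpow (hs : Module.finrank ℝ E < 2 * s) (hε : 0 < ε) :
    Integrable (fun x : E => bubbleKernel ε x ^ s) μ := by
  simp_rw [bubbleKernel_rpow_eq_inv_mul hε]
  exact ((integrable_bubbleKernel_one_rpow μ hs).comp_smul (inv_ne_zero hε.ne')).const_mul _

lemma integral_bubbleKernel_rpow_pos (hs : Module.finrank ℝ E < 2 * s) (hε : 0 < ε) :
    0 < ∫ x : E, bubbleKernel ε x ^ s ∂μ := by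
  have hpos (x : E) : 0 < bubbleKernel ε x ^ s := Real.rpow_pos_of_pos (bubbleKernel_pos hε x) s
  rw [integral_pos_iff_support_of_nonneg (fun x => (hpos x).le)
    (integrable_bubbleKernel_rpow μ hs hε), Function.support_eq_univ fun x => (hpos x).ne']
  exact isOpen_univ.measure_pos μ Set.univ_nonempty

lemma integral_bubbleKernel_rpow (hε : 0 < ε) :
    ∫ x : E, bubbleKernel ε x ^ s ∂μ =
      (∫ x : E, bubbleKernel 1 x ^ s ∂μ) * ε ^ (Module.finrank ℝ E - s) := by
  simp_rw [bubbleKernel_rpow_eq_inv_mul hε]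
  rw [integral_const_mul, Measure.integral_comp_inv_smul_of_nonneg μ
    (fun x : E => bubbleKernel 1 x ^ s) hε.le, smul_eq_mul, Real.rpow_sub hε, Real.rpow_natCast]
  ring

lemma abs_integral_mul_bubbleKernel_rpow_sub_le {η : E → ℝ} (hs : Module.finrank ℝ E < 2 * s)
    (hε : 0 < ε) (hρ : 0 < ρ) (hη : AEStronglyMeasurable η μ)
    (hη01 : ∀ x, η x ∈ Set.Icc 0 1) (hη1 : ∀ x ∈ Metric.closedBall 0 ρ, η x = 1) :
    |∫ x, η x * bubbleKernel ε x ^ s ∂μ -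
        (∫ x : E, bubbleKernel 1 x ^ s ∂μ) * ε ^ (Module.finrank ℝ E - s)| ≤
      ((1 + (ρ ^ 2)⁻¹) ^ s * ∫ x : E, bubbleKernel 1 x ^ s ∂μ) * ε ^ s := by
  have hs0 : 0 ≤ s := by linarith [(Module.finrank ℝ E).cast_nonneg (α := ℝ)]
  rw [← integral_bubbleKernel_rpow μ hε, mul_right_comm, ← integral_const_mul]
  refine abs_integral_mul_sub_integral_le (integrable_bubbleKernel_rpow μ hs hε)
    ((integrable_bubbleKernel_one_rpow μ hs).const_mul _)
    (fun x => mul_nonneg (by positivity) (Real.rpow_nonneg (bubbleKernel_pos one_pos x).le s))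
    hη hη01 fun x hx => ?_
  have hρx : ρ ≤ ‖x‖ := by
    by_contra! h
    exact hx (hη1 x (mem_closedBall_zero_iff.2 h.le))
  have hK := (bubbleKernel_pos hε x).le
  rw [abs_of_nonneg (Real.rpow_nonneg hK s), ← Real.mul_rpow (by positivity) hε.le,
    ← Real.mul_rpow (by positivity) (bubbleKernel_pos one_pos x).le]
  exact Real.rpow_le_rpow hK (bubbleKernel_le_mul_bubbleKernel_one hε.le hρ hρx) hs0

lemma abs_setIntegral_sq_mul_bubbleKernel_rpow_sub_le {Ω : Set E} {φ : E → ℝ} (a : ℝ)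
    (hs : Module.finrank ℝ E < 2 * s) (hε : 0 < ε) (hρ : 0 < ρ) (hφ : AEStronglyMeasurable φ μ)
    (hφΩ : Function.support φ ⊆ Ω) (hφ_le : ∀ x, |φ x| ≤ 1)
    (hφ1 : ∀ x ∈ Metric.closedBall 0 ρ, φ x = 1) :
    |∫ x in Ω, (φ x * (a * bubbleKernel ε x ^ (s / 2))) ^ 2 ∂μ -
        a ^ 2 * (∫ x : E, bubbleKernel 1 x ^ s ∂μ) * ε ^ (Module.finrank ℝ E - s)| ≤
      a ^ 2 * ((1 + (ρ ^ 2)⁻¹) ^ s * ∫ x : E, bubbleKernel 1 x ^ s ∂μ) * ε ^ s := by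
  have hbound := abs_integral_mul_bubbleKernel_rpow_sub_le (η := fun x => φ x ^ 2) μ hs hε hρ
    (hφ.pow 2) (fun x => ⟨sq_nonneg _, (sq_le_one_iff_abs_le_one _).2 (hφ_le x)⟩)
    (fun x hx => by rw [hφ1 x hx, one_pow])
  have hΩ : ∀ x ∉ Ω, (φ x * (a * bubbleKernel ε x ^ (s / 2))) ^ 2 = 0 := fun x hx => by
    rw [Function.notMem_support.1 (fun h => hx (hφΩ h)), zero_mul, zero_pow two_ne_zero]
  rw [setIntegral_eq_integral_of_forall_compl_eq_zero hΩ]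
  simp_rw [sq_mul_mul_bubbleKernel_rpow hε]
  rw [integral_const_mul, mul_assoc, ← mul_sub, abs_mul, abs_sq, mul_assoc]
  exact mul_le_mul_of_nonneg_left hbound (sq_nonneg a)

end Kernel

theorem stmt_9_general {E : Type*} [NormedAddCommGroup E] [NormedSpace ℝ E]
    [FiniteDimensional ℝ E] [MeasurableSpace E] [BorelSpace E]
    (μ : Measure E) [μ.IsAddHaarMeasure]
    (N : ℕ) (hE : Module.finrank ℝ E = N) (hN : 5 ≤ N)
    (u : ℝ → E → ℝ)
    (hu : ∀ ε : ℝ, 0 < ε → ∀ x : E,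
      u ε x = ((N : ℝ) * ((N : ℝ) - 2)) ^ (((N : ℝ) - 2) / 4) *
        (ε / (ε ^ 2 + ‖x‖ ^ 2)) ^ (((N : ℝ) - 2) / 2))
    (Ω : Set E) (φ : E → ℝ) (hφ : AEStronglyMeasurable φ μ) (hφΩ : Function.support φ ⊆ Ω)
    (hφ_le : ∀ x, |φ x| ≤ 1) (ρ : ℝ) (hρ : 0 < ρ)
    (hφ1 : ∀ x ∈ Metric.closedBall (0 : E) ρ, φ x = 1) :
    ∃ d : ℝ, 0 < d ∧ ∃ C : ℝ, 0 < C ∧ ∀ ε : ℝ, 0 < ε →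
      |(∫ x in Ω, (φ x * u ε x) ^ 2 ∂μ) - d * ε ^ 2| ≤ C * ε ^ (N - 2) := by
  have hN5 : (5 : ℝ) ≤ N := by exact_mod_cast hN
  set s : ℝ := N - 2 with hs_def
  set a : ℝ := (N * s) ^ (s / 4)
  have hs : Module.finrank ℝ E < 2 * s := by rw [hE]; linarith
  have ha : 0 < a := Real.rpow_pos_of_pos (mul_pos (by linarith) (by linarith)) _
  have hM := integral_bubbleKernel_rpow_pos μ hs one_pos
  refine ⟨a ^ 2 * ∫ x : E, bubbleKernel 1 x ^ s ∂μ, mul_pos (by positivity) hM,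
    a ^ 2 * ((1 + (ρ ^ 2)⁻¹) ^ s * ∫ x : E, bubbleKernel 1 x ^ s ∂μ),
    mul_pos (by positivity) (mul_pos (by positivity) hM), fun ε hε => ?_⟩
  have hu_kernel : u ε = fun x => a * bubbleKernel ε x ^ (s / 2) := funext (hu ε hε)
  have hmain : ε ^ (Module.finrank ℝ E - s) = ε ^ 2 := by
    rw [hE, hs_def, sub_sub_cancel, Real.rpow_two]
  have herror : ε ^ s = ε ^ (N - 2) := by
    rw [← Real.rpow_natCast, Nat.cast_sub (by lia), Nat.cast_two]
  rw [hu_kernel, ← hmain, ← herror]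
  exact abs_setIntegral_sq_mul_bubbleKernel_rpow_sub_le μ a hs hε hρ hφ hφΩ hφ_le hφ1

/-- `L²` estimate for `N ≥ 5` (Lemma 3.1, third part): `∫_Ω U_ε² = d ε² + O(ε^{N-2})`
as `ε → 0⁺`, where `U_ε = φ u_ε` is the cut-off Aubin–Talenti bubble. -/
theorem stmt_9 (N : ℕ) (hN : 5 ≤ N)
    (u : ℝ → EuclideanSpace ℝ (Fin N) → ℝ)
    (hu : ∀ ε : ℝ, 0 < ε → ∀ x : EuclideanSpace ℝ (Fin N),
      u ε x = ((N : ℝ) * ((N : ℝ) - 2)) ^ (((N : ℝ) - 2) / 4) *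
        (ε / (ε ^ 2 + ‖x‖ ^ 2)) ^ (((N : ℝ) - 2) / 2))
    (Ω : Set (EuclideanSpace ℝ (Fin N))) (hΩo : IsOpen Ω)
    (hΩb : Bornology.IsBounded Ω) (h0Ω : (0 : EuclideanSpace ℝ (Fin N)) ∈ Ω)
    (φ : EuclideanSpace ℝ (Fin N) → ℝ) (hφs : ContDiff ℝ (⊤ : ℕ∞) φ)
    (hφc : HasCompactSupport φ) (hφΩ : tsupport φ ⊆ Ω)
    (hφ01 : ∀ x, 0 ≤ φ x ∧ φ x ≤ 1)
    (ρ : ℝ) (hρ : 0 < ρ) (hball : Metric.closedBall 0 ρ ⊆ Ω)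
    (hφ1 : ∀ x ∈ Metric.closedBall (0 : EuclideanSpace ℝ (Fin N)) ρ, φ x = 1) :
    ∃ d : ℝ, 0 < d ∧ ∃ C : ℝ, 0 < C ∧ ∃ ε₀ : ℝ, 0 < ε₀ ∧
      ∀ ε ∈ Set.Ioo (0 : ℝ) ε₀,
        |(∫ x in Ω, (φ x * u ε x) ^ 2) - d * ε ^ 2| ≤ C * ε ^ (N - 2) := by
  obtain ⟨d, hd, C, hC, hbound⟩ := stmt_9_general volume N finrank_euclideanSpace_fin hN u hu Ω φ
    hφs.continuous.aestronglyMeasurable ((subset_tsupport φ).trans hφΩ)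
    (fun x => abs_le.2 ⟨by linarith [(hφ01 x).1], (hφ01 x).2⟩) ρ hρ hφ1
  exact ⟨d, hd, C, hC, 1, one_pos, fun ε hε => hbound ε hε.1⟩
end

section
/- Let N ≥ 5 be an integer. With u_ε, Ω, φ, U_ε as in the context, there exist constants C₀ > 0, C > 0 and ε₀ ∈ (0,1) such that for all ε ∈ (0, ε₀), |∫_Ω U_ε(x)²·log(U_ε(x)²) dx − C₀·ε²·log(1/ε)| ≤ C·ε², with the convention 0·log 0 = 0. -/
open MeasureTheory

/-!
The squared bubble is the dilate `ε ^ (-p) * V (x / ε)` of one fixed profile `V`, with `p = N - 2`.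
Since `x ↦ x * log x` turns products into sums, with no positivity assumption, the product
`f * ε ^ (-p) * V (x / ε)`, where `f = φ ^ 2`, has entropy density
`p * log (1 / ε) * ε ^ (-p) * V (x / ε)` plus a remainder. The only dangerous remainder is
`p * log (1 / ε) * (1 - f)`; but `f ≠ 1` forces `‖x‖ > ρ`, and then `y = x / ε` satisfies
`1 / ε < ‖y‖ / ρ`, so the logarithm of `1 / ε` is absorbed by a logarithmic moment of `V`.
Scaling back, the remainder costs `O(ε ^ (N - p)) = O(ε ^ 2)`, and the moments of `V` are finite
precisely when `N > 4`.
-/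

open Module Real

section EntropyDensity

lemma mul_mul_log_mul (x y : ℝ) :
    x * y * log (x * y) = y * (x * log x) + x * (y * log y) := by
  have h := negMulLog_mul x y
  simp only [negMulLog] at h
  linarith

lemma abs_mul_log_self_le_one {x : ℝ} (hx₀ : 0 ≤ x) (hx₁ : x ≤ 1) : |x * log x| ≤ 1 :=
  abs_le.2 ⟨by linarith [self_sub_one_le_mul_log hx₀], by linarith [mul_log_nonpos hx₀ hx₁]⟩

lemma log_inv_le_log_one_add_sq {ε ρ r : ℝ} (hε : 0 < ε) (hρ : 0 < ρ) (h : ρ ≤ ε * r) :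
    log ε⁻¹ ≤ log (1 + r ^ 2) + |log ρ| := by
  have hinv : ε⁻¹ ≤ (1 + r ^ 2) / ρ := by
    rw [le_div_iff₀ hρ, inv_mul_le_iff₀ hε]
    nlinarith [sq_nonneg (r - 1)]
  calc log ε⁻¹ ≤ log ((1 + r ^ 2) / ρ) := log_le_log (inv_pos.2 hε) hinv
    _ = log (1 + r ^ 2) - log ρ := log_div (by positivity) hρ.ne'
    _ ≤ log (1 + r ^ 2) + |log ρ| := by linarith [neg_abs_le (log ρ)]

lemma abs_log_inv_mul_sub_one_le {ε ρ r f : ℝ} (hε₀ : 0 < ε) (hε₁ : ε ≤ 1) (hρ : 0 < ρ)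
    (hf₀ : 0 ≤ f) (hf₁ : f ≤ 1) (hf : ε * r ≤ ρ → f = 1) :
    |log ε⁻¹ * (f - 1)| ≤ log (1 + r ^ 2) + |log ρ| := by
  have hlog : 0 ≤ log (1 + r ^ 2) := log_nonneg (by nlinarith)
  rcases le_or_gt (ε * r) ρ with hr | hr
  · rw [hf hr, sub_self, mul_zero, abs_zero]
    positivity
  · have hf' : |f - 1| ≤ 1 := abs_le.2 ⟨by linarith, by linarith⟩
    calc |log ε⁻¹ * (f - 1)| = log ε⁻¹ * |f - 1| := by
          rw [abs_mul, abs_of_nonneg (log_nonneg ((one_le_inv₀ hε₀).2 hε₁))]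
      _ ≤ log ε⁻¹ := mul_le_of_le_one_right (log_nonneg ((one_le_inv₀ hε₀).2 hε₁)) hf'
      _ ≤ log (1 + r ^ 2) + |log ρ| := log_inv_le_log_one_add_sq hε₀ hρ hr.le

lemma mul_log_rpow_neg_mul_sub_eq {ε : ℝ} (hε : 0 < ε) (p f v : ℝ) :
    f * (ε ^ (-p) * v) * log (f * (ε ^ (-p) * v)) - p * log ε⁻¹ * (ε ^ (-p) * v) =
      ε ^ (-p) * (p * (v * (log ε⁻¹ * (f - 1))) + v * (f * log f) + f * (v * log v)) := by
  rw [mul_mul_log_mul f, mul_mul_log_mul (ε ^ (-p)), log_rpow hε, log_inv]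
  ring

end EntropyDensity

lemma abs_integral_sub_integral_le {α : Type*} [MeasurableSpace α] {μ : Measure α} {F G D : α → ℝ}
    (hF : AEStronglyMeasurable F μ) (hG : Integrable G μ) (hD : Integrable D μ)
    (hFG : ∀ᵐ x ∂μ, ‖F x - G x‖ ≤ D x) : |(∫ x, F x ∂μ) - ∫ x, G x ∂μ| ≤ ∫ x, D x ∂μ := by
  have hdiff : Integrable (fun x ↦ F x - G x) μ :=
    hD.mono' (hF.sub hG.aestronglyMeasurable) hFG
  have hFint : Integrable F μ :=
    (hdiff.add hG).congr (ae_of_all _ fun x ↦ sub_add_cancel (F x) (G x))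
  rw [← integral_sub hFint hG]
  exact norm_integral_le_of_norm_le hD hFG

section EntropyMajorant

variable {E : Type*} [NormedAddCommGroup E]

/-- A majorant, independent of `ε`, of the remainder left in the entropy density of a cut-off
dilate of `V` once the leading term `p * log ε⁻¹ * V` is removed. Here `ρ` is the radius of the
ball on which the cut-off is `1`. -/
noncomputable def entropyMajorant (p ρ : ℝ) (V : E → ℝ) (y : E) : ℝ :=
  |p| * (V y * (log (1 + ‖y‖ ^ 2) + |log ρ|)) + V y + |V y * log (V y)|

variable [MeasurableSpace E] {μ : Measure E}

lemma integrable_entropyMajorant {V : E → ℝ} (hV : Integrable V μ)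
    (hVnorm : Integrable (fun y ↦ V y * log (1 + ‖y‖ ^ 2)) μ)
    (hVlog : Integrable (fun y ↦ V y * log (V y)) μ) (p ρ : ℝ) :
    Integrable (entropyMajorant p ρ V) μ := by
  have hmoment : Integrable (fun y ↦ V y * (log (1 + ‖y‖ ^ 2) + |log ρ|)) μ := by
    simp only [mul_add]
    exact hVnorm.add (hV.mul_const |log ρ|)
  exact ((hmoment.const_mul |p|).add hV).add hVlog.abs

lemma integral_entropyMajorant_nonneg {V : E → ℝ} (hV : 0 ≤ V) (p ρ : ℝ) :
    0 ≤ ∫ y, entropyMajorant p ρ V y ∂μ := by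
  refine integral_nonneg fun y ↦ ?_
  have hVy : 0 ≤ V y := hV y
  have hlog : 0 ≤ log (1 + ‖y‖ ^ 2) := log_nonneg (by nlinarith [norm_nonneg y])
  simp only [Pi.zero_apply, entropyMajorant]
  positivity

end EntropyMajorant

section Dilation

variable {E : Type*} [NormedAddCommGroup E] [NormedSpace ℝ E]

/-- The concentration of a profile `V` at scale `ε` around the origin, with amplitude `ε ^ (-p)`;
mass is preserved when `p` is the dimension of `E`. -/
noncomputable def dilate (p ε : ℝ) (V : E → ℝ) (x : E) : ℝ :=
  ε ^ (-p) * V (ε⁻¹ • x)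

lemma abs_mul_log_mul_dilate_sub_le {p ε ρ f : ℝ} {V : E → ℝ} {x : E} (hV : 0 ≤ V)
    (hε₀ : 0 < ε) (hε₁ : ε ≤ 1) (hρ : 0 < ρ) (hf₀ : 0 ≤ f) (hf₁ : f ≤ 1)
    (hf : ‖x‖ ≤ ρ → f = 1) :
    |f * dilate p ε V x * log (f * dilate p ε V x) - p * log ε⁻¹ * dilate p ε V x| ≤
      dilate p ε (entropyMajorant p ρ V) x := by
  have hnorm : ε * ‖ε⁻¹ • x‖ = ‖x‖ := by
    rw [norm_smul, norm_inv, norm_of_nonneg hε₀.le, mul_inv_cancel_left₀ hε₀.ne']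
  simp only [dilate, entropyMajorant]
  set y := ε⁻¹ • x
  have hVy : 0 ≤ V y := hV y
  have hcut := abs_log_inv_mul_sub_one_le hε₀ hε₁ hρ hf₀ hf₁ fun h ↦ hf (hnorm ▸ h)
  rw [mul_log_rpow_neg_mul_sub_eq hε₀, abs_mul, abs_of_nonneg (rpow_nonneg hε₀.le _)]
  refine mul_le_mul_of_nonneg_left ((abs_add_three _ _ _).trans ?_) (rpow_nonneg hε₀.le _)
  gcongr ?_ + ?_ + ?_
  · rw [abs_mul, abs_mul, abs_of_nonneg hVy]
    gcongr
  · rw [abs_mul, abs_of_nonneg hVy]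
    exact mul_le_of_le_one_right hVy (abs_mul_log_self_le_one hf₀ hf₁)
  · rw [abs_mul, abs_of_nonneg hf₀]
    exact mul_le_of_le_one_left (abs_nonneg _) hf₁

variable [MeasurableSpace E] [BorelSpace E] [FiniteDimensional ℝ E] {μ : Measure E}
  [μ.IsAddHaarMeasure]

lemma integrable_dilate {V : E → ℝ} (hV : Integrable V μ) (p : ℝ) {ε : ℝ} (hε : 0 < ε) :
    Integrable (dilate p ε V) μ :=
  (hV.comp_smul (inv_ne_zero hε.ne')).const_mul _

lemma integral_dilate (μ : Measure E) [μ.IsAddHaarMeasure] (V : E → ℝ) (p : ℝ) {ε : ℝ}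
    (hε : 0 < ε) :
    ∫ x, dilate p ε V x ∂μ = ε ^ ((finrank ℝ E : ℝ) - p) * ∫ y, V y ∂μ := by
  simp only [dilate]
  rw [integral_const_mul, Measure.integral_comp_inv_smul_of_nonneg μ V hε.le, smul_eq_mul,
    ← mul_assoc, ← rpow_natCast, ← rpow_add hε, neg_add_eq_sub]

theorem abs_integral_mul_log_mul_dilate_sub_le {p ε ρ : ℝ} {V f : E → ℝ} (hV₀ : 0 ≤ V)
    (hV : Integrable V μ) (hVnorm : Integrable (fun y ↦ V y * log (1 + ‖y‖ ^ 2)) μ)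
    (hVlog : Integrable (fun y ↦ V y * log (V y)) μ) (hε₀ : 0 < ε) (hε₁ : ε ≤ 1) (hρ : 0 < ρ)
    (hfm : AEStronglyMeasurable f μ) (hf₀ : ∀ x, 0 ≤ f x) (hf₁ : ∀ x, f x ≤ 1)
    (hf : ∀ x, ‖x‖ ≤ ρ → f x = 1) :
    |(∫ x, f x * dilate p ε V x * log (f x * dilate p ε V x) ∂μ) -
        p * (∫ y, V y ∂μ) * ε ^ ((finrank ℝ E : ℝ) - p) * log ε⁻¹| ≤
      (∫ y, entropyMajorant p ρ V y ∂μ) * ε ^ ((finrank ℝ E : ℝ) - p) := by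
  have hdil : Integrable (dilate p ε V) μ := integrable_dilate hV p hε₀
  have hlead : ∫ x, p * log ε⁻¹ * dilate p ε V x ∂μ =
      p * (∫ y, V y ∂μ) * ε ^ ((finrank ℝ E : ℝ) - p) * log ε⁻¹ := by
    rw [integral_const_mul, integral_dilate μ V p hε₀]
    ring
  rw [← hlead, mul_comm (∫ y, entropyMajorant p ρ V y ∂μ), ← integral_dilate μ _ p hε₀]
  exact abs_integral_sub_integral_le
    (continuous_mul_log.comp_aestronglyMeasurable (hfm.mul hdil.aestronglyMeasurable))
    (hdil.const_mul _)
    (integrable_dilate (integrable_entropyMajorant hV hVnorm hVlog p ρ) p hε₀)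
    (ae_of_all _ fun x ↦ abs_mul_log_mul_dilate_sub_le hV₀ hε₀ hε₁ hρ (hf₀ x) (hf₁ x) (hf x))

theorem abs_setIntegral_mul_log_mul_dilate_sub_le {p ε ρ : ℝ} {V f : E → ℝ} {Ω : Set E}
    (hV₀ : 0 ≤ V) (hV : Integrable V μ)
    (hVnorm : Integrable (fun y ↦ V y * log (1 + ‖y‖ ^ 2)) μ)
    (hVlog : Integrable (fun y ↦ V y * log (V y)) μ) (hε₀ : 0 < ε) (hε₁ : ε ≤ 1) (hρ : 0 < ρ)
    (hΩ : MeasurableSet Ω) (hball : Metric.closedBall 0 ρ ⊆ Ω)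
    (hfm : AEStronglyMeasurable f (μ.restrict Ω)) (hf₀ : ∀ x ∈ Ω, 0 ≤ f x)
    (hf₁ : ∀ x ∈ Ω, f x ≤ 1) (hf : ∀ x ∈ Metric.closedBall 0 ρ, f x = 1) :
    |(∫ x in Ω, f x * dilate p ε V x * log (f x * dilate p ε V x) ∂μ) -
        p * (∫ y, V y ∂μ) * ε ^ ((finrank ℝ E : ℝ) - p) * log ε⁻¹| ≤
      (∫ y, entropyMajorant p ρ V y ∂μ) * ε ^ ((finrank ℝ E : ℝ) - p) := by
  have hind : Ω.indicator (fun x ↦ f x * dilate p ε V x * log (f x * dilate p ε V x)) =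
      fun x ↦ Ω.indicator f x * dilate p ε V x * log (Ω.indicator f x * dilate p ε V x) := by
    ext x
    by_cases hx : x ∈ Ω <;> simp [hx]
  rw [← integral_indicator hΩ, hind]
  refine abs_integral_mul_log_mul_dilate_sub_le hV₀ hV hVnorm hVlog hε₀ hε₁ hρ
    ((aestronglyMeasurable_indicator_iff hΩ).2 hfm) (Set.indicator_nonneg hf₀)
    (Set.indicator_le' hf₁ fun _ _ ↦ zero_le_one) fun x hx ↦ ?_
  rw [← mem_closedBall_zero_iff] at hx
  rw [Set.indicator_of_mem (hball hx), hf x hx]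

end Dilation

section BubbleProfile

variable {E : Type*} [NormedAddCommGroup E]

/-- The profile `K * (1 + ‖y‖²) ^ (-p)` of which the squared bubbles are the dilates; see
`sq_bubble_eq_dilate`. -/
noncomputable def bubbleProfile (K p : ℝ) (y : E) : ℝ :=
  K * (1 + ‖y‖ ^ 2) ^ (-p)

lemma bubbleProfile_nonneg {K : ℝ} (hK : 0 ≤ K) (p : ℝ) : 0 ≤ bubbleProfile (E := E) K p :=
  fun _ ↦ mul_nonneg hK (by positivity)

lemma continuous_bubbleProfile (K p : ℝ) : Continuous (bubbleProfile (E := E) K p) :=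
  continuous_const.mul
    ((by fun_prop : Continuous fun y : E ↦ 1 + ‖y‖ ^ 2).rpow_const fun _ ↦ .inl (by positivity))

variable [NormedSpace ℝ E]

lemma sq_bubble_eq_dilate (c s : ℝ) {ε : ℝ} (hε : 0 < ε) (x : E) :
    (c * (ε / (ε ^ 2 + ‖x‖ ^ 2)) ^ s) ^ 2 =
      dilate (2 * s) ε (bubbleProfile (c ^ 2) (2 * s)) x := by
  have hbase : ε / (ε ^ 2 + ‖x‖ ^ 2) = (ε * (1 + ‖ε⁻¹ • x‖ ^ 2))⁻¹ := by
    rw [norm_smul, norm_inv, norm_of_nonneg hε.le]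
    field_simp
  rw [dilate, bubbleProfile, hbase, mul_pow, ← rpow_mul_natCast (by positivity),
    Nat.cast_ofNat, mul_comm s, inv_rpow (by positivity), ← rpow_neg (by positivity),
    mul_rpow hε.le (by positivity)]
  ring

variable [MeasurableSpace E] [BorelSpace E] [FiniteDimensional ℝ E] {μ : Measure E}
  [μ.IsAddHaarMeasure] {p : ℝ}

lemma integrable_bubbleProfile (K : ℝ) (hp : finrank ℝ E < 2 * p) :
    Integrable (bubbleProfile (E := E) K p) μ := by
  have h : Integrable (fun y : E ↦ (1 + ‖y‖ ^ 2) ^ (-p)) μ := by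
    simpa [neg_div] using integrable_rpow_neg_one_add_norm_sq (μ := μ) hp
  exact h.const_mul K

lemma integral_bubbleProfile_pos {K : ℝ} (hK : 0 < K) (hp : finrank ℝ E < 2 * p) :
    0 < ∫ y : E, bubbleProfile K p y ∂μ :=
  integral_pos_of_integrable_nonneg_nonzero (x := 0) (continuous_bubbleProfile K p)
    (integrable_bubbleProfile K hp) (bubbleProfile_nonneg hK.le p) (by simp [bubbleProfile, hK.ne'])

lemma integrable_bubbleProfile_mul_log_one_add_norm_sq (K : ℝ) (hp : finrank ℝ E < 2 * p) :
    Integrable (fun y : E ↦ bubbleProfile K p y * log (1 + ‖y‖ ^ 2)) μ := by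
  obtain ⟨q, hq, hqp⟩ : ∃ q, (finrank ℝ E : ℝ) / 2 < q ∧ q < p := exists_between (by linarith)
  have hδ : 0 < p - q := sub_pos.2 hqp
  have hmaj : Integrable (bubbleProfile (E := E) (|K| / (p - q)) q) μ :=
    integrable_bubbleProfile _ (by linarith)
  refine hmaj.mono' (Continuous.aestronglyMeasurable <|
    (continuous_bubbleProfile K p).mul
      ((by fun_prop : Continuous fun y : E ↦ 1 + ‖y‖ ^ 2).log fun _ ↦ by positivity))
    (ae_of_all _ fun y ↦ ?_)
  have hw : 1 ≤ 1 + ‖y‖ ^ 2 := by nlinarith [norm_nonneg y]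
  simp only [bubbleProfile]
  set w := 1 + ‖y‖ ^ 2
  have hw₀ : 0 < w := zero_lt_one.trans_le hw
  calc ‖K * w ^ (-p) * log w‖ = |K| * w ^ (-p) * log w := by
        rw [norm_mul, norm_mul, norm_of_nonneg (rpow_nonneg hw₀.le _),
          norm_of_nonneg (log_nonneg hw), norm_eq_abs]
    _ ≤ |K| * w ^ (-p) * (w ^ (p - q) / (p - q)) := by
        gcongr
        exact log_le_rpow_div hw₀.le hδ
    _ = |K| / (p - q) * (w ^ (-p) * w ^ (p - q)) := by ring
    _ = |K| / (p - q) * w ^ (-q) := by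
        rw [← rpow_add hw₀]
        ring_nf

lemma integrable_bubbleProfile_mul_log_self (K : ℝ) (hp : finrank ℝ E < 2 * p) :
    Integrable (fun y : E ↦ bubbleProfile K p y * log (bubbleProfile K p y)) μ := by
  have hmoment : Integrable (fun y : E ↦ bubbleProfile (K * -p) p y * log (1 + ‖y‖ ^ 2)) μ :=
    integrable_bubbleProfile_mul_log_one_add_norm_sq _ hp
  refine ((integrable_bubbleProfile (K * log K) hp).add hmoment).congr (ae_of_all _ fun y ↦ ?_)
  simp only [Pi.add_apply, bubbleProfile]
  rw [mul_mul_log_mul, log_rpow (by positivity)]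
  ring

theorem stmt_10_general (μ : Measure E) [μ.IsAddHaarMeasure] {c s : ℝ} (hc : c ≠ 0)
    (hs : finrank ℝ E < 4 * s) {u : ℝ → E → ℝ}
    (hu : ∀ ε, 0 < ε → ∀ x, u ε x = c * (ε / (ε ^ 2 + ‖x‖ ^ 2)) ^ s)
    {Ω : Set E} (hΩ : MeasurableSet Ω) {φ : E → ℝ}
    (hφ : AEStronglyMeasurable φ (μ.restrict Ω)) (hφ_le : ∀ x ∈ Ω, |φ x| ≤ 1)
    {ρ : ℝ} (hρ : 0 < ρ) (hball : Metric.closedBall 0 ρ ⊆ Ω)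
    (hφ1 : ∀ x ∈ Metric.closedBall (0 : E) ρ, φ x = 1) :
    ∃ C₀, 0 < C₀ ∧ ∃ C, 0 < C ∧ ∀ ε ∈ Set.Ioc (0 : ℝ) 1,
      |(∫ x in Ω, (φ x * u ε x) ^ 2 * log ((φ x * u ε x) ^ 2) ∂μ) -
          C₀ * ε ^ ((finrank ℝ E : ℝ) - 2 * s) * log (1 / ε)| ≤
        C * ε ^ ((finrank ℝ E : ℝ) - 2 * s) := by
  set V : E → ℝ := bubbleProfile (c ^ 2) (2 * s)
  have hp : (finrank ℝ E : ℝ) < 2 * (2 * s) := by linarith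
  have hs₀ : 0 < s := by linarith [(finrank ℝ E).cast_nonneg (α := ℝ)]
  have hV₀ : 0 ≤ V := bubbleProfile_nonneg (sq_nonneg c) _
  have hVpos : 0 < ∫ y, V y ∂μ := integral_bubbleProfile_pos (by positivity) hp
  have hCpos := integral_entropyMajorant_nonneg (μ := μ) hV₀ (2 * s) ρ
  refine ⟨2 * s * ∫ y, V y ∂μ, by positivity, (∫ y, entropyMajorant (2 * s) ρ V y ∂μ) + 1,
    by positivity, fun ε ⟨hε₀, hε₁⟩ ↦ ?_⟩
  have hsq (x : E) : (φ x * u ε x) ^ 2 = φ x ^ 2 * dilate (2 * s) ε V x := by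
    rw [mul_pow, hu ε hε₀, sq_bubble_eq_dilate c s hε₀]
  simp only [hsq, one_div]
  refine (abs_setIntegral_mul_log_mul_dilate_sub_le hV₀ (integrable_bubbleProfile _ hp)
    (integrable_bubbleProfile_mul_log_one_add_norm_sq _ hp)
    (integrable_bubbleProfile_mul_log_self _ hp) hε₀ hε₁ hρ hΩ hball (hφ.pow 2)
    (fun x _ ↦ sq_nonneg (φ x)) (fun x hx ↦ (sq_le_one_iff_abs_le_one _).2 (hφ_le x hx))
    fun x hx ↦ by rw [Pi.pow_apply, hφ1 x hx, one_pow]).trans ?_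
  gcongr
  exact le_add_of_nonneg_right zero_le_one

end BubbleProfile

/-- Logarithmic estimate for `N ≥ 5` (Lemma 3.2):
`∫_Ω U_ε² log U_ε² = C₀ ε² log(1/ε) + O(ε²)` as `ε → 0⁺`, where `U_ε = φ u_ε` is the
cut-off Aubin–Talenti bubble (with the convention `0 log 0 = 0`, automatic since
`Real.log 0 = 0`). -/
theorem stmt_10 (N : ℕ) (hN : 5 ≤ N)
    (u : ℝ → EuclideanSpace ℝ (Fin N) → ℝ)
    (hu : ∀ ε : ℝ, 0 < ε → ∀ x : EuclideanSpace ℝ (Fin N),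
      u ε x = ((N : ℝ) * ((N : ℝ) - 2)) ^ (((N : ℝ) - 2) / 4) *
        (ε / (ε ^ 2 + ‖x‖ ^ 2)) ^ (((N : ℝ) - 2) / 2))
    (Ω : Set (EuclideanSpace ℝ (Fin N))) (hΩo : IsOpen Ω)
    (hΩb : Bornology.IsBounded Ω) (h0Ω : (0 : EuclideanSpace ℝ (Fin N)) ∈ Ω)
    (φ : EuclideanSpace ℝ (Fin N) → ℝ) (hφs : ContDiff ℝ (⊤ : ℕ∞) φ)
    (hφc : HasCompactSupport φ) (hφΩ : tsupport φ ⊆ Ω)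
    (hφ01 : ∀ x, 0 ≤ φ x ∧ φ x ≤ 1)
    (ρ : ℝ) (hρ : 0 < ρ) (hball : Metric.closedBall 0 ρ ⊆ Ω)
    (hφ1 : ∀ x ∈ Metric.closedBall (0 : EuclideanSpace ℝ (Fin N)) ρ, φ x = 1) :
    ∃ C₀ : ℝ, 0 < C₀ ∧ ∃ C : ℝ, 0 < C ∧ ∃ ε₀ ∈ Set.Ioo (0 : ℝ) 1,
      ∀ ε ∈ Set.Ioo (0 : ℝ) ε₀,
        |(∫ x in Ω, (φ x * u ε x) ^ 2 * Real.log ((φ x * u ε x) ^ 2)) -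
          C₀ * ε ^ 2 * Real.log (1 / ε)| ≤ C * ε ^ 2 := by
  have hN' : (5 : ℝ) ≤ N := by exact_mod_cast hN
  have hexp : (N : ℝ) - 2 * ((N - 2) / 2) = 2 := by ring
  have hc : 0 < (N : ℝ) * (N - 2) := mul_pos (by linarith) (by linarith)
  obtain ⟨C₀, hC₀, C, hC, hbound⟩ := stmt_10_general volume (Real.rpow_pos_of_pos hc _).ne'
    (by rw [finrank_euclideanSpace_fin]; linarith) hu hΩo.measurableSet
    hφs.continuous.aestronglyMeasurable
    (fun x _ ↦ (abs_of_nonneg (hφ01 x).1).trans_le (hφ01 x).2) hρ hball hφ1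
  simp only [finrank_euclideanSpace_fin, hexp, Real.rpow_two] at hbound
  exact ⟨C₀, hC₀, C, hC, 1 / 2, by norm_num, fun ε hε ↦ hbound ε ⟨hε.1, by linarith [hε.2]⟩⟩
end

section
/- Let N = 4 and let ρ ∈ (0,1]. With the radial cutoff ψ and U_ε as in the context, there exist constants C > 0 and ε₀ ∈ (0,1) such that for all ε ∈ (0, ε₀), ∫_{ℝ⁴} U_ε(x)²·log(U_ε(x)²) dx ≥ 8·log( 8(ε² + ρ²) / ( e·(ε² + 4ρ²)² ) )·ω₄·ε²·log(1/ε) − C·ε², where ω₄ = 2π² is the surface area of the unit sphere in ℝ⁴, with the convention 0·log 0 = 0. -/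
open MeasureTheory

/-!
In polar coordinates the integral is `2 π ^ 2` times `∫ r ^ 3 w log w`, where `w = ψ ^ 2 v` and
`v = c ε ^ 2 / (ε ^ 2 + r ^ 2) ^ 2`, with `c = 8`. On `[0, ρ]`, where `w = v`, the integrand has an
explicit primitive: the terms of order `ε ^ 2 log ^ 2 (1 / ε)` cancel, and
`c ε ^ 2 log (c / (e (ε ^ 2 + ρ ^ 2))) log (1 / ε)` remains up to `O(ε ^ 2)`. On `[ρ, R]`, with
`R = 2 ρ`, only `0 ≤ w ≤ c ε ^ 2 / r ^ 4` is known, and the tangent line of `x log x` at `ε ^ 2`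
bounds the integral below by `-2 c ε ^ 2 log (R / ρ) log (1 / ε) - O(ε ^ 2)`. The two coefficients
of `c ε ^ 2 log (1 / ε)` add up to at least `log (c (ε ^ 2 + ρ ^ 2) / (e (ε ^ 2 + R ^ 2) ^ 2))`,
because `R (ε ^ 2 + ρ ^ 2) ≤ ρ (ε ^ 2 + R ^ 2)` for `ε ≤ ρ ≤ R`.
-/

open Real Set

lemma integral_fun_norm_of_finrank_even {E F : Type*} [NormedAddCommGroup E]
    [InnerProductSpace ℝ E] [FiniteDimensional ℝ E] [MeasurableSpace E] [BorelSpace E]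
    [NormedAddCommGroup F] [NormedSpace ℝ F] {m : ℕ}
    (hm : Module.finrank ℝ E = 2 * (m + 1)) (f : ℝ → F) :
    ∫ x : E, f ‖x‖ =
      (2 * π ^ (m + 1) / m.factorial) • ∫ r in Ioi (0 : ℝ), r ^ (2 * m + 1) • f r := by
  have : Nontrivial E := Module.nontrivial_of_finrank_pos (R := ℝ) (by lia)
  have volume_unit_ball : (volume : Measure E).real (Metric.ball 0 1) =
      π ^ (m + 1) / (m + 1).factorial := by
    rw [measureReal_def, InnerProductSpace.volume_ball_of_dim_even hm, ENNReal.ofReal_one,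
      one_pow, one_mul, ENNReal.toReal_ofReal (by positivity)]
  rw [integral_fun_norm_addHaar volume f, volume_unit_ball, hm, ← Nat.cast_smul_eq_nsmul ℝ,
    smul_smul, show 2 * (m + 1) - 1 = 2 * m + 1 by lia]
  congr 1
  rw [Nat.factorial_succ]
  push_cast
  field_simp

lemma mul_log_add_sub_le_mul_log {x b : ℝ} (hx : 0 ≤ x) (hb : 0 < b) :
    x * log b + x - b ≤ x * log x := by
  rcases hx.eq_or_lt with rfl | hx
  · simpa using hb.le
  · have tangent : log (b / x) ≤ b / x - 1 := log_le_sub_one_of_pos (by positivity)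
    have scaled := mul_le_mul_of_nonneg_left tangent hx.le
    rw [log_div hb.ne' hx.ne', mul_sub, mul_sub, mul_div_cancel₀ _ hx.ne'] at scaled
    linarith

lemma intervalIntegrable_comp_of_mapsTo_isCompact {X E : Type*} [TopologicalSpace X]
    [MeasurableSpace X] [OpensMeasurableSpace X] [NormedAddCommGroup E]
    [SecondCountableTopologyEither X E] {μ : Measure ℝ} [IsLocallyFiniteMeasure μ]
    {φ : X → E} {w : ℝ → X} {K : Set X} {a b : ℝ} (hφ : Continuous φ) (hw : Measurable w)
    (hK : IsCompact K) (hwK : MapsTo w (uIoc a b) K) :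
    IntervalIntegrable (fun r => φ (w r)) μ a b := by
  obtain ⟨M, hM⟩ := hK.exists_bound_of_continuousOn hφ.continuousOn
  rw [intervalIntegrable_iff]
  exact Measure.integrableOn_of_bounded measure_Ioc_lt_top.ne
    (hφ.stronglyMeasurable.comp_measurable hw).aestronglyMeasurable
    (ae_restrict_of_forall_mem measurableSet_uIoc fun r hr => hM _ (hwK hr))

/-- The radial profile of `w(|x|) log w(|x|)` on a four-dimensional space, weighted by the factor
`r ^ 3` of the volume element; the area of the unit sphere is left out. -/
noncomputable def radialEntropy (w : ℝ → ℝ) (r : ℝ) : ℝ := r ^ 3 * (w r * log (w r))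

/-- The squared Aubin–Talenti bubble of concentration scale `ε` in dimension four, as a function of
`r = |x|`. The squared amplitude `c`, equal to `8` for the bubble itself, is left free. -/
noncomputable def bubbleSq (c ε r : ℝ) : ℝ := c * ε ^ 2 / (ε ^ 2 + r ^ 2) ^ 2

namespace bubbleSq

variable {c ε : ℝ}

lemma nonneg (hc : 0 ≤ c) (ε r : ℝ) : 0 ≤ bubbleSq c ε r := by
  unfold bubbleSq
  positivity

protected lemma continuous (c : ℝ) (hε : ε ≠ 0) : Continuous (bubbleSq c ε) := by
  unfold bubbleSq
  exact .div (by fun_prop) (by fun_prop) fun r => by positivity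

lemma le_div_sq (hc : 0 ≤ c) (hε : ε ≠ 0) (r : ℝ) : bubbleSq c ε r ≤ c / ε ^ 2 := by
  have : (ε ^ 2) ^ 2 ≤ (ε ^ 2 + r ^ 2) ^ 2 := by gcongr; nlinarith [sq_nonneg r]
  calc bubbleSq c ε r ≤ c * ε ^ 2 / (ε ^ 2) ^ 2 := by unfold bubbleSq; gcongr
    _ = c / ε ^ 2 := by field_simp

lemma le_mul_sq_div_pow_four (hc : 0 ≤ c) (ε : ℝ) {r : ℝ} (hr : r ≠ 0) :
    bubbleSq c ε r ≤ c * ε ^ 2 / r ^ 4 := by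
  rw [show r ^ 4 = (r ^ 2) ^ 2 by ring, bubbleSq]
  gcongr
  exact le_add_of_nonneg_left (sq_nonneg ε)

lemma log_eq (hc : 0 < c) (hε : ε ≠ 0) (r : ℝ) :
    log (bubbleSq c ε r) = log (c * ε ^ 2) - 2 * log (ε ^ 2 + r ^ 2) := by
  rw [bubbleSq, log_div (by positivity) (by positivity), log_pow]
  norm_num

/-- A primitive in `r` of `radialEntropy (bubbleSq c ε)`, for evaluating its integral by the
fundamental theorem of calculus. -/
noncomputable def entropyPrimitive (c ε r : ℝ) : ℝ :=
  c * ε ^ 2 / 2 * (log (ε ^ 2 + r ^ 2) * (log (c * ε ^ 2) - log (ε ^ 2 + r ^ 2)) +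
    ε ^ 2 * (log (c * ε ^ 2) - 2 * log (ε ^ 2 + r ^ 2) - 2) / (ε ^ 2 + r ^ 2))

lemma hasDerivAt_entropyPrimitive (hc : 0 < c) (hε : ε ≠ 0) (r : ℝ) :
    HasDerivAt (entropyPrimitive c ε) (radialEntropy (bubbleSq c ε) r) r := by
  have hS0 : ε ^ 2 + r ^ 2 ≠ 0 := by positivity
  have hS : HasDerivAt (fun r : ℝ => ε ^ 2 + r ^ 2) (2 * r) r := by
    simpa using (hasDerivAt_pow 2 r).const_add (ε ^ 2)
  have hlog := hS.log hS0
  have hfirst := hlog.mul (hlog.const_sub (log (c * ε ^ 2)))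
  have hsecond :=
    ((((hlog.const_mul 2).const_sub (log (c * ε ^ 2))).sub_const 2).const_mul (ε ^ 2)).div hS hS0
  refine ((hfirst.add hsecond).const_mul (c * ε ^ 2 / 2)).congr_deriv ?_
  rw [radialEntropy, log_eq hc hε, bubbleSq]
  field_simp
  ring

/-- Twice the coefficient of `c ε ^ 2` in the part of `∫₀^ρ radialEntropy (bubbleSq c ε)` that stays
bounded after division by `ε ^ 2`. It is written through `bubbleSq c ε ρ * log (bubbleSq c ε ρ)`,
rather than `log ε`, so that it is continuous at `ε = 0`. -/
noncomputable def entropyRemainder (c ρ ε : ℝ) : ℝ :=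
  log (ε ^ 2 + ρ ^ 2) * (log c - log (ε ^ 2 + ρ ^ 2)) - log c + 2 +
    (ε ^ 2 + ρ ^ 2) / c * (bubbleSq c ε ρ * log (bubbleSq c ε ρ)) - 2 * ε ^ 2 / (ε ^ 2 + ρ ^ 2)

lemma continuous_entropyRemainder (c : ℝ) {ρ : ℝ} (hρ : ρ ≠ 0) :
    Continuous (entropyRemainder c ρ) := by
  have hS (ε : ℝ) : ε ^ 2 + ρ ^ 2 ≠ 0 := by positivity
  have hlog : Continuous fun ε : ℝ => log (ε ^ 2 + ρ ^ 2) := .log (by fun_prop) hS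
  have hbubble : Continuous fun ε : ℝ => bubbleSq c ε ρ :=
    .div (by fun_prop) (by fun_prop) fun ε => pow_ne_zero 2 (hS ε)
  have hentropy := continuous_mul_log.comp hbubble
  have hquot : Continuous fun ε : ℝ => 2 * ε ^ 2 / (ε ^ 2 + ρ ^ 2) :=
    .div (by fun_prop) (by fun_prop) hS
  have hscale : Continuous fun ε : ℝ => (ε ^ 2 + ρ ^ 2) / c := by fun_prop
  exact ((((hlog.mul (continuous_const.sub hlog)).sub continuous_const).add
    continuous_const).add (hscale.mul hentropy)).sub hquot

lemma integral_radialEntropy (hc : 0 < c) (hε : 0 < ε) (ρ : ℝ) :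
    ∫ r in (0 : ℝ)..ρ, radialEntropy (bubbleSq c ε) r =
      c * ε ^ 2 * ((log c - 1 - log (ε ^ 2 + ρ ^ 2)) * log (1 / ε) +
        entropyRemainder c ρ ε / 2) := by
  have hcont : Continuous (radialEntropy (bubbleSq c ε)) :=
    (continuous_pow 3).mul (continuous_mul_log.comp (bubbleSq.continuous c hε.ne'))
  rw [intervalIntegral.integral_eq_sub_of_hasDerivAt
    (fun r _ => hasDerivAt_entropyPrimitive hc hε.ne' r) (hcont.intervalIntegrable _ _)]
  have hlog_sq : log (ε ^ 2) = 2 * log ε := by simp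
  have hlog_mul : log (c * ε ^ 2) = log c + 2 * log ε := by
    rw [log_mul hc.ne' (by positivity), hlog_sq]
  rw [entropyRemainder, log_eq hc hε.ne', bubbleSq, entropyPrimitive, entropyPrimitive, one_div,
    log_inv, zero_pow two_ne_zero, add_zero, hlog_mul, hlog_sq]
  field_simp
  ring

lemma exists_forall_le_integral_radialEntropy (hc : 0 < c) {ρ : ℝ} (hρ : ρ ≠ 0) :
    ∃ C : ℝ, ∀ ε ∈ Ioo (0 : ℝ) 1,
      c * ε ^ 2 * ((log c - 1 - log (ε ^ 2 + ρ ^ 2)) * log (1 / ε)) - C * ε ^ 2 ≤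
        ∫ r in (0 : ℝ)..ρ, radialEntropy (bubbleSq c ε) r := by
  obtain ⟨m, hm⟩ := (isCompact_Icc (a := (0 : ℝ)) (b := 1)).bddBelow_image
    (continuous_entropyRemainder c hρ).continuousOn
  refine ⟨-(c * m / 2), fun ε hε => ?_⟩
  have hrem : m ≤ entropyRemainder c ρ ε := hm (mem_image_of_mem _ (Ioo_subset_Icc_self hε))
  rw [integral_radialEntropy hc hε.1]
  have := mul_le_mul_of_nonneg_left hrem (by positivity : 0 ≤ c * ε ^ 2 / 2)
  linarith

end bubbleSq

section Annulus

variable {c ε ρ R : ℝ} {w : ℝ → ℝ}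

lemma neg_le_radialEntropy {r : ℝ} (hr : 0 < r) (hε : ε ∈ Ioo (0 : ℝ) 1)
    (hw : w r ∈ Icc 0 (c * ε ^ 2 / r ^ 4)) :
    -(2 * c * ε ^ 2 * log (1 / ε)) * r⁻¹ - ε ^ 2 * r ^ 3 ≤ radialEntropy w r := by
  have hlog : 0 < log (1 / ε) := log_pos (one_lt_one_div hε.1 hε.2)
  have tangent := mul_log_add_sub_le_mul_log hw.1 (pow_pos hε.1 2)
  rw [log_pow, ← neg_neg (log ε), ← log_inv, ← one_div] at tangent
  push_cast at tangent
  calc -(2 * c * ε ^ 2 * log (1 / ε)) * r⁻¹ - ε ^ 2 * r ^ 3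
      = r ^ 3 * (-(2 * log (1 / ε)) * (c * ε ^ 2 / r ^ 4) - ε ^ 2) := by field_simp
    _ ≤ r ^ 3 * (-(2 * log (1 / ε)) * w r - ε ^ 2) := by
        gcongr ?_ * (?_ - _)
        exact mul_le_mul_of_nonpos_left hw.2 (by linarith)
    _ ≤ radialEntropy w r := by
        unfold radialEntropy
        gcongr
        linarith [hw.1]

lemma neg_le_integral_radialEntropy (hρ : 0 < ρ) (hρR : ρ ≤ R) (hε : ε ∈ Ioo (0 : ℝ) 1)
    (hw : ∀ r ∈ Icc ρ R, w r ∈ Icc 0 (c * ε ^ 2 / r ^ 4))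
    (hint : IntervalIntegrable (radialEntropy w) volume ρ R) :
    -(2 * c * ε ^ 2 * log (1 / ε)) * log (R / ρ) - ε ^ 2 * ((R ^ 4 - ρ ^ 4) / 4) ≤
      ∫ r in ρ..R, radialEntropy w r := by
  have hR : 0 < R := hρ.trans_le hρR
  have hinv : IntervalIntegrable (fun r : ℝ => -(2 * c * ε ^ 2 * log (1 / ε)) * r⁻¹) volume ρ R :=
    (intervalIntegral.intervalIntegrable_inv (fun r hr => ((lt_min hρ hR).trans_le hr.1).ne')
      continuousOn_id).const_mul _
  have hpow : IntervalIntegrable (fun r : ℝ => ε ^ 2 * r ^ 3) volume ρ R :=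
    (by fun_prop : Continuous fun r : ℝ => ε ^ 2 * r ^ 3).intervalIntegrable _ _
  calc -(2 * c * ε ^ 2 * log (1 / ε)) * log (R / ρ) - ε ^ 2 * ((R ^ 4 - ρ ^ 4) / 4)
      = ∫ r in ρ..R, -(2 * c * ε ^ 2 * log (1 / ε)) * r⁻¹ - ε ^ 2 * r ^ 3 := by
        rw [intervalIntegral.integral_sub hinv hpow, intervalIntegral.integral_const_mul,
          intervalIntegral.integral_const_mul, integral_inv_of_pos hρ hR, integral_pow]
        norm_num
    _ ≤ ∫ r in ρ..R, radialEntropy w r :=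
        intervalIntegral.integral_mono_on hρR (hinv.sub hpow) hint fun r hr =>
          neg_le_radialEntropy (hρ.trans_le hr.1) hε (hw r hr)

end Annulus

/-- A measurable radial cutoff profile: it is `1` on `[0, ρ]`, has modulus at most `1` on `[ρ, R]`
and vanishes on `(R, ∞)`; negative radii carry no condition besides measurability. -/
structure IsRadialCutoff (ρ R : ℝ) (ψ : ℝ → ℝ) : Prop where
  measurable : Measurable ψ
  eq_one : ∀ r, 0 ≤ r → r ≤ ρ → ψ r = 1
  abs_le_one : ∀ r, ρ ≤ r → r ≤ R → |ψ r| ≤ 1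
  eq_zero : ∀ r, R < r → ψ r = 0

namespace IsRadialCutoff

variable {c ε ρ R : ℝ} {ψ : ℝ → ℝ}

lemma sq_mul_bubbleSq_mem_Icc (hψ : IsRadialCutoff ρ R ψ) (hc : 0 ≤ c) (ε : ℝ) {r : ℝ}
    (hr : r ∈ Icc 0 R) : ψ r ^ 2 * bubbleSq c ε r ∈ Icc 0 (bubbleSq c ε r) := by
  have habs : |ψ r| ≤ 1 := by
    rcases le_total r ρ with hrρ | hρr
    · simp [hψ.eq_one r hr.1 hrρ]
    · exact hψ.abs_le_one r hρr hr.2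
  have hb := bubbleSq.nonneg hc ε r
  exact ⟨by positivity, mul_le_of_le_one_left hb ((sq_le_one_iff_abs_le_one _).2 habs)⟩

lemma intervalIntegrable_radialEntropy (hψ : IsRadialCutoff ρ R ψ) (hc : 0 ≤ c) (hε : ε ≠ 0)
    {a b : ℝ} (hab : uIcc a b ⊆ Icc 0 R) :
    IntervalIntegrable (radialEntropy (ψ ^ 2 * bubbleSq c ε)) volume a b := by
  have hmul_log := intervalIntegrable_comp_of_mapsTo_isCompact (μ := volume) continuous_mul_log
    ((hψ.measurable.pow_const 2).mul (bubbleSq.continuous c hε).measurable)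
    (isCompact_Icc (a := 0) (b := c / ε ^ 2)) fun r hr => Icc_subset_Icc_right
      (bubbleSq.le_div_sq hc hε r)
      (hψ.sq_mul_bubbleSq_mem_Icc hc ε (hab (uIoc_subset_uIcc hr)))
  exact hmul_log.continuousOn_mul (continuous_pow 3).continuousOn

lemma setIntegral_Ioi_radialEntropy_eq_add (hψ : IsRadialCutoff ρ R ψ) (hρ : 0 ≤ ρ) (hρR : ρ ≤ R)
    (hc : 0 ≤ c) (hε : ε ≠ 0) :
    ∫ r in Ioi (0 : ℝ), radialEntropy (ψ ^ 2 * bubbleSq c ε) r =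
      (∫ r in (0 : ℝ)..ρ, radialEntropy (bubbleSq c ε) r) +
        ∫ r in ρ..R, radialEntropy (ψ ^ 2 * bubbleSq c ε) r := by
  have hcore : ∫ r in (0 : ℝ)..ρ, radialEntropy (bubbleSq c ε) r =
      ∫ r in (0 : ℝ)..ρ, radialEntropy (ψ ^ 2 * bubbleSq c ε) r := by
    refine intervalIntegral.integral_congr fun r hr => ?_
    rw [uIcc_of_le hρ] at hr
    simp only [radialEntropy, Pi.mul_apply, Pi.pow_apply, hψ.eq_one r hr.1 hr.2, one_pow, one_mul]
  rw [hcore, intervalIntegral.integral_add_adjacent_intervals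
    (hψ.intervalIntegrable_radialEntropy hc hε (uIcc_of_le hρ ▸ Icc_subset_Icc_right hρR))
    (hψ.intervalIntegrable_radialEntropy hc hε (uIcc_of_le hρR ▸ Icc_subset_Icc_left hρ)),
    intervalIntegral.integral_of_le (hρ.trans hρR)]
  refine setIntegral_eq_of_subset_of_forall_sdiff_eq_zero measurableSet_Ioi
    Ioc_subset_Ioi_self fun r hr => ?_
  have hRr : R < r := not_le.1 fun hrR => hr.2 ⟨hr.1, hrR⟩
  simp [radialEntropy, hψ.eq_zero r hRr]

end IsRadialCutoff

lemma log_cutoff_coefficient_le {c ε ρ R : ℝ} (hc : 0 < c) (hρ : 0 < ρ) (hρR : ρ ≤ R)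
    (hεR : ε ^ 2 ≤ R * ρ) :
    log (c * (ε ^ 2 + ρ ^ 2) / (exp 1 * (ε ^ 2 + R ^ 2) ^ 2)) ≤
      log c - 1 - log (ε ^ 2 + ρ ^ 2) - 2 * log (R / ρ) := by
  have hR : 0 < R := hρ.trans_le hρR
  have hcross : R / ρ * (ε ^ 2 + ρ ^ 2) ≤ ε ^ 2 + R ^ 2 := by
    rw [div_mul_eq_mul_div, div_le_iff₀ hρ]
    linarith [mul_nonneg (sub_nonneg.2 hρR) (sub_nonneg.2 hεR)]
  have hlog := log_le_log (by positivity) hcross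
  rw [log_mul (by positivity) (by positivity)] at hlog
  rw [log_div (by positivity) (by positivity), log_mul hc.ne' (by positivity),
    log_mul (by positivity) (by positivity), log_exp, log_pow]
  push_cast
  linarith

lemma exists_forall_le_setIntegral_Ioi_radialEntropy {c ρ R : ℝ} {ψ : ℝ → ℝ}
    (hψ : IsRadialCutoff ρ R ψ) (hc : 0 < c) (hρ : 0 < ρ) (hρR : ρ ≤ R) :
    ∃ C : ℝ, ∀ ε ∈ Ioo (0 : ℝ) 1,
      c * ε ^ 2 * (log c - 1 - log (ε ^ 2 + ρ ^ 2) - 2 * log (R / ρ)) * log (1 / ε) - C * ε ^ 2 ≤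
        ∫ r in Ioi (0 : ℝ), radialEntropy (ψ ^ 2 * bubbleSq c ε) r := by
  obtain ⟨C, hcore⟩ := bubbleSq.exists_forall_le_integral_radialEntropy hc hρ.ne'
  refine ⟨C + (R ^ 4 - ρ ^ 4) / 4, fun ε hε => ?_⟩
  rw [hψ.setIntegral_Ioi_radialEntropy_eq_add hρ.le hρR hc.le hε.1.ne']
  have hannulus := neg_le_integral_radialEntropy (w := ψ ^ 2 * bubbleSq c ε) hρ hρR hε
    (fun r hr => Icc_subset_Icc_right
      (bubbleSq.le_mul_sq_div_pow_four hc.le ε (hρ.trans_le hr.1).ne')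
      (hψ.sq_mul_bubbleSq_mem_Icc hc.le ε ⟨hρ.le.trans hr.1, hr.2⟩))
    (hψ.intervalIntegrable_radialEntropy hc.le hε.1.ne'
      (uIcc_of_le hρR ▸ Icc_subset_Icc_left hρ.le))
  linarith [hcore ε hε]

theorem stmt_11_general {E : Type*} [NormedAddCommGroup E] [InnerProductSpace ℝ E]
    [FiniteDimensional ℝ E] [MeasurableSpace E] [BorelSpace E] (hE : Module.finrank ℝ E = 4)
    {c ρ R : ℝ} (hc : 0 < c) (hρ : 0 < ρ) (hρR : ρ ≤ R) {ψ : ℝ → ℝ} (hψ : IsRadialCutoff ρ R ψ)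
    {u : ℝ → E → ℝ} (hu : ∀ ε, 0 < ε → ∀ x, u ε x = √c * ε / (ε ^ 2 + ‖x‖ ^ 2)) :
    ∃ C : ℝ, 0 < C ∧ ∃ ε₀ ∈ Ioo (0 : ℝ) 1, ∀ ε ∈ Ioo (0 : ℝ) ε₀,
      (∫ x : E, (ψ ‖x‖ * u ε x) ^ 2 * log ((ψ ‖x‖ * u ε x) ^ 2)) ≥
        c * log (c * (ε ^ 2 + ρ ^ 2) / (exp 1 * (ε ^ 2 + R ^ 2) ^ 2)) *
          (2 * π ^ 2) * ε ^ 2 * log (1 / ε) - C * ε ^ 2 := by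
  obtain ⟨C, hC⟩ := exists_forall_le_setIntegral_Ioi_radialEntropy hψ hc hρ hρR
  refine ⟨2 * π ^ 2 * max C 1, by positivity, min (1 / 2) ρ,
    ⟨by positivity, (min_le_left _ _).trans_lt (by norm_num)⟩, fun ε ⟨hε, hεlt⟩ => ?_⟩
  obtain ⟨hε_half, hερ⟩ := lt_min_iff.1 hεlt
  have hlog_pos : 0 < log (1 / ε) := log_pos (one_lt_one_div hε (by linarith))
  have hsq (x : E) : (ψ ‖x‖ * u ε x) ^ 2 = ψ ‖x‖ ^ 2 * bubbleSq c ε ‖x‖ := by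
    rw [hu ε hε, bubbleSq, mul_pow, div_pow, mul_pow, sq_sqrt hc.le]
  simp only [hsq]
  rw [integral_fun_norm_of_finrank_even (m := 1) hE
    fun r => ψ r ^ 2 * bubbleSq c ε r * log (ψ r ^ 2 * bubbleSq c ε r)]
  norm_num only [Nat.factorial, smul_eq_mul, ge_iff_le, div_one]
  calc _ = 2 * π ^ 2 * (c * ε ^ 2 *
          log (c * (ε ^ 2 + ρ ^ 2) / (exp 1 * (ε ^ 2 + R ^ 2) ^ 2)) * log (1 / ε) -
            max C 1 * ε ^ 2) := by ring
    _ ≤ 2 * π ^ 2 * (c * ε ^ 2 *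
          (log c - 1 - log (ε ^ 2 + ρ ^ 2) - 2 * log (R / ρ)) * log (1 / ε) - C * ε ^ 2) := by
        gcongr
        · exact log_cutoff_coefficient_le hc hρ hρR (by nlinarith)
        · exact le_max_left C 1
    _ ≤ _ := by
        gcongr
        exact hC ε ⟨hε, by linarith⟩

/-- Lower bound of Lemma 3.4 (`N = 4`): with `U_ε(x) = ψ(|x|) u_ε(x)`,
`∫ U_ε² log U_ε² ≥ 8 log(8(ε²+ρ²)/(e(ε²+4ρ²)²)) ω₄ ε² log(1/ε) + O(ε²)`,
where `ω₄ = 2π²`. -/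
theorem stmt_11 (ρ : ℝ) (hρ : ρ ∈ Set.Ioc (0 : ℝ) 1)
    (ψ : ℝ → ℝ) (hψs : ContDiff ℝ (⊤ : ℕ∞) ψ)
    (hψ1 : ∀ r : ℝ, 0 ≤ r → r ≤ ρ → ψ r = 1)
    (hψ01 : ∀ r : ℝ, ρ ≤ r → r ≤ 2 * ρ → ψ r ∈ Set.Icc (0 : ℝ) 1)
    (hψ0 : ∀ r : ℝ, 2 * ρ ≤ r → ψ r = 0)
    (u : ℝ → EuclideanSpace ℝ (Fin 4) → ℝ)
    (hu : ∀ ε : ℝ, 0 < ε → ∀ x : EuclideanSpace ℝ (Fin 4),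
      u ε x = Real.sqrt 8 * ε / (ε ^ 2 + ‖x‖ ^ 2)) :
    ∃ C : ℝ, 0 < C ∧ ∃ ε₀ ∈ Set.Ioo (0 : ℝ) 1, ∀ ε ∈ Set.Ioo (0 : ℝ) ε₀,
      (∫ x : EuclideanSpace ℝ (Fin 4),
          (ψ ‖x‖ * u ε x) ^ 2 * Real.log ((ψ ‖x‖ * u ε x) ^ 2)) ≥
        8 * Real.log (8 * (ε ^ 2 + ρ ^ 2) / (Real.exp 1 * (ε ^ 2 + 4 * ρ ^ 2) ^ 2)) *
          (2 * Real.pi ^ 2) * ε ^ 2 * Real.log (1 / ε) - C * ε ^ 2 := by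
  simpa only [mul_pow, show (2 : ℝ) ^ 2 = 4 by norm_num] using
    stmt_11_general finrank_euclideanSpace_fin (by norm_num) hρ.1 (by linarith [hρ.1])
      ⟨hψs.continuous.measurable, hψ1, fun r h₁ h₂ => abs_le.2
        ⟨by linarith [(hψ01 r h₁ h₂).1], (hψ01 r h₁ h₂).2⟩, fun r hr => hψ0 r hr.le⟩ hu
end

section
/- Let N = 3. With ρ, ψ and U_ε as in the context, there exist constants C > 0 and ε₀ > 0 such that for all ε ∈ (0, ε₀), | ∫_{ℝ³} |∇U_ε(x)|² dx − K₃ − √3·ω₃·( ∫_ρ^{2ρ} ψ′(r)² dr )·ε | ≤ C·ε³, where K₃ = ∫_{ℝ³} |∇u_1(x)|² dx and ω₃ = 4π is the surface area of the unit sphere in ℝ³. -/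
open MeasureTheory

/-! Along `u = u_ε`, which solves `-Δu = u⁵`, integrating `|∇(ψu)|² = u²|∇ψ|² + ∇u · ∇(ψ²u)` by
parts gives `∫ |∇(ψu)|² = ∫ u²|∇ψ|² + ∫ ψ²u⁶`. Taking `ψ = 1` and using that `∫ |∇u_ε|²` does not
depend on `ε`, one gets the exact formula
`∫ |∇(ψu_ε)|² - K₃ = ∫ u_ε²|∇ψ|² - ∫ (1 - ψ²) u_ε⁶`.
Both integrands vanish for `|x| < ρ`, while for `|x| ≥ ρ` one has
`|x|² u_ε² = √3 ε + O(ε³)` and `|x|² u_ε⁶ = O(ε³ |x|⁻⁴)`. -/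

/-- The profile `r ↦ u_ε(r)` of the Aubin–Talenti bubble in dimension `3`, so that the bubble itself
is `x ↦ bubble ε ‖x‖`. -/
noncomputable def bubble (ε r : ℝ) : ℝ :=
  (3 : ℝ) ^ ((1 : ℝ) / 4) * (ε / (ε ^ 2 + r ^ 2)) ^ ((1 : ℝ) / 2)

/-- The Dirichlet energy `∫ |∇v|²` of the radial function `v = f(|·|)` on `ℝ³`, written in polar
coordinates and without the factor `4π`. -/
noncomputable def radialEnergy (f : ℝ → ℝ) : ℝ :=
  ∫ r in Set.Ioi (0 : ℝ), r ^ 2 * deriv f r ^ 2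

section Calculus

theorem deriv_eq_zero_of_forall_mem_eq {f : ℝ → ℝ} {s : Set ℝ} {c : ℝ} (hs : UniqueDiffOn ℝ s)
    (hf : ∀ x ∈ s, f x = c) {x : ℝ} (hx : x ∈ s) : deriv f x = 0 :=
  ((hasDerivWithinAt_const x s c).congr hf (hf x hx)).deriv_eq_zero (hs x hx)

theorem integrable_inv_sq_add_sq {a : ℝ} (ha : a ≠ 0) :
    Integrable fun x : ℝ => (a ^ 2 + x ^ 2)⁻¹ := by
  refine ((integrable_inv_one_add_sq.comp_div ha).const_mul (a ^ 2)⁻¹).congr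
    (.of_forall fun x => ?_)
  simp only [← mul_inv]
  congr 1
  field_simp

theorem hasDerivAt_sq_add_sq (a x : ℝ) : HasDerivAt (fun y => a ^ 2 + y ^ 2) (2 * x) x := by
  simpa using (hasDerivAt_pow 2 x).const_add (a ^ 2)

/-- For a solution `w` of `-(pw')' = g`, Picone's identity
`p(ψw)'² - pw²ψ'² - ψ²gw = (ψ²w · pw')'` integrates to a formula for `∫ p(ψw)'²`. -/
theorem integral_Ioi_mul_deriv_mul_sq {a : ℝ} {p w g ψ : ℝ → ℝ}
    (hψ : Differentiable ℝ ψ) (hw : Differentiable ℝ w)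
    (hflux : ∀ r, HasDerivAt (fun s => p s * deriv w s) (-g r) r)
    (hψw : IntegrableOn (fun r => p r * deriv (fun s => ψ s * w s) r ^ 2) (Set.Ioi a))
    (hψ' : IntegrableOn (fun r => p r * w r ^ 2 * deriv ψ r ^ 2) (Set.Ioi a))
    (hg : IntegrableOn (fun r => ψ r ^ 2 * (g r * w r)) (Set.Ioi a))
    (ha : p a * deriv w a = 0)
    (htop : Filter.Tendsto (fun r => ψ r ^ 2 * w r * (p r * deriv w r)) Filter.atTop (nhds 0)) :
    ∫ r in Set.Ioi a, p r * deriv (fun s => ψ s * w s) r ^ 2 =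
      (∫ r in Set.Ioi a, p r * w r ^ 2 * deriv ψ r ^ 2) +
        ∫ r in Set.Ioi a, ψ r ^ 2 * (g r * w r) := by
  have hboundary : ∀ r, HasDerivAt (fun s => ψ s ^ 2 * w s * (p s * deriv w s))
      (p r * deriv (fun s => ψ s * w s) r ^ 2 - p r * w r ^ 2 * deriv ψ r ^ 2 -
        ψ r ^ 2 * (g r * w r)) r := fun r => by
    have hψr := (hψ r).hasDerivAt
    have hwr := (hw r).hasDerivAt
    refine (((hψr.fun_pow 2).fun_mul hwr).fun_mul (hflux r)).congr_deriv ?_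
    rw [(hψr.fun_mul hwr).deriv]
    ring
  have hzero := integral_Ioi_of_hasDerivAt_of_tendsto' (fun r _ => hboundary r)
    ((hψw.sub hψ').sub hg) htop
  rw [ha, mul_zero, sub_zero, integral_sub (by exact hψw.sub hψ') hg, integral_sub hψw hψ'] at hzero
  linarith

end Calculus

section RadialEnergy

theorem norm_fderiv_comp_norm {E : Type*} [NormedAddCommGroup E] [InnerProductSpace ℝ E]
    {f : ℝ → ℝ} {x : E} (hx : x ≠ 0) (hf : DifferentiableAt ℝ f ‖x‖) :
    ‖fderiv ℝ (fun y => f ‖y‖) x‖ = |deriv f ‖x‖| := by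
  have : Nontrivial E := ⟨x, 0, hx⟩
  have hnorm : DifferentiableAt ℝ (fun y : E => ‖y‖) x := differentiableAt_id.norm ℝ hx
  have hcomp : HasFDerivAt (fun y => f ‖y‖) (deriv f ‖x‖ • fderiv ℝ (‖·‖) x) x :=
    hf.hasDerivAt.comp_hasFDerivAt x hnorm.hasFDerivAt
  rw [hcomp.fderiv, norm_smul, norm_fderiv_norm hnorm, mul_one, Real.norm_eq_abs]

theorem integral_sq_norm_fderiv_comp_norm {E : Type*} [NormedAddCommGroup E]
    [InnerProductSpace ℝ E] [FiniteDimensional ℝ E] [Nontrivial E] [MeasurableSpace E]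
    [BorelSpace E] (μ : Measure E) [μ.IsAddHaarMeasure] {f : ℝ → ℝ} (hf : Differentiable ℝ f) :
    ∫ x, ‖fderiv ℝ (fun y => f ‖y‖) x‖ ^ 2 ∂μ =
      Module.finrank ℝ E * μ.real (Metric.ball 0 1) *
        ∫ r in Set.Ioi (0 : ℝ), r ^ (Module.finrank ℝ E - 1) * deriv f r ^ 2 := by
  have hgrad : ∀ᵐ x ∂μ, ‖fderiv ℝ (fun y => f ‖y‖) x‖ ^ 2 = deriv f ‖x‖ ^ 2 := by
    filter_upwards [μ.ae_ne 0] with x hx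
    rw [norm_fderiv_comp_norm hx (hf _), sq_abs]
  rw [integral_congr_ae hgrad, integral_fun_norm_addHaar μ fun r => deriv f r ^ 2]
  simp only [smul_eq_mul, nsmul_eq_mul, mul_assoc]

theorem integral_sq_norm_fderiv_comp_norm_fin_three {f : ℝ → ℝ} (hf : Differentiable ℝ f) :
    ∫ x : EuclideanSpace ℝ (Fin 3), ‖fderiv ℝ (fun y => f ‖y‖) x‖ ^ 2 =
      4 * Real.pi * radialEnergy f := by
  have hball : (volume : Measure (EuclideanSpace ℝ (Fin 3))).real (Metric.ball 0 1) =
      4 / 3 * Real.pi := by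
    rw [Measure.real, EuclideanSpace.volume_ball_fin_three, ENNReal.toReal_mul,
      ENNReal.toReal_ofReal (by positivity)]
    simp only [ENNReal.ofReal_one, one_pow, ENNReal.toReal_one]
    ring
  rw [integral_sq_norm_fderiv_comp_norm volume hf, hball, finrank_euclideanSpace_fin, radialEnergy]
  push_cast
  ring

theorem radialEnergy_const_mul_comp_mul_left (f : ℝ → ℝ) (c : ℝ) {b : ℝ} (hb : 0 < b) :
    radialEnergy (fun r => c * f (b * r)) = c ^ 2 / b * radialEnergy f := by
  have hderiv : ∀ r, r ^ 2 * deriv (fun s => c * f (b * s)) r ^ 2 =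
      c ^ 2 * ((b * r) ^ 2 * deriv f (b * r) ^ 2) := fun r => by
    rw [deriv_const_mul_field, deriv_comp_mul_left, smul_eq_mul]
    ring
  simp only [radialEnergy, hderiv]
  rw [integral_const_mul, integral_comp_mul_left_Ioi (fun r => r ^ 2 * deriv f r ^ 2) 0 hb,
    mul_zero, smul_eq_mul]
  ring

end RadialEnergy

section Bubble

variable {ε : ℝ}

theorem bubble_eq_sqrt (ε r : ℝ) : bubble ε r = √(√3 * (ε / (ε ^ 2 + r ^ 2))) := by
  rw [Real.sqrt_mul (Real.sqrt_nonneg 3), bubble, ← Real.sqrt_eq_rpow]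
  congr 1
  rw [Real.sqrt_eq_rpow, Real.sqrt_eq_rpow, ← Real.rpow_mul (by norm_num)]
  norm_num

theorem bubble_sq (hε : 0 < ε) (r : ℝ) : bubble ε r ^ 2 = √3 * ε / (ε ^ 2 + r ^ 2) := by
  rw [bubble_eq_sqrt, Real.sq_sqrt (by positivity), mul_div_assoc]

theorem bubble_pow_four (hε : 0 < ε) (r : ℝ) :
    bubble ε r ^ 4 = 3 * ε ^ 2 / (ε ^ 2 + r ^ 2) ^ 2 := by
  rw [show bubble ε r ^ 4 = (bubble ε r ^ 2) ^ 2 by ring, bubble_sq hε, div_pow, mul_pow,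
    Real.sq_sqrt (by norm_num)]

theorem bubble_pow_six (hε : 0 < ε) (r : ℝ) :
    bubble ε r ^ 6 = 3 * √3 * ε ^ 3 / (ε ^ 2 + r ^ 2) ^ 3 := by
  rw [show bubble ε r ^ 6 = bubble ε r ^ 2 * bubble ε r ^ 4 by ring, bubble_sq hε,
    bubble_pow_four hε, div_mul_div_comm]
  ring_nf

theorem bubble_eq_mul_bubble_one (hε : 0 < ε) (r : ℝ) :
    bubble ε r = √ε⁻¹ * bubble 1 (ε⁻¹ * r) := by
  rw [bubble_eq_sqrt, bubble_eq_sqrt, ← Real.sqrt_mul (by positivity)]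
  congr 1
  field_simp

theorem hasDerivAt_bubble (hε : 0 < ε) (r : ℝ) :
    HasDerivAt (bubble ε) (-(r / (ε ^ 2 + r ^ 2)) * bubble ε r) r := by
  have hsq := (((hasDerivAt_sq_add_sq ε r).fun_inv (by positivity)).const_mul ε).const_mul √3
  rw [funext (bubble_eq_sqrt ε)]
  simp only [div_eq_mul_inv ε]
  refine (hsq.sqrt (by positivity)).congr_deriv ?_
  set v := √3 * (ε * (ε ^ 2 + r ^ 2)⁻¹) with hv
  calc √3 * (ε * (-(2 * r) / (ε ^ 2 + r ^ 2) ^ 2)) / (2 * √v)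
      = -(r / (ε ^ 2 + r ^ 2)) * (v / √v) := by rw [hv]; field_simp
    _ = -(r / (ε ^ 2 + r ^ 2)) * √v := by rw [Real.div_sqrt]

theorem differentiable_bubble (hε : 0 < ε) : Differentiable ℝ (bubble ε) :=
  fun r => (hasDerivAt_bubble hε r).differentiableAt

theorem deriv_bubble (hε : 0 < ε) (r : ℝ) :
    deriv (bubble ε) r = -(r / (ε ^ 2 + r ^ 2)) * bubble ε r :=
  (hasDerivAt_bubble hε r).deriv

/-- This is the equation `-Δu = u⁵` in polar coordinates. -/
theorem hasDerivAt_sq_mul_deriv_bubble (hε : 0 < ε) (r : ℝ) :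
    HasDerivAt (fun s => s ^ 2 * deriv (bubble ε) s) (-(r ^ 2 * bubble ε r ^ 5)) r := by
  have hfrac := (hasDerivAt_id r).fun_div (hasDerivAt_sq_add_sq ε r) (by positivity)
  have hflux := (hasDerivAt_pow 2 r).fun_mul (hfrac.fun_neg.fun_mul (hasDerivAt_bubble hε r))
  simp only [deriv_bubble hε]
  refine hflux.congr_deriv ?_
  rw [show bubble ε r ^ 5 = bubble ε r ^ 4 * bubble ε r by ring, bubble_pow_four hε]
  push_cast
  simp only [id]
  field_simp
  ring

theorem radialEnergy_bubble_eq_radialEnergy_bubble_one (hε : 0 < ε) :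
    radialEnergy (bubble ε) = radialEnergy (bubble 1) := by
  rw [funext (bubble_eq_mul_bubble_one hε),
    radialEnergy_const_mul_comp_mul_left _ _ (inv_pos.2 hε), Real.sq_sqrt (by positivity),
    div_self (by positivity), one_mul]

theorem sq_mul_bubble_sq_le (hε : 0 < ε) (r : ℝ) : r ^ 2 * bubble ε r ^ 2 ≤ √3 * ε := by
  rw [bubble_sq hε, mul_div_left_comm]
  refine mul_le_of_le_one_right (by positivity) (div_le_one_of_le₀ ?_ (by positivity))
  exact le_add_of_nonneg_left (sq_nonneg ε)

theorem integrable_sq_mul_bubble_pow_six (hε : 0 < ε) :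
    Integrable fun r => r ^ 2 * bubble ε r ^ 6 := by
  have hcont := (differentiable_bubble hε).continuous
  refine ((integrable_inv_sq_add_sq hε.ne').const_mul (√3 * ε * 3)).mono'
    (by fun_prop) (.of_forall fun r => ?_)
  have hfour : bubble ε r ^ 4 ≤ 3 * (ε ^ 2 + r ^ 2)⁻¹ := by
    rw [bubble_pow_four hε, sq (ε ^ 2 + r ^ 2), mul_div_assoc, ← div_div, ← one_div]
    gcongr
    exact div_le_one_of_le₀ (le_add_of_nonneg_right (sq_nonneg r)) (by positivity)
  rw [Real.norm_of_nonneg (by positivity)]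
  calc r ^ 2 * bubble ε r ^ 6 = r ^ 2 * bubble ε r ^ 2 * bubble ε r ^ 4 := by ring
    _ ≤ √3 * ε * (3 * (ε ^ 2 + r ^ 2)⁻¹) := by
      gcongr ?_ * ?_
      exact sq_mul_bubble_sq_le hε r
    _ = _ := by ring

theorem abs_sq_mul_bubble_sq_sub_le {ρ r : ℝ} (hε : 0 < ε) (hρ : 0 < ρ) (hr : ρ ≤ r) :
    |r ^ 2 * bubble ε r ^ 2 - √3 * ε| ≤ √3 / ρ ^ 2 * ε ^ 3 := by
  have hexact : r ^ 2 * bubble ε r ^ 2 - √3 * ε = -(√3 / (ε ^ 2 + r ^ 2) * ε ^ 3) := by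
    rw [bubble_sq hε]
    field_simp
    ring
  rw [hexact, abs_neg, abs_of_nonneg (by positivity)]
  gcongr
  calc ρ ^ 2 ≤ r ^ 2 := by gcongr
    _ ≤ ε ^ 2 + r ^ 2 := le_add_of_nonneg_left (sq_nonneg ε)

theorem sq_mul_bubble_pow_six_le {r : ℝ} (hε : 0 < ε) (hr : 0 < r) :
    r ^ 2 * bubble ε r ^ 6 ≤ 3 * √3 * ε ^ 3 * r ^ (-4 : ℝ) := by
  have hrpow : r ^ (-4 : ℝ) = r ^ 2 / (r ^ 2) ^ 3 := by
    rw [Real.rpow_neg hr.le, show (4 : ℝ) = (4 : ℕ) by norm_num, Real.rpow_natCast]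
    field_simp
  calc r ^ 2 * bubble ε r ^ 6 = 3 * √3 * ε ^ 3 * (r ^ 2 / (ε ^ 2 + r ^ 2) ^ 3) := by
        rw [bubble_pow_six hε]
        ring
    _ ≤ 3 * √3 * ε ^ 3 * (r ^ 2 / (r ^ 2) ^ 3) := by
        gcongr
        exact le_add_of_nonneg_left (sq_nonneg ε)
    _ = _ := by rw [hrpow]

end Bubble

section Cutoff

variable {ε ρ M : ℝ} {ψ : ℝ → ℝ}

theorem integrableOn_sq_mul_bubble_sq_mul (hε : 0 < ε) {f : ℝ → ℝ} {s : Set ℝ}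
    (hf : IntegrableOn f s) : IntegrableOn (fun r => r ^ 2 * bubble ε r ^ 2 * f r) s := by
  have hcont := (differentiable_bubble hε).continuous
  refine Integrable.bdd_mul hf (c := √3 * ε) (by fun_prop) (.of_forall fun r => ?_)
  rw [Real.norm_of_nonneg (by positivity)]
  exact sq_mul_bubble_sq_le hε r

theorem integrableOn_sq_mul_sq_mul_bubble_pow_six (hε : 0 < ε) (hψ : Measurable ψ) {s : Set ℝ}
    (hs : MeasurableSet s) (hM : ∀ r ∈ s, |ψ r| ≤ M) :
    IntegrableOn (fun r => ψ r ^ 2 * (r ^ 2 * bubble ε r ^ 6)) s := by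
  refine Integrable.bdd_mul (integrable_sq_mul_bubble_pow_six hε).integrableOn (c := M ^ 2)
    (by fun_prop) (ae_restrict_of_forall_mem hs fun r hr => ?_)
  rw [norm_pow]
  exact pow_le_pow_left₀ (norm_nonneg _) (hM r hr) 2

theorem integrableOn_sq_mul_deriv_mul_bubble_sq (hε : 0 < ε) (hψ : Differentiable ℝ ψ)
    (hM : ∀ r, 0 ≤ r → |ψ r| ≤ M) (hψ' : IntegrableOn (fun r => deriv ψ r ^ 2) (Set.Ioi 0)) :
    IntegrableOn (fun r => r ^ 2 * deriv (fun s => ψ s * bubble ε s) r ^ 2) (Set.Ioi 0) := by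
  have hdom : IntegrableOn (fun r => 2 * (√3 * ε) * deriv ψ r ^ 2 +
      2 * (√3 * ε) * M ^ 2 * (ε ^ 2 + r ^ 2)⁻¹) (Set.Ioi 0) :=
    (hψ'.const_mul _).add ((integrable_inv_sq_add_sq hε.ne').const_mul _).integrableOn
  refine hdom.mono' (by fun_prop) (ae_restrict_of_forall_mem measurableSet_Ioi fun r hr => ?_)
  have hψM : ψ r ^ 2 ≤ M ^ 2 := sq_le_sq.2 ((hM r hr.le).trans (le_abs_self M))
  have hslope : (r / (ε ^ 2 + r ^ 2)) ^ 2 ≤ (ε ^ 2 + r ^ 2)⁻¹ := by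
    rw [div_pow, sq (ε ^ 2 + r ^ 2), ← div_div, ← one_div]
    gcongr
    exact div_le_one_of_le₀ (le_add_of_nonneg_left (sq_nonneg ε)) (by positivity)
  rw [Real.norm_of_nonneg (by positivity),
    ((hψ r).hasDerivAt.fun_mul (hasDerivAt_bubble hε r)).deriv]
  calc r ^ 2 * (deriv ψ r * bubble ε r + ψ r * (-(r / (ε ^ 2 + r ^ 2)) * bubble ε r)) ^ 2
      = r ^ 2 * bubble ε r ^ 2 * (deriv ψ r + -(ψ r * (r / (ε ^ 2 + r ^ 2)))) ^ 2 := by ring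
    _ ≤ √3 * ε * (2 * (deriv ψ r ^ 2 + (-(ψ r * (r / (ε ^ 2 + r ^ 2)))) ^ 2)) := by
      gcongr ?_ * ?_
      · exact sq_mul_bubble_sq_le hε r
      · exact add_sq_le
    _ = 2 * (√3 * ε) * deriv ψ r ^ 2 +
        2 * (√3 * ε) * (ψ r ^ 2 * (r / (ε ^ 2 + r ^ 2)) ^ 2) := by ring
    _ ≤ 2 * (√3 * ε) * deriv ψ r ^ 2 + 2 * (√3 * ε) * (M ^ 2 * (ε ^ 2 + r ^ 2)⁻¹) := by gcongr
    _ = _ := by ring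

theorem tendsto_sq_mul_bubble_mul_sq_mul_deriv_bubble (hε : 0 < ε) (hM : ∀ r, 0 ≤ r → |ψ r| ≤ M) :
    Filter.Tendsto (fun r => ψ r ^ 2 * bubble ε r * (r ^ 2 * deriv (bubble ε) r)) Filter.atTop
      (nhds 0) := by
  have hlim : Filter.Tendsto (fun r : ℝ => M ^ 2 * (√3 * ε) * r⁻¹) Filter.atTop (nhds 0) := by
    simpa using tendsto_inv_atTop_zero.const_mul (M ^ 2 * (√3 * ε))
  refine squeeze_zero_norm' ?_ hlim
  filter_upwards [Filter.eventually_gt_atTop 0] with r hr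
  have hslope : r / (ε ^ 2 + r ^ 2) ≤ r⁻¹ := by
    rw [div_le_iff₀ (by positivity), inv_mul_eq_div, le_div_iff₀ hr, ← sq]
    exact le_add_of_nonneg_left (sq_nonneg ε)
  have hψM : ψ r ^ 2 ≤ M ^ 2 := sq_le_sq.2 ((hM r hr.le).trans (le_abs_self M))
  have hfactor : ψ r ^ 2 * bubble ε r * (r ^ 2 * deriv (bubble ε) r) =
      -(ψ r ^ 2 * (r ^ 2 * bubble ε r ^ 2) * (r / (ε ^ 2 + r ^ 2))) := by
    rw [deriv_bubble hε]
    ring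
  rw [hfactor, norm_neg, Real.norm_of_nonneg (by positivity)]
  gcongr ?_ * ?_ * ?_
  exact sq_mul_bubble_sq_le hε r

theorem radialEnergy_mul_bubble (hε : 0 < ε) (hψ : Differentiable ℝ ψ)
    (hM : ∀ r, 0 ≤ r → |ψ r| ≤ M) (hψ' : IntegrableOn (fun r => deriv ψ r ^ 2) (Set.Ioi 0)) :
    radialEnergy (fun r => ψ r * bubble ε r) =
      (∫ r in Set.Ioi 0, r ^ 2 * bubble ε r ^ 2 * deriv ψ r ^ 2) +
        ∫ r in Set.Ioi 0, ψ r ^ 2 * (r ^ 2 * bubble ε r ^ 6) := by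
  have hsource : ∀ r, r ^ 2 * bubble ε r ^ 5 * bubble ε r = r ^ 2 * bubble ε r ^ 6 :=
    fun r => by ring
  have hψψ := integrableOn_sq_mul_sq_mul_bubble_pow_six hε hψ.continuous.measurable
    measurableSet_Ioi fun r (hr : 0 < r) => hM r hr.le
  simp only [← hsource] at hψψ ⊢
  exact integral_Ioi_mul_deriv_mul_sq hψ (differentiable_bubble hε)
    (hasDerivAt_sq_mul_deriv_bubble hε) (integrableOn_sq_mul_deriv_mul_bubble_sq hε hψ hM hψ')
    (integrableOn_sq_mul_bubble_sq_mul hε hψ') hψψ (by simp)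
    (tendsto_sq_mul_bubble_mul_sq_mul_deriv_bubble hε hM)

theorem radialEnergy_bubble (hε : 0 < ε) :
    radialEnergy (bubble ε) = ∫ r in Set.Ioi 0, r ^ 2 * bubble ε r ^ 6 := by
  simpa using radialEnergy_mul_bubble (ψ := fun _ => 1) (M := 1) hε (by fun_prop) (by simp)
    (by simp)

theorem radialEnergy_mul_bubble_sub (hε : 0 < ε) (hρ : 0 < ρ) (hψ : Differentiable ℝ ψ)
    (hψ1 : ∀ r, 0 ≤ r → r ≤ ρ → ψ r = 1) (hM : ∀ r, 0 ≤ r → |ψ r| ≤ M)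
    (hψ' : IntegrableOn (fun r => deriv ψ r ^ 2) (Set.Ioi ρ)) :
    radialEnergy (fun r => ψ r * bubble ε r) - radialEnergy (bubble 1) =
      (∫ r in Set.Ioi ρ, r ^ 2 * bubble ε r ^ 2 * deriv ψ r ^ 2) -
        ∫ r in Set.Ioi ρ, (1 - ψ r ^ 2) * (r ^ 2 * bubble ε r ^ 6) := by
  have hψ'0 : ∀ r ∈ Set.Ioi 0 \ Set.Ioi ρ, deriv ψ r = 0 := fun r hr =>
    deriv_eq_zero_of_forall_mem_eq (uniqueDiffOn_Icc hρ) (fun s hs => hψ1 s hs.1 hs.2)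
      ⟨hr.1.le, not_lt.1 hr.2⟩
  have hψ'Ioi : IntegrableOn (fun r => deriv ψ r ^ 2) (Set.Ioi 0) :=
    hψ'.of_forall_sdiff_eq_zero measurableSet_Ioi fun r hr => by simp [hψ'0 r hr]
  have hψψ := integrableOn_sq_mul_sq_mul_bubble_pow_six hε hψ.continuous.measurable
    measurableSet_Ioi fun r (hr : 0 < r) => hM r hr.le
  have hsource : ∫ r in Set.Ioi 0, (1 - ψ r ^ 2) * (r ^ 2 * bubble ε r ^ 6) =
      (∫ r in Set.Ioi 0, r ^ 2 * bubble ε r ^ 6) -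
        ∫ r in Set.Ioi 0, ψ r ^ 2 * (r ^ 2 * bubble ε r ^ 6) := by
    rw [← integral_sub (integrable_sq_mul_bubble_pow_six hε).integrableOn hψψ]
    simp only [sub_mul, one_mul]
  rw [← setIntegral_eq_of_subset_of_forall_sdiff_eq_zero measurableSet_Ioi
      (Set.Ioi_subset_Ioi hρ.le) fun r hr => by simp [hψ'0 r hr],
    ← setIntegral_eq_of_subset_of_forall_sdiff_eq_zero measurableSet_Ioi
      (Set.Ioi_subset_Ioi hρ.le) fun r hr => by simp [hψ1 r hr.1.le (not_lt.1 hr.2)],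
    hsource, radialEnergy_mul_bubble hε hψ hM hψ'Ioi,
    ← radialEnergy_bubble_eq_radialEnergy_bubble_one hε, radialEnergy_bubble hε]
  ring

theorem abs_integral_sq_mul_bubble_sq_mul_sub_le {f : ℝ → ℝ} (hε : 0 < ε) (hρ : 0 < ρ)
    (hf : IntegrableOn f (Set.Ioi ρ)) :
    |(∫ r in Set.Ioi ρ, r ^ 2 * bubble ε r ^ 2 * f r) - √3 * ε * ∫ r in Set.Ioi ρ, f r| ≤
      √3 / ρ ^ 2 * (∫ r in Set.Ioi ρ, |f r|) * ε ^ 3 := by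
  have hsub : (∫ r in Set.Ioi ρ, r ^ 2 * bubble ε r ^ 2 * f r) - √3 * ε * ∫ r in Set.Ioi ρ, f r =
      ∫ r in Set.Ioi ρ, (r ^ 2 * bubble ε r ^ 2 - √3 * ε) * f r := by
    simp only [sub_mul]
    rw [integral_sub (integrableOn_sq_mul_bubble_sq_mul hε hf) (hf.const_mul _),
      integral_const_mul]
  rw [hsub, mul_right_comm, ← integral_const_mul, ← Real.norm_eq_abs]
  refine norm_integral_le_of_norm_le (hf.abs.const_mul _)
    (ae_restrict_of_forall_mem measurableSet_Ioi fun r hr => ?_)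
  rw [norm_mul]
  exact mul_le_mul_of_nonneg_right (abs_sq_mul_bubble_sq_sub_le hε hρ hr.le) (norm_nonneg _)

theorem abs_integral_mul_sq_mul_bubble_pow_six_le {f : ℝ → ℝ} {K : ℝ} (hε : 0 < ε) (hρ : 0 < ρ)
    (hf : ∀ r ∈ Set.Ioi ρ, |f r| ≤ K) :
    |∫ r in Set.Ioi ρ, f r * (r ^ 2 * bubble ε r ^ 6)| ≤
      3 * √3 * K * (∫ r in Set.Ioi ρ, r ^ (-4 : ℝ)) * ε ^ 3 := by
  rw [mul_right_comm, ← integral_const_mul, ← Real.norm_eq_abs]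
  refine norm_integral_le_of_norm_le
    ((integrableOn_Ioi_rpow_of_lt (by norm_num) hρ).const_mul _)
    (ae_restrict_of_forall_mem measurableSet_Ioi fun r hr => ?_)
  rw [norm_mul, Real.norm_of_nonneg (r := r ^ 2 * _) (by positivity)]
  calc |f r| * (r ^ 2 * bubble ε r ^ 6) ≤ K * (3 * √3 * ε ^ 3 * r ^ (-4 : ℝ)) :=
        mul_le_mul (hf r hr) (sq_mul_bubble_pow_six_le hε (hρ.trans hr)) (by positivity)
          ((abs_nonneg _).trans (hf r hr))
    _ = _ := by ring

theorem exists_abs_radialEnergy_mul_bubble_sub_le (hρ : 0 < ρ) (hψ : Differentiable ℝ ψ)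
    (hψ1 : ∀ r, 0 ≤ r → r ≤ ρ → ψ r = 1) (hM : ∀ r, 0 ≤ r → |ψ r| ≤ M)
    (hψ' : IntegrableOn (fun r => deriv ψ r ^ 2) (Set.Ioi ρ)) :
    ∃ C : ℝ, 0 < C ∧ ∀ ε : ℝ, 0 < ε →
      |radialEnergy (fun r => ψ r * bubble ε r) - radialEnergy (bubble 1) -
        √3 * ε * ∫ r in Set.Ioi ρ, deriv ψ r ^ 2| ≤ C * ε ^ 3 := by
  set A := √3 / ρ ^ 2 * ∫ r in Set.Ioi ρ, |deriv ψ r ^ 2|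
  set B := 3 * √3 * (1 + M ^ 2) * ∫ r in Set.Ioi ρ, r ^ (-4 : ℝ)
  refine ⟨|A + B| + 1, by positivity, fun ε hε => ?_⟩
  have hψM : ∀ r ∈ Set.Ioi ρ, |1 - ψ r ^ 2| ≤ 1 + M ^ 2 := fun r hr => by
    have := sq_le_sq.2 ((hM r (hρ.trans hr).le).trans (le_abs_self M))
    exact abs_le.2 ⟨by linarith, by nlinarith⟩
  have hA := abs_integral_sq_mul_bubble_sq_mul_sub_le hε hρ hψ'
  have hB := abs_integral_mul_sq_mul_bubble_pow_six_le hε hρ hψM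
  rw [radialEnergy_mul_bubble_sub hε hρ hψ hψ1 hM hψ', sub_right_comm]
  calc _ ≤ A * ε ^ 3 + B * ε ^ 3 := (abs_sub _ _).trans (add_le_add hA hB)
    _ = (A + B) * ε ^ 3 := by ring
    _ ≤ (|A + B| + 1) * ε ^ 3 := by
      gcongr ?_ * _
      exact (le_abs_self _).trans (le_add_of_nonneg_right zero_le_one)

end Cutoff

theorem stmt_13_general {ρ M : ℝ} (hρ : 0 < ρ) {ψ : ℝ → ℝ} (hψ : Differentiable ℝ ψ)
    (hψ1 : ∀ r, 0 ≤ r → r ≤ ρ → ψ r = 1) (hM : ∀ r, 0 ≤ r → |ψ r| ≤ M)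
    (hψ' : IntegrableOn (fun r => deriv ψ r ^ 2) (Set.Ioi ρ))
    (u : ℝ → EuclideanSpace ℝ (Fin 3) → ℝ)
    (hu : ∀ ε : ℝ, 0 < ε → ∀ x : EuclideanSpace ℝ (Fin 3),
      u ε x = (3 : ℝ) ^ ((1 : ℝ) / 4) * (ε / (ε ^ 2 + ‖x‖ ^ 2)) ^ ((1 : ℝ) / 2)) :
    ∃ C : ℝ, 0 < C ∧ ∀ ε : ℝ, 0 < ε →
      |(∫ x : EuclideanSpace ℝ (Fin 3), ‖fderiv ℝ (fun y => ψ ‖y‖ * u ε y) x‖ ^ 2) -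
        (∫ x : EuclideanSpace ℝ (Fin 3), ‖fderiv ℝ (u 1) x‖ ^ 2) -
        √3 * (4 * Real.pi) * (∫ r in Set.Ioi ρ, deriv ψ r ^ 2) * ε| ≤ C * ε ^ 3 := by
  have hbubble : ∀ ε : ℝ, 0 < ε → u ε = fun x => bubble ε ‖x‖ := fun ε hε => funext (hu ε hε)
  obtain ⟨C, hC, hradial⟩ := exists_abs_radialEnergy_mul_bubble_sub_le hρ hψ hψ1 hM hψ'
  refine ⟨4 * Real.pi * C, by positivity, fun ε hε => ?_⟩
  rw [hbubble ε hε, hbubble 1 one_pos,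
    integral_sq_norm_fderiv_comp_norm_fin_three (hψ.fun_mul (differentiable_bubble hε)),
    integral_sq_norm_fderiv_comp_norm_fin_three (differentiable_bubble one_pos)]
  calc _ = |4 * Real.pi * (radialEnergy (fun r => ψ r * bubble ε r) - radialEnergy (bubble 1) -
        √3 * ε * ∫ r in Set.Ioi ρ, deriv ψ r ^ 2)| := by ring_nf
    _ = 4 * Real.pi * |radialEnergy (fun r => ψ r * bubble ε r) - radialEnergy (bubble 1) -
        √3 * ε * ∫ r in Set.Ioi ρ, deriv ψ r ^ 2| := by rw [abs_mul, abs_of_pos (by positivity)]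
    _ ≤ 4 * Real.pi * (C * ε ^ 3) := by gcongr; exact hradial ε hε
    _ = _ := by ring

/-- Gradient estimate for `N = 3` (Lemma 3.6, (3.12)): with `U_ε(x) = ψ(|x|) u_ε(x)`,
`∫ |∇U_ε|² = S^{3/2} + √3 ω₃ (∫_ρ^{2ρ} ψ'(r)² dr) ε + O(ε³)`, where `ω₃ = 4π` and
`K₃ = ∫_{ℝ³} |∇u_1|² = S^{3/2}`. -/
theorem stmt_13 (ρ : ℝ) (hρ : 0 < ρ) (hρ1 : 4 * ρ ^ 2 < 1)
    (ψ : ℝ → ℝ) (hψs : ContDiff ℝ 1 ψ)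
    (hψ1 : ∀ r : ℝ, 0 ≤ r → r ≤ ρ → ψ r = 1)
    (hψ01 : ∀ r : ℝ, ρ ≤ r → r ≤ 2 * ρ → ψ r ∈ Set.Icc (0 : ℝ) 1)
    (hψ0 : ∀ r : ℝ, 2 * ρ ≤ r → ψ r = 0)
    (u : ℝ → EuclideanSpace ℝ (Fin 3) → ℝ)
    (hu : ∀ ε : ℝ, 0 < ε → ∀ x : EuclideanSpace ℝ (Fin 3),
      u ε x = (3 : ℝ) ^ ((1 : ℝ) / 4) * (ε / (ε ^ 2 + ‖x‖ ^ 2)) ^ ((1 : ℝ) / 2)) :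
    ∃ C : ℝ, 0 < C ∧ ∃ ε₀ : ℝ, 0 < ε₀ ∧ ∀ ε ∈ Set.Ioo (0 : ℝ) ε₀,
      |(∫ x : EuclideanSpace ℝ (Fin 3), ‖fderiv ℝ (fun y => ψ ‖y‖ * u ε y) x‖ ^ 2) -
        (∫ x : EuclideanSpace ℝ (Fin 3), ‖fderiv ℝ (u 1) x‖ ^ 2) -
        Real.sqrt 3 * (4 * Real.pi) * (∫ r in ρ..(2 * ρ), (deriv ψ r) ^ 2) * ε| ≤
          C * ε ^ 3 := by
  have hψ'0 : ∀ r ∈ Set.Ioi ρ \ Set.Ioc ρ (2 * ρ), deriv ψ r ^ 2 = 0 := fun r hr => by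
    have hr2 : 2 * ρ ≤ r := le_of_not_ge fun h => hr.2 ⟨hr.1, h⟩
    simp [deriv_eq_zero_of_forall_mem_eq (uniqueDiffOn_Ici _) hψ0 hr2]
  have hψ' : IntegrableOn (fun r => deriv ψ r ^ 2) (Set.Ioi ρ) :=
    (((hψs.continuous_deriv le_rfl).pow 2).integrableOn_Ioc).of_forall_sdiff_eq_zero
      measurableSet_Ioi hψ'0
  have hM : ∀ r, 0 ≤ r → |ψ r| ≤ 1 := fun r hr => by
    rcases le_total r ρ with h | h
    · simp [hψ1 r hr h]
    rcases le_total r (2 * ρ) with h' | h'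
    · exact (abs_of_nonneg (hψ01 r h h').1).trans_le (hψ01 r h h').2
    · simp [hψ0 r h']
  obtain ⟨C, hC, hbound⟩ :=
    stmt_13_general hρ (hψs.differentiable one_ne_zero) hψ1 hM hψ' u hu
  rw [setIntegral_eq_of_subset_of_forall_sdiff_eq_zero measurableSet_Ioi Set.Ioc_subset_Ioi_self
    hψ'0, ← intervalIntegral.integral_of_le (by linarith)] at hbound
  exact ⟨C, hC, 1, one_pos, fun ε hε => hbound ε hε.1⟩
end
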